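/- arXiv:2212.00376 — 3 statements merged into one kernel-verified Lean document; each statement's English description precedes it below -/
import Mathlib

section
/- Let q₁, ..., q_ℓ > 2 be pairwise coprime natural numbers. Then the set of real numbers ⋃_{j=1}^ℓ { cot(π a/q_j) : 1 ≤ a < q_j/2, gcd(a, q_j) = 1 } is linearly independent over ℚ. -/
/-
The numbers `i cot (π x)` with `x` a rational number of denominator dividing `N` are rational
functions of `exp (2 π i x)`, so for every `k` prime to `N` the Galois automorphism `ζ ↦ ζ ^ k` of
the `N`-th cyclotomic field provides a `ℚ`-linear map sending `cot (π x)` to `cot (π k x)`.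

Coprime moduli `m` and `n` are independent of each other because some `k` is congruent to `1` mod
`m` and to `-1` mod `n`: the corresponding linear map is the identity on the span of the cotangents
modulo `m` and, `cot` being odd, minus the identity on the span modulo `n`.

For a single modulus `N`, a relation `∑ c_a cot (π a / N) = 0` yields `∑ c_a cot (π k a / N) = 0`
for all `k` prime to `N`. Summing against an odd Dirichlet character `χ` gives
`(∑ c_a χ(a)⁻¹) (∑ χ(k) cot (π k / N)) = 0`, where the second factor is a nonzero multiple of
`L(1, χ)`. Hence `∑ c_a χ(a)⁻¹ = 0` for every odd `χ`, and all `c_a` vanish by orthogonality.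
-/

section

open Complex Filter HurwitzZeta Set Topology
open scoped Real

/-- The function `t ↦ cot (π t)` as a function on `ℝ ⧸ ℤ`. The values of interest are those at
torsion points; the value at `0` is the junk value `cot 0 = 0`. -/
noncomputable def circleCot : UnitAddCircle → ℝ :=
  Function.Periodic.lift (f := fun t : ℝ ↦ Real.cot (π * t)) (c := 1) fun t ↦ by
    simp only [Real.cot_eq_cos_div_sin, mul_add, mul_one, Real.cos_add_pi, Real.sin_add_pi,
      neg_div_neg_eq]

@[simp]
lemma circleCot_coe (t : ℝ) : circleCot t = Real.cot (π * t) := rfl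

@[simp]
lemma circleCot_neg (x : UnitAddCircle) : circleCot (-x) = -circleCot x := by
  induction x using QuotientAddGroup.induction_on with
  | H t =>
    rw [← AddCircle.coe_neg, circleCot_coe, circleCot_coe, mul_neg, Real.cot_eq_cos_div_sin,
      Real.cot_eq_cos_div_sin, Real.cos_neg, Real.sin_neg, div_neg]

lemma circleCot_zero : circleCot 0 = 0 :=
  self_eq_neg.mp (by simpa using circleCot_neg 0)

lemma abs_rpow_neg_sub_rpow_neg_le {c u v s : ℝ} (hc : 0 < c) (hu : c ≤ u) (hv : c ≤ v)
    (hs : 0 ≤ s) : |u ^ (-s) - v ^ (-s)| ≤ s * c ^ (-s - 1) * |u - v| := by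
  have hderiv (x : ℝ) (hx : x ∈ Ici c) :
      HasDerivWithinAt (fun y ↦ y ^ (-s)) (-s * x ^ (-s - 1)) (Ici c) x :=
    (Real.hasDerivAt_rpow_const (.inl (hc.trans_le hx).ne')).hasDerivWithinAt
  refine (convex_Ici c).norm_image_sub_le_of_norm_hasDerivWithin_le hderiv (fun x hx ↦ ?_) hv hu
  rw [norm_mul, norm_neg, Real.norm_of_nonneg hs,
    Real.norm_of_nonneg (Real.rpow_nonneg (hc.le.trans hx) _)]
  exact mul_le_mul_of_nonneg_left (Real.rpow_le_rpow_of_nonpos hc hx (by linarith)) hs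

lemma ofReal_mem_integerComplement_of_mem_Ioo {a : ℝ} (ha : a ∈ Ioo 0 1) :
    (a : ℂ) ∈ integerComplement := by
  rintro ⟨n, hn⟩
  have hna : (n : ℝ) = a := mod_cast hn
  rw [← hna] at ha
  have h0 : 0 < n := mod_cast ha.1
  have h1 : n < 1 := mod_cast ha.2
  omega

/-- The `n`-th term of the Dirichlet series of the odd Hurwitz zeta function `hurwitzZetaOdd a s` at
real `s`, multiplied by `2` to clear the denominator. -/
noncomputable def hurwitzOddTerm (a s : ℝ) (n : ℕ) : ℝ :=
  (n + a) ^ (-s) - (n + 1 - a) ^ (-s)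

lemma summable_const_mul_nat_succ_rpow_neg_two (C : ℝ) :
    Summable fun n : ℕ ↦ C * ((n + 1 : ℕ) : ℝ) ^ (-2 : ℝ) :=
  ((summable_nat_add_iff 1).mpr (Real.summable_nat_rpow.mpr (by norm_num))).mul_left C

section hurwitzOddTerm

variable {a : ℝ} (ha : a ∈ Ioo 0 1)
include ha

-- Both bases are at least `min a (1 - a) * (n + 1)` and they differ by less than `1`.
lemma abs_hurwitzOddTerm_le {s : ℝ} (hs : s ∈ Icc 1 2) (n : ℕ) :
    |hurwitzOddTerm a s n| ≤ 2 * min a (1 - a) ^ (-3 : ℝ) * ((n + 1 : ℕ) : ℝ) ^ (-2 : ℝ) := by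
  obtain ⟨ha0, ha1⟩ := ha
  obtain ⟨hs1, hs2⟩ := hs
  set m := min a (1 - a)
  have hm0 : 0 < m := lt_min ha0 (by linarith)
  have hma : m ≤ a := min_le_left _ _
  have hma' : m ≤ 1 - a := min_le_right _ _
  have : (0 : ℝ) ≤ n := n.cast_nonneg
  have hdist : |(n + a) - (n + 1 - a)| ≤ 1 :=
    abs_le.mpr ⟨by linarith, by linarith⟩
  have hpow : (m * (n + 1)) ^ (-s - 1) ≤ m ^ (-3 : ℝ) * ((n + 1 : ℕ) : ℝ) ^ (-2 : ℝ) := by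
    rw [Real.mul_rpow hm0.le (by linarith), Nat.cast_add_one]
    gcongr ?_ * ?_
    · exact Real.rpow_le_rpow_of_exponent_ge hm0 (by linarith) (by linarith)
    · exact Real.rpow_le_rpow_of_exponent_le (by linarith) (by linarith)
  calc |hurwitzOddTerm a s n|
      ≤ s * (m * (n + 1)) ^ (-s - 1) * |(n + a) - (n + 1 - a)| :=
        abs_rpow_neg_sub_rpow_neg_le (by positivity) (by nlinarith) (by nlinarith) (by linarith)
    _ ≤ 2 * (m ^ (-3 : ℝ) * ((n + 1 : ℕ) : ℝ) ^ (-2 : ℝ)) * 1 := by gcongr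
    _ = _ := by ring

lemma hasSum_hurwitzOddTerm {s : ℝ} (hs : 1 < s) :
    HasSum (fun n ↦ (hurwitzOddTerm a s n : ℂ)) (2 * hurwitzZetaOdd a s) := by
  have hseries := (hasSum_nat_hurwitzZetaOdd_of_mem_Icc (Ioo_subset_Icc_self ha)
    (s := s) (by simpa using hs)).mul_left 2
  refine hseries.congr_fun fun n ↦ ?_
  have : (0 : ℝ) ≤ n := n.cast_nonneg
  rw [hurwitzOddTerm, ofReal_sub, ofReal_cpow (by linarith [ha.1]),
    ofReal_cpow (by linarith [ha.2])]
  push_cast [cpow_neg]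
  ring

-- The term differs from that of the Mittag-Leffler expansion by `(n + a)⁻¹ - (n + 1 + a)⁻¹`, which
-- telescopes.
lemma tendsto_sum_hurwitzOddTerm_one :
    Tendsto (fun M : ℕ ↦ ∑ n ∈ Finset.range M, (hurwitzOddTerm a 1 n : ℂ)) atTop
      (𝓝 (π * Complex.cot (π * a))) := by
  have hterm (n : ℕ) : (hurwitzOddTerm a 1 n : ℂ) =
      cotTerm a n + (1 / ((n : ℂ) + a) - 1 / (((n + 1 : ℕ) : ℂ) + a)) := by
    simp only [hurwitzOddTerm, cotTerm, Real.rpow_neg_one, one_div]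
    rw [← neg_sub ((n : ℂ) + 1), inv_neg]
    push_cast
    ring
  have htail : Tendsto (fun M : ℕ ↦ 1 / ((M : ℂ) + a)) atTop (𝓝 0) := by
    simp only [one_div]
    exact tendsto_inv₀_cobounded.comp <|
      (tendsto_add_const_cobounded _).comp tendsto_natCast_atTop_cobounded
  have htele := (tendsto_logDeriv_euler_cot_sub (ofReal_mem_integerComplement_of_mem_Ioo ha)).add
    (htail.const_sub (1 / ((0 : ℕ) + (a : ℂ))))
  simpa only [hterm, Finset.sum_add_distrib, Finset.sum_range_sub' (fun n : ℕ ↦ 1 / ((n : ℂ) + a)),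
    Nat.cast_zero, zero_add, sub_zero, sub_add_cancel] using htele

lemma tsum_hurwitzOddTerm_one :
    ∑' n, (hurwitzOddTerm a 1 n : ℂ) = π * Complex.cot (π * a) := by
  refine HasSum.tsum_eq ((Summable.hasSum_iff_tendsto_nat ?_).mpr
    (tendsto_sum_hurwitzOddTerm_one ha))
  refine .of_norm_bounded
    (summable_const_mul_nat_succ_rpow_neg_two (2 * min a (1 - a) ^ (-3 : ℝ))) fun n ↦ ?_
  rw [norm_real]
  exact abs_hurwitzOddTerm_le ha (by simp) n

lemma tendsto_tsum_hurwitzOddTerm :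
    Tendsto (fun s : ℝ ↦ ∑' n, (hurwitzOddTerm a s n : ℂ)) (𝓝[>] 1)
      (𝓝 (∑' n, (hurwitzOddTerm a 1 n : ℂ))) := by
  refine tendsto_tsum_of_dominated_convergence
    (summable_const_mul_nat_succ_rpow_neg_two (2 * min a (1 - a) ^ (-3 : ℝ))) (fun n ↦ ?_) ?_
  · have : (0 : ℝ) ≤ n := n.cast_nonneg
    have hcont : Continuous fun s ↦ (hurwitzOddTerm a s n : ℂ) :=
      continuous_ofReal.comp <|
        ((Real.continuous_const_rpow (by linarith [ha.1])).comp continuous_neg).sub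
          ((Real.continuous_const_rpow (by linarith [ha.2])).comp continuous_neg)
    exact (hcont.tendsto 1).mono_left nhdsWithin_le_nhds
  · filter_upwards [Ioo_mem_nhdsGT (one_lt_two (α := ℝ))] with s hs n
    rw [norm_real]
    exact abs_hurwitzOddTerm_le ha (Ioo_subset_Icc_self hs) n

lemma two_mul_hurwitzZetaOdd_one : 2 * hurwitzZetaOdd a 1 = π * Complex.cot (π * a) := by
  have hcont : Continuous fun s : ℝ ↦ 2 * hurwitzZetaOdd a s :=
    ((differentiable_hurwitzZetaOdd _).continuous.comp continuous_ofReal).const_mul 2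
  have hleft := (hcont.tendsto 1).mono_left (nhdsWithin_le_nhds (s := Ioi 1))
  have hright := (tendsto_tsum_hurwitzOddTerm ha).congr' <|
    eventually_nhdsWithin_of_forall fun s hs ↦ (hasSum_hurwitzOddTerm ha hs).tsum_eq
  simpa [tsum_hurwitzOddTerm_one ha] using tendsto_nhds_unique hleft hright

end hurwitzOddTerm

theorem hurwitzZetaOdd_one (x : UnitAddCircle) :
    hurwitzZetaOdd x 1 = π / 2 * circleCot x := by
  obtain ⟨a, ⟨ha0, ha1⟩, rfl⟩ := AddCircle.eq_coe_Ico x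
  rcases ha0.eq_or_lt with rfl | ha0
  · have hodd := hurwitzZetaOdd_neg 0 1
    rw [neg_zero, self_eq_neg] at hodd
    rw [AddCircle.coe_zero, hodd, circleCot_zero, ofReal_zero, mul_zero]
  · rw [circleCot_coe]
    push_cast
    linear_combination two_mul_hurwitzZetaOdd_one ⟨ha0, ha1⟩ / 2

lemma sum_mul_circleCot_ne_zero_of_odd {N : ℕ} [NeZero N] {χ : DirichletCharacter ℂ N}
    (hχ : χ.Odd) : ∑ j, χ j * circleCot (ZMod.toAddCircle j) ≠ 0 := by
  have hχ1 : χ ≠ 1 := by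
    rintro rfl
    have hval : (1 : DirichletCharacter ℂ N) (-1) = -1 := hχ
    rw [MulChar.one_apply isUnit_one.neg] at hval
    norm_num at hval
  intro hsum
  apply DirichletCharacter.LFunction_apply_one_ne_zero hχ1
  rw [DirichletCharacter.LFunction, ZMod.LFunction_def_odd hχ.to_fun]
  simp only [hurwitzZetaOdd_one, mul_left_comm _ (π / 2 : ℂ), ← Finset.mul_sum, hsum, mul_zero]

lemma I_mul_circleCot (x : UnitAddCircle) :
    I * circleCot x = (AddCircle.toCircle x + 1) / (1 - AddCircle.toCircle x) := by
  induction x using QuotientAddGroup.induction_on with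
  | H t =>
    rw [circleCot_coe, ofReal_cot, ofReal_mul, cot_pi_eq_exp_ratio, AddCircle.toCircle_apply_mk,
      Circle.coe_exp]
    push_cast
    rw [div_one, mul_right_comm, ← mul_div_assoc, mul_div_mul_left _ _ I_ne_zero]

section IntermediateField

open IntermediateField

lemma exists_algHom_adjoin_gen_eq_zpow {N : ℕ} [NeZero N] {ζ : ℂ} (hζ : IsPrimitiveRoot ζ N)
    {k : ℤ} (hk : IsCoprime k N) :
    ∃ σ : ℚ⟮ζ⟯ →ₐ[ℚ] ℂ, σ (AdjoinSimple.gen ℚ ζ) = ζ ^ k := by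
  have hint : IsIntegral ℚ ζ := (hζ.isIntegral (NeZero.pos N)).tower_top
  have hconj : ζ ^ k ∈ (minpoly ℚ ζ).aroots ℂ := by
    rw [← Polynomial.cyclotomic_eq_minpoly_rat hζ (NeZero.pos N), Polynomial.aroots,
      Polynomial.map_cyclotomic, Polynomial.mem_roots (Polynomial.cyclotomic_ne_zero N ℂ),
      Polynomial.isRoot_cyclotomic_iff]
    exact hζ.zpow_of_gcd_eq_one k (Int.isCoprime_iff_gcd_eq_one.mp hk)
  exact ⟨(algHomAdjoinIntegralEquiv ℚ hint).symm ⟨ζ ^ k, hconj⟩,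
    algHomAdjoinIntegralEquiv_symm_apply_gen ℚ hint _⟩

lemma exists_linearMap_circleCot_zsmul {N : ℕ} [NeZero N] {k : ℤ} (hk : IsCoprime k N) :
    ∃ T : ℝ →ₗ[ℚ] ℝ, ∀ x : UnitAddCircle, N • x = 0 → T (circleCot x) = circleCot (k • x) := by
  obtain ⟨ζ, hζ⟩ : ∃ ζ : ℂ, IsPrimitiveRoot ζ N := ⟨_, isPrimitiveRoot_exp N (NeZero.ne N)⟩
  obtain ⟨σ, hσ⟩ := exists_algHom_adjoin_gen_eq_zpow hζ hk
  obtain ⟨S, hS⟩ := LinearMap.exists_extend (p := Subalgebra.toSubmodule ℚ⟮ζ⟯.toSubalgebra)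
    σ.toLinearMap
  have hSσ (y : ℚ⟮ζ⟯) : S y = σ y := LinearMap.congr_fun hS y
  have hSI (x : UnitAddCircle) (hx : N • x = 0) : S (I * circleCot x) = I * circleCot (k • x) := by
    have hroot : (AddCircle.toCircle x : ℂ) ^ N = 1 := by
      rw [← Circle.coe_pow, ← AddCircle.toCircle_nsmul, hx, AddCircle.toCircle_zero, Circle.coe_one]
    obtain ⟨m, -, hm⟩ := hζ.eq_pow_of_pow_eq_one hroot
    have hconj : (AddCircle.toCircle (k • x) : ℂ) = (ζ ^ k) ^ m := by
      rw [AddCircle.toCircle_zsmul, Circle.coe_zpow, ← hm, ← zpow_natCast, ← zpow_natCast,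
        zpow_comm]
    have := hSσ ((AdjoinSimple.gen ℚ ζ ^ m + 1) / (1 - AdjoinSimple.gen ℚ ζ ^ m))
    rw [I_mul_circleCot, I_mul_circleCot, hconj, ← hm, ← hσ]
    simpa using this
  refine ⟨imLm ∘ₗ S ∘ₗ (LinearMap.toSpanSingleton ℝ ℂ I).restrictScalars ℚ, fun x hx ↦ ?_⟩
  have := congrArg im (hSI x hx)
  simpa [mul_comm] using this

end IntermediateField

/-- The rational span of the cotangents of the `n`-torsion points of `ℝ ⧸ ℤ`, that is, of the
numbers `cot (π a / n)`. -/
noncomputable def cotSpan (n : ℕ) : Submodule ℚ ℝ :=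
  Submodule.span ℚ (circleCot '' {x | n • x = 0})

lemma circleCot_mem_cotSpan {n : ℕ} {x : UnitAddCircle} (hx : n • x = 0) :
    circleCot x ∈ cotSpan n :=
  Submodule.subset_span (mem_image_of_mem circleCot hx)

lemma cotSpan_mono {m n : ℕ} (h : m ∣ n) : cotSpan m ≤ cotSpan n := by
  obtain ⟨d, rfl⟩ := h
  exact Submodule.span_mono <| image_mono fun x (hx : m • x = 0) ↦
    (mul_nsmul x m d).trans (by rw [hx, nsmul_zero])

lemma disjoint_cotSpan {m n : ℕ} [NeZero m] [NeZero n] (h : m.Coprime n) :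
    Disjoint (cotSpan m) (cotSpan n) := by
  obtain ⟨u, v, huv⟩ := Nat.isCoprime_iff_coprime.mpr h
  have hkm : v * n - u * m = 1 - 2 * u * m := by linear_combination huv
  have hkn : v * n - u * m = -1 + 2 * v * n := by linear_combination -huv
  have hk : IsCoprime (v * n - u * m) ((m * n : ℕ) : ℤ) := by
    rw [Nat.cast_mul]
    refine .mul_right ⟨1, 2 * u, ?_⟩ ⟨-1, 2 * v, ?_⟩
    · linear_combination hkm
    · linear_combination -hkn
  obtain ⟨T, hT⟩ := exists_linearMap_circleCot_zsmul hk
  have hTm : EqOn T (LinearMap.id (R := ℚ)) (cotSpan m) := by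
    refine LinearMap.eqOn_span ?_
    rintro _ ⟨x, hx : m • x = 0, rfl⟩
    rw [hT x (by rw [mul_comm, mul_nsmul', hx, nsmul_zero]), hkm, sub_zsmul, mul_zsmul,
      natCast_zsmul, hx, zsmul_zero, one_zsmul, neg_zero, add_zero, LinearMap.id_apply]
  have hTn : EqOn T (-LinearMap.id (R := ℚ)) (cotSpan n) := by
    refine LinearMap.eqOn_span ?_
    rintro _ ⟨x, hx : n • x = 0, rfl⟩
    rw [hT x (by rw [mul_nsmul', hx, nsmul_zero]), hkn, add_zsmul, mul_zsmul, natCast_zsmul, hx,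
      zsmul_zero, neg_one_zsmul, add_zero, circleCot_neg, LinearMap.neg_apply, LinearMap.id_apply]
  rw [Submodule.disjoint_def]
  intro y hym hyn
  exact self_eq_neg.mp ((hTm hym).symm.trans (hTn hyn))

section units

variable {N : ℕ} [NeZero N]

lemma exists_linearMap_circleCot_unit_mul (u : (ZMod N)ˣ) :
    ∃ T : ℝ →ₗ[ℚ] ℝ, ∀ j : ZMod N,
      T (circleCot (ZMod.toAddCircle j)) = circleCot (ZMod.toAddCircle (u * j : ZMod N)) := by
  obtain ⟨T, hT⟩ := exists_linearMap_circleCot_zsmul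
    (Nat.isCoprime_iff_coprime.mpr (ZMod.val_coe_unit_coprime u))
  refine ⟨T, fun j ↦ ?_⟩
  rw [hT _ (by simp [← map_nsmul]), ← map_zsmul, zsmul_eq_mul, Int.cast_natCast, ZMod.natCast_val,
    ZMod.cast_id]

lemma sum_char_mul_apply_mul_unit {R : Type*} [CommRing R] (χ : DirichletCharacter R N)
    (f : ZMod N → R) (u : (ZMod N)ˣ) :
    ∑ j, χ j * f (j * u) = χ (u : ZMod N)⁻¹ * ∑ j, χ j * f j := by
  rw [Finset.mul_sum, ← Equiv.sum_comp u.mulRight (fun j ↦ χ _ * (χ j * f j))]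
  refine Finset.sum_congr rfl fun j _ ↦ ?_
  simp only [Units.mulRight_apply]
  rw [← mul_assoc, ← map_mul, ZMod.inv_coe_unit, mul_left_comm, Units.inv_mul, mul_one]

-- The factor `1 - χ (-1)` is `2` for odd `χ` and `0` for even `χ`.
lemma sum_odd_char_inv_mul_char (u : (ZMod N)ˣ) (b : ZMod N) :
    ∑ χ : DirichletCharacter ℂ N, (1 - χ (-1)) * (χ (u : ZMod N)⁻¹ * χ b) =
      N.totient * ((if (u : ZMod N) = b then 1 else 0) - if (u : ZMod N) = -b then 1 else 0) := by
  have hneg (χ : DirichletCharacter ℂ N) : (1 - χ (-1)) * (χ (u : ZMod N)⁻¹ * χ b) =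
      χ (u : ZMod N)⁻¹ * χ b - χ (u : ZMod N)⁻¹ * χ (-b) := by
    rw [← neg_one_mul b, map_mul]
    ring
  simp only [hneg, Finset.sum_sub_distrib,
    DirichletCharacter.sum_char_inv_mul_char_eq ℂ u.isUnit, mul_sub, mul_ite, mul_one, mul_zero]

lemma eq_zero_of_sum_mul_odd_char_inv_eq_zero {ι : Type*} {a : ι → (ZMod N)ˣ}
    (ha : Function.Injective a) (hneg : ∀ i k, a i ≠ -a k) {s : Finset ι} {c : ι → ℂ}
    (hc : ∀ χ : DirichletCharacter ℂ N, χ.Odd → ∑ i ∈ s, c i * χ (a i : ZMod N)⁻¹ = 0)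
    {k : ι} (hk : k ∈ s) : c k = 0 := by
  classical
  have hc_all (χ : DirichletCharacter ℂ N) :
      (1 - χ (-1)) * ∑ i ∈ s, c i * χ (a i : ZMod N)⁻¹ = 0 := by
    rcases χ.even_or_odd with hχ | hχ
    · rw [DirichletCharacter.Even] at hχ
      rw [hχ, sub_self, zero_mul]
    · rw [hc χ hχ, mul_zero]
  have hdiag (i : ι) : c i * ∑ χ : DirichletCharacter ℂ N,
      (1 - χ (-1)) * (χ (a i : ZMod N)⁻¹ * χ (a k)) = if i = k then N.totient * c i else 0 := by
    have hne : (a i : ZMod N) ≠ -a k := by exact_mod_cast hneg i k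
    rw [sum_odd_char_inv_mul_char, if_neg hne]
    simp [Units.val_inj, ha.eq_iff, mul_comm]
  have hsum : N.totient * c k = 0 := by
    calc N.totient * c k
        = ∑ i ∈ s, c i * ∑ χ : DirichletCharacter ℂ N,
            (1 - χ (-1)) * (χ (a i : ZMod N)⁻¹ * χ (a k)) := by
          simp only [hdiag, Finset.sum_ite_eq', if_pos hk]
      _ = ∑ χ : DirichletCharacter ℂ N,
            (1 - χ (-1)) * (∑ i ∈ s, c i * χ (a i : ZMod N)⁻¹) * χ (a k) := by
          simp only [Finset.mul_sum, Finset.sum_mul]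
          rw [Finset.sum_comm]
          refine Finset.sum_congr rfl fun χ _ ↦ Finset.sum_congr rfl fun i _ ↦ by ring
      _ = 0 := by simp only [hc_all, zero_mul, Finset.sum_const_zero]
  have htot : (N.totient : ℂ) ≠ 0 := mod_cast (Nat.totient_pos.mpr (NeZero.pos N)).ne'
  exact (mul_eq_zero.mp hsum).resolve_left htot

theorem linearIndependent_circleCot_units {ι : Type*} {a : ι → (ZMod N)ˣ}
    (ha : Function.Injective a) (hneg : ∀ i k, a i ≠ -a k) :
    LinearIndependent ℚ fun i ↦ circleCot (ZMod.toAddCircle (a i : ZMod N)) := by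
  rw [linearIndependent_iff']
  intro s g hg k hk
  have hrel (u : (ZMod N)ˣ) :
      ∑ i ∈ s, (g i : ℂ) * circleCot (ZMod.toAddCircle (u * a i : ZMod N)) = 0 := by
    obtain ⟨T, hT⟩ := exists_linearMap_circleCot_unit_mul u
    have hTg := congrArg T hg
    simp only [map_sum, map_smul, hT, map_zero] at hTg
    simp only [Rat.smul_def] at hTg
    exact_mod_cast hTg
  have hodd (χ : DirichletCharacter ℂ N) (hχ : χ.Odd) :
      ∑ i ∈ s, (g i : ℂ) * χ (a i : ZMod N)⁻¹ = 0 := by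
    refine (mul_eq_zero.mp ?_).resolve_right (sum_mul_circleCot_ne_zero_of_odd hχ)
    simp only [Finset.sum_mul, mul_assoc, ← sum_char_mul_apply_mul_unit χ
      fun j ↦ (circleCot (ZMod.toAddCircle j) : ℂ)]
    simp only [Finset.mul_sum, mul_left_comm _ (χ _)]
    rw [Finset.sum_comm]
    refine Finset.sum_eq_zero fun j _ ↦ ?_
    rw [← Finset.mul_sum]
    by_cases hj : IsUnit j
    · rw [← hj.unit_spec, hrel, mul_zero]
    · rw [χ.map_nonunit hj, zero_mul]
  exact_mod_cast eq_zero_of_sum_mul_odd_char_inv_eq_zero ha hneg hodd hk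

end units

lemma circleCot_toAddCircle_natCast (n a : ℕ) [NeZero n] :
    circleCot (ZMod.toAddCircle (a : ZMod n)) = Real.cot (π * a / n) := by
  rw [ZMod.toAddCircle_natCast, circleCot_coe, mul_div_assoc]

lemma cot_pi_mul_div_mem_cotSpan (n a : ℕ) [NeZero n] : Real.cot (π * a / n) ∈ cotSpan n := by
  rw [← circleCot_toAddCircle_natCast]
  exact circleCot_mem_cotSpan (by simp [← map_nsmul])

lemma linearIndependent_cot_pi_mul_div (q : ℕ) [NeZero q] :
    LinearIndependent ℚ fun a : {a : ℕ // 1 ≤ a ∧ 2 * a < q ∧ Nat.Coprime a q} ↦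
      Real.cot (π * a / q) := by
  have hinj : Function.Injective
      fun a : {a : ℕ // 1 ≤ a ∧ 2 * a < q ∧ Nat.Coprime a q} ↦ ZMod.unitOfCoprime a a.2.2.2 := by
    rintro ⟨a, ha⟩ ⟨b, hb⟩ hab
    have hval := congrArg Units.val hab
    simp only [ZMod.coe_unitOfCoprime, ZMod.natCast_eq_natCast_iff] at hval
    exact Subtype.ext (hval.eq_of_lt_of_lt (by omega) (by omega))
  have hneg (a b : {a : ℕ // 1 ≤ a ∧ 2 * a < q ∧ Nat.Coprime a q}) :
      ZMod.unitOfCoprime a a.2.2.2 ≠ -ZMod.unitOfCoprime b b.2.2.2 := by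
    obtain ⟨a, ha⟩ := a
    obtain ⟨b, hb⟩ := b
    intro hab
    have hval := congrArg Units.val hab
    simp only [ZMod.coe_unitOfCoprime, Units.val_neg, eq_neg_iff_add_eq_zero] at hval
    have hdvd : q ∣ a + b := (ZMod.natCast_eq_zero_iff _ _).mp (mod_cast hval)
    have := Nat.le_of_dvd (by omega) hdvd
    omega
  simpa only [ZMod.coe_unitOfCoprime, circleCot_toAddCircle_natCast] using
    linearIndependent_circleCot_units hinj hneg

theorem cot_values_linearIndependent_general {ι : Type*} (q : ι → ℕ) [∀ j, NeZero (q j)]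
    (hcop : Pairwise fun i j => Nat.Coprime (q i) (q j)) :
    LinearIndependent ℚ
      (fun p : Σ j : ι, {a : ℕ // 1 ≤ a ∧ 2 * a < q j ∧ Nat.Coprime a (q j)} =>
        Real.cot (π * p.2.1 / q p.1)) := by
  have hspan (j : ι) : Submodule.span ℚ (range fun a : {a : ℕ // 1 ≤ a ∧ 2 * a < q j ∧
      Nat.Coprime a (q j)} ↦ Real.cot (π * a / q j)) ≤ cotSpan (q j) :=
    Submodule.span_le.mpr <| range_subset_iff.mpr fun a ↦ cot_pi_mul_div_mem_cotSpan (q j) a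
  refine linearIndependent_iUnion_finite (fun j ↦ linearIndependent_cot_pi_mul_div (q j)) ?_
  intro i t ht hit
  have : NeZero (∏ j ∈ ht.toFinset, q j) :=
    ⟨Finset.prod_ne_zero_iff.mpr fun j _ ↦ NeZero.ne (q j)⟩
  have hcop_prod : (q i).Coprime (∏ j ∈ ht.toFinset, q j) :=
    Nat.Coprime.prod_right fun j hj ↦ hcop fun hij ↦ hit (hij ▸ ht.mem_toFinset.mp hj)
  refine (disjoint_cotSpan hcop_prod).mono (hspan i) (iSup₂_le fun j hj ↦ (hspan j).trans ?_)
  exact cotSpan_mono (Finset.dvd_prod_of_mem q (ht.mem_toFinset.mpr hj))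

end

/-- Extension of Okada's theorem: for pairwise coprime moduli `q₁, …, q_ℓ > 2`, the real
numbers `cot (π a / q_j)` for `1 ≤ a < q_j / 2` with `gcd(a, q_j) = 1` are linearly
independent over `ℚ`. -/
theorem cot_values_linearIndependent {ℓ : ℕ} (q : Fin ℓ → ℕ) (hq : ∀ j, 2 < q j)
    (hcop : Pairwise fun i j => Nat.Coprime (q i) (q j)) :
    LinearIndependent ℚ
      (fun p : Σ j : Fin ℓ, {a : ℕ // 1 ≤ a ∧ 2 * a < q j ∧ Nat.Coprime a (q j)} =>
        Real.cot (Real.pi * p.2.1 / q p.1)) := by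
  have (j : Fin ℓ) : NeZero (q j) := ⟨(Nat.zero_lt_two.trans (hq j)).ne'⟩
  exact cot_values_linearIndependent_general q hcop
end

section
/- For pairwise coprime natural numbers q₁, ..., q_ℓ > 4, the set of Ramachandra units ⋃_{j=1}^ℓ { ξ_{a,q_j} : 1 < a < q_j/2, gcd(a, q_j) = 1 } is multiplicatively independent, i.e., the only integer exponents α_{a,j} with ∏_{j,a} ξ_{a,q_j}^{α_{a,j}} = 1 are all zero. -/
open Complex

noncomputable def zetaC (m : ℕ) : ℂ := Complex.exp (2 * Real.pi * Complex.I / m)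

/-- The exponent `d_a = (1-a)/2 · Σ_{d ∣ q, d ≠ q, gcd(d, q/d) = 1} d` (a rational number). -/
noncomputable def ramExp (a q : ℕ) : ℚ :=
  (1 - (a : ℚ)) / 2 *
    ∑ d ∈ (Nat.divisors q).filter (fun d => d ≠ q ∧ Nat.Coprime d (q / d)), (d : ℚ)

/-- The Ramachandra unit `ξ_{a,q} = ζ_q^{d_a} ∏_{d ∣ q, d ≠ q, gcd(d,q/d)=1} (1-ζ_q^{ad})/(1-ζ_q^d)`,
where `ζ_q^{d_a}` is interpreted as `exp(2πi d_a / q)`. -/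
noncomputable def ramUnit (a q : ℕ) : ℂ :=
  Complex.exp (2 * Real.pi * Complex.I * (ramExp a q : ℂ) / q) *
    ∏ d ∈ (Nat.divisors q).filter (fun d => d ≠ q ∧ Nat.Coprime d (q / d)),
      (1 - zetaC q ^ (a * d)) / (1 - zetaC q ^ d)

/-!
Let `G_q(x) = ∑ log |1 - ζ_q ^ (d x)|`, the sum over the unitary divisors `d ≠ q` of `q`.
Conjugating the relation by `ζ_Q ↦ ζ_Q ^ t`, where `Q = ∏ q_j`, and taking logarithms of absolute
values gives `∑_j ∑_a α_{a,j} (G_{q_j}(a t) - G_{q_j}(t)) = 0` for every `t` prime to `Q`. By the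
Chinese remainder theorem `t` can be varied modulo a single `q_j`, so each inner sum is constant in
`t`, and pairing it with a nontrivial even character `χ` of `(ℤ/q_j)ˣ` yields
`∑_a α_{a,j} (χ⁻¹(a) - 1) = 0` as soon as `∑_x χ(x) G_{q_j}(x) ≠ 0`.

If `χ` modulo `q` is induced by the primitive character `χ₀` modulo `f`, then summing over the
unitary divisors turns `∑_x χ(x) G_q(x)` into an Euler product,
`∏_{p ∣ q} ([p ∤ f] φ(p ^ v_p(q)) + 1 - χ₀(p)) · ∑_{x mod f} χ₀(x) log |1 - ζ_f ^ x|`.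
Each factor is `1` or has positive real part, and the last sum is a Gauss sum times
`-L(1, χ₀⁻¹) ≠ 0`. The `α_{a,j}` vanish by orthogonality of the even characters, since the `a`
are distinct up to sign and different from `±1`.
-/

/-! ### The Dirichlet test and the cosine zeta function at `s = 1` -/

theorem norm_sum_Ico_smul_le {E : Type*} [NormedAddCommGroup E] [NormedSpace ℝ E] {c : ℕ → E}
    {C : ℝ} (hc : ∀ n, ‖∑ i ∈ Finset.range n, c i‖ ≤ C) {w : ℕ → ℝ} {M : ℕ}
    (hw : AntitoneOn w (Set.Ici M)) (hw₀ : ∀ n ≥ M, 0 ≤ w n) {N : ℕ} (hMN : M ≤ N) :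
    ‖∑ n ∈ Finset.Ico M N, w n • c n‖ ≤ 2 * C * w M := by
  set P : ℕ → E := fun n => ∑ i ∈ Finset.range n, c i
  have by_parts : ‖∑ n ∈ Finset.Ico M N, w n • c n - w N • P N + w M • P M‖
      ≤ (w M - w N) * C := by
    induction N, hMN using Nat.le_induction with
    | base => simp
    | succ N hMN ih =>
      have hstep : w (N + 1) ≤ w N := hw hMN (hMN.trans N.le_succ) N.le_succ
      calc _ = ‖(∑ n ∈ Finset.Ico M N, w n • c n - w N • P N + w M • P M)
              + (w N - w (N + 1)) • P (N + 1)‖ := by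
            rw [Finset.sum_Ico_succ_top hMN, show P (N + 1) = P N + c N from
              Finset.sum_range_succ c N]
            congr 1
            module
        _ ≤ (w M - w N) * C + (w N - w (N + 1)) * C := by
            refine (norm_add_le _ _).trans (add_le_add ih ?_)
            rw [norm_smul, Real.norm_of_nonneg (sub_nonneg.2 hstep)]
            exact mul_le_mul_of_nonneg_left (hc _) (sub_nonneg.2 hstep)
        _ = _ := by ring
  have boundary (n : ℕ) (hn : M ≤ n) : ‖w n • P n‖ ≤ w n * C := by
    rw [norm_smul, Real.norm_of_nonneg (hw₀ n hn)]
    exact mul_le_mul_of_nonneg_left (hc n) (hw₀ n hn)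
  calc _ = ‖(∑ n ∈ Finset.Ico M N, w n • c n - w N • P N + w M • P M)
          + w N • P N - w M • P M‖ := by congr 1; abel
    _ ≤ (w M - w N) * C + w N * C + w M * C :=
      norm_sub_le_of_le (norm_add_le_of_le by_parts (boundary N hMN)) (boundary M le_rfl)
    _ = _ := by ring

theorem tendsto_sum_smul_of_hasSum_of_antitoneOn {E ι : Type*} [NormedAddCommGroup E]
    [NormedSpace ℝ E] {c : ℕ → E} {C : ℝ} (hc : ∀ n, ‖∑ i ∈ Finset.range n, c i‖ ≤ C)
    {l : Filter ι} [l.NeBot] {w : ι → ℕ → ℝ} {w₀ : ℕ → ℝ} {S : ι → E} {S₀ : E} {k : ℕ}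
    (hw : ∀ᶠ i in l, AntitoneOn (w i) (Set.Ici k) ∧ ∀ n ≥ k, 0 ≤ w i n)
    (hS : ∀ᶠ i in l, HasSum (fun n => w i n • c n) (S i))
    (hww₀ : ∀ n, Filter.Tendsto (w · n) l (nhds (w₀ n)))
    (hw₀ : Filter.Tendsto w₀ Filter.atTop (nhds 0)) (hSS₀ : Filter.Tendsto S l (nhds S₀)) :
    Filter.Tendsto (fun N => ∑ n ∈ Finset.range N, w₀ n • c n) Filter.atTop (nhds S₀) := by
  -- The bound on the tails is uniform in `i`, so it passes to the limit along `l`.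
  have tail (i : ι) (hi : AntitoneOn (w i) (Set.Ici k) ∧ ∀ n ≥ k, 0 ≤ w i n)
      (hSi : HasSum (fun n => w i n • c n) (S i)) (M : ℕ) (hM : k ≤ M) :
      ‖S i - ∑ n ∈ Finset.range M, w i n • c n‖ ≤ 2 * C * w i M := by
    refine le_of_tendsto (hSi.tendsto_sum_nat.sub_const _).norm ?_
    filter_upwards [Filter.eventually_ge_atTop M] with N hMN
    rw [← Finset.sum_Ico_eq_sub _ hMN]
    exact norm_sum_Ico_smul_le hc (hi.1.mono (Set.Ici_subset_Ici.2 hM))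
      (fun n hn => hi.2 n (hM.trans hn)) hMN
  have tail₀ (M : ℕ) (hM : k ≤ M) : ‖S₀ - ∑ n ∈ Finset.range M, w₀ n • c n‖ ≤ 2 * C * w₀ M := by
    refine le_of_tendsto_of_tendsto
      (hSS₀.sub (tendsto_finsetSum _ fun n _ => (hww₀ n).smul_const (c n))).norm
      ((hww₀ M).const_mul (2 * C)) ?_
    filter_upwards [hw, hS] with i hi hSi using tail i hi hSi M hM
  rw [tendsto_iff_norm_sub_tendsto_zero]
  refine squeeze_zero' (.of_forall fun _ => norm_nonneg _) ?_ (by simpa using hw₀.const_mul (2 * C))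
  filter_upwards [Filter.eventually_ge_atTop k] with M hM
  rw [norm_sub_rev]
  exact tail₀ M hM

theorem norm_sum_range_pow_le {𝕜 : Type*} [NormedField 𝕜] {z : 𝕜} (hz : ‖z‖ = 1) (hz₁ : z ≠ 1)
    (n : ℕ) : ‖∑ i ∈ Finset.range n, z ^ i‖ ≤ 2 / ‖1 - z‖ := by
  rw [geom_sum_eq hz₁, norm_div, norm_sub_rev z 1]
  gcongr
  calc ‖z ^ n - 1‖ ≤ ‖z ^ n‖ + ‖(1 : 𝕜)‖ := norm_sub_le _ _
    _ = 2 := by rw [norm_pow, hz, one_pow, norm_one]; norm_num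

theorem toCircle_ne_one {x : UnitAddCircle} (hx : x ≠ 0) : (AddCircle.toCircle x : ℂ) ≠ 1 := by
  rw [Ne, Circle.coe_eq_one, ← AddCircle.toCircle_zero]
  exact (AddCircle.injective_toCircle one_ne_zero).ne hx

theorem hasSum_cosZeta_of_one_lt (x : UnitAddCircle) {s : ℝ} (hs : 1 < s) :
    HasSum (fun n : ℕ => (n : ℝ) ^ (-s) • (((AddCircle.toCircle x : ℂ) ^ n).re : ℂ))
      (HurwitzZeta.cosZeta x s) := by
  induction x using QuotientAddGroup.induction_on with | H a =>
  refine (HurwitzZeta.hasSum_nat_cosZeta a (s := s) (by simpa using hs)).congr_fun fun n => ?_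
  rw [AddCircle.toCircle_apply_mk, ← Circle.coe_pow, ← Circle.exp_natCast_mul, Circle.coe_exp,
    exp_ofReal_mul_I_re, real_smul, ofReal_cpow n.cast_nonneg, ofReal_neg, cpow_neg,
    ofReal_natCast, show (n : ℝ) * (2 * Real.pi / 1 * a) = 2 * Real.pi * a * n by ring,
    div_eq_inv_mul]

theorem tendsto_sum_re_toCircle_pow_div_cosZeta_one {x : UnitAddCircle} (hx : x ≠ 0) :
    Filter.Tendsto (fun N => ∑ n ∈ Finset.range N,
      (n : ℝ)⁻¹ • (((AddCircle.toCircle x : ℂ) ^ n).re : ℂ))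
      Filter.atTop (nhds (HurwitzZeta.cosZeta x 1)) := by
  have partial_sums (N : ℕ) : ‖∑ n ∈ Finset.range N, (((AddCircle.toCircle x : ℂ) ^ n).re : ℂ)‖
      ≤ 2 / ‖1 - (AddCircle.toCircle x : ℂ)‖ := by
    rw [← ofReal_sum, ← re_sum, norm_real]
    exact (abs_re_le_norm _).trans
      (norm_sum_range_pow_le (Circle.norm_coe _) (toCircle_ne_one hx) N)
  refine tendsto_sum_smul_of_hasSum_of_antitoneOn partial_sums (l := nhdsWithin 1 (Set.Ioi 1))
    (w := fun s n => (n : ℝ) ^ (-s)) (S := fun s : ℝ => HurwitzZeta.cosZeta x s) (k := 1)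
    ?_ ?_ ?_ tendsto_inv_atTop_nhds_zero_nat ?_
  · filter_upwards [self_mem_nhdsWithin] with s (hs : 1 < s)
    refine ⟨fun m (hm : 1 ≤ m) n _ hmn => ?_, fun n _ => by positivity⟩
    exact Real.rpow_le_rpow_of_nonpos (by positivity) (by gcongr) (by linarith)
  · filter_upwards [self_mem_nhdsWithin] with s hs using hasSum_cosZeta_of_one_lt x hs
  · intro n
    refine tendsto_nhdsWithin_of_tendsto_nhds ?_
    have hcont : ContinuousAt (fun s : ℝ => (n : ℝ) ^ (-s)) 1 :=
      (Real.continuousAt_const_rpow' (by norm_num)).comp continuousAt_neg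
    simpa [Real.rpow_neg_one] using hcont.tendsto
  · have hcont : Continuous fun s : ℝ => HurwitzZeta.cosZeta x s :=
      (HurwitzZeta.differentiable_cosZeta_of_ne_zero hx).continuous.comp continuous_ofReal
    simpa using (hcont.tendsto 1).mono_left nhdsWithin_le_nhds

theorem hasSum_re_pow_div {z : ℂ} (hz : ‖z‖ < 1) :
    HasSum (fun n : ℕ => (z ^ n).re / n) (-Real.log ‖1 - z‖) := by
  have h := hasSum_re (hasSum_taylorSeries_neg_log hz)
  simpa [log_re, div_natCast_re] using h

theorem cosZeta_one_eq_neg_log {x : UnitAddCircle} (hx : x ≠ 0) :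
    HurwitzZeta.cosZeta x 1 = -(Real.log ‖1 - (AddCircle.toCircle x : ℂ)‖ : ℂ) := by
  set z : ℂ := (AddCircle.toCircle x : ℂ)
  -- Since the series converges at `s = 1`, Abel summation evaluates it along `r z`, `r ↑ 1`.
  have abel := (tendsto_tsum_powerSeries_nhdsWithin_lt
    (tendsto_sum_re_toCircle_pow_div_cosZeta_one hx)).comp Filter.tendsto_map
  have hcont : ContinuousAt (fun r : ℝ => (↑(-Real.log ‖1 - r * z‖) : ℂ)) 1 := by
    have hz : ‖1 - ((1 : ℝ) : ℂ) * z‖ ≠ 0 := by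
      simpa [sub_eq_zero] using (toCircle_ne_one hx).symm
    fun_prop (disch := exact hz)
  refine tendsto_nhds_unique abel ?_
  have hlim := hcont.tendsto.mono_left (nhdsWithin_le_nhds (s := Set.Iio 1))
  simp only [ofReal_one, one_mul, ofReal_neg] at hlim
  refine hlim.congr' ?_
  filter_upwards [self_mem_nhdsWithin, mem_nhdsWithin_of_mem_nhds (Ioi_mem_nhds zero_lt_one)]
    with r (hr : r < 1) (hr₀ : 0 < r)
  have hrz : ‖r * z‖ < 1 := by
    rwa [norm_mul, Circle.norm_coe, mul_one, norm_real, Real.norm_of_nonneg hr₀.le]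
  rw [← ofReal_neg, ← (hasSum_ofReal.2 (hasSum_re_pow_div hrz)).tsum_eq]
  refine tsum_congr fun n => ?_
  rw [mul_pow, ← ofReal_pow, re_ofReal_mul, real_smul]
  push_cast
  ring

/-! ### Logarithms of cyclotomic numbers -/

theorem zetaC_pow {N : ℕ} [NeZero N] (k : ℕ) : zetaC N ^ k = ZMod.stdAddChar (k : ZMod N) := by
  have h := ZMod.stdAddChar_coe (N := N) 1
  rw [Int.cast_one, Int.cast_one, mul_one] at h
  rw [zetaC, ← h, ← AddChar.map_nsmul_eq_pow, nsmul_one]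

theorem isPrimitiveRoot_zetaC (N : ℕ) [NeZero N] : IsPrimitiveRoot (zetaC N) N :=
  Complex.isPrimitiveRoot_exp N (NeZero.ne N)

theorem isPrimitiveRoot_stdAddChar_one (N : ℕ) [NeZero N] :
    IsPrimitiveRoot (ZMod.stdAddChar (1 : ZMod N)) N := by
  rw [← Nat.cast_one, ← zetaC_pow, pow_one]
  exact isPrimitiveRoot_zetaC N

theorem stdAddChar_natCast_mul {n N : ℕ} [NeZero n] [NeZero N] (x : ZMod (n * N)) :
    ZMod.stdAddChar ((n : ZMod (n * N)) * x) =
      ZMod.stdAddChar (ZMod.castHom (dvd_mul_left N n) (ZMod N) x) := by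
  obtain ⟨k, rfl⟩ := ZMod.intCast_surjective x
  rw [map_intCast, ← Int.cast_natCast, ← Int.cast_mul, ZMod.stdAddChar_coe, ZMod.stdAddChar_coe]
  have : (n : ℂ) ≠ 0 := NeZero.ne _
  congr 1
  push_cast
  field_simp

/-- The function `x ↦ log |1 - ζ_N ^ x|` on exponents modulo `N`; it vanishes at `x = 0` since
`Real.log 0 = 0`. -/
noncomputable def logNormOneSub {N : ℕ} [NeZero N] (x : ZMod N) : ℝ :=
  Real.log ‖1 - ZMod.stdAddChar x‖

theorem one_sub_stdAddChar_ne_zero {N : ℕ} [NeZero N] {x : ZMod N} (hx : x ≠ 0) :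
    1 - ZMod.stdAddChar x ≠ 0 := by
  rw [sub_ne_zero, ← AddChar.map_zero_eq_one (ZMod.stdAddChar (N := N))]
  exact ZMod.injective_stdAddChar.ne hx.symm

theorem logNormOneSub_natCast_mul {n N : ℕ} [NeZero n] [NeZero N] (x : ZMod (n * N)) :
    logNormOneSub ((n : ZMod (n * N)) * x) =
      logNormOneSub (ZMod.castHom (dvd_mul_left N n) (ZMod N) x) := by
  rw [logNormOneSub, stdAddChar_natCast_mul, logNormOneSub]

theorem cosZeta_toAddCircle_one {N : ℕ} [NeZero N] {x : ZMod N} (hx : x ≠ 0) :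
    HurwitzZeta.cosZeta (ZMod.toAddCircle x) 1 = -(logNormOneSub x : ℂ) := by
  rw [cosZeta_one_eq_neg_log ((ZMod.toAddCircle_eq_zero).not.2 hx)]
  rfl

theorem prod_fiber_one_sub_stdAddChar (n : ℕ) {N : ℕ} [NeZero n] [NeZero N] (y : ZMod N) :
    ∏ x : ZMod (n * N) with ZMod.castHom (dvd_mul_left N n) (ZMod N) x = y,
      (1 - ZMod.stdAddChar x) = 1 - ZMod.stdAddChar y := by
  obtain ⟨x₀, rfl⟩ := ZMod.castHom_surjective (dvd_mul_left N n) y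
  have hprim := isPrimitiveRoot_stdAddChar_one (n * N)
  have hroot := hprim.pow (NeZero.pos _) (mul_comm n N)
  have mem_fiber (x : ZMod (n * N)) : ZMod.castHom (dvd_mul_left N n) (ZMod N) x =
      ZMod.castHom (dvd_mul_left N n) (ZMod N) x₀ ↔ ZMod.stdAddChar (x - x₀) ^ n = 1 := by
    rw [← AddChar.map_nsmul_eq_pow, nsmul_eq_mul, stdAddChar_natCast_mul, map_sub,
      ← AddChar.map_zero_eq_one (ZMod.stdAddChar (N := N)), ZMod.injective_stdAddChar.eq_iff,
      sub_eq_zero]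
  rw [← stdAddChar_natCast_mul, ← nsmul_eq_mul, AddChar.map_nsmul_eq_pow, ← one_pow n,
    hroot.pow_sub_pow_eq_prod_sub_mul _ _ (NeZero.pos n)]
  refine Finset.prod_bij (fun x _ => ZMod.stdAddChar (x - x₀)) ?_ ?_ ?_ ?_
  · intro x hx
    rw [Polynomial.mem_nthRootsFinset (NeZero.pos n)]
    exact (mem_fiber x).1 (Finset.mem_filter.1 hx).2
  · intro x _ x' _ h
    exact sub_left_injective (ZMod.injective_stdAddChar h)
  · intro z hz
    rw [Polynomial.mem_nthRootsFinset (NeZero.pos n)] at hz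
    obtain ⟨i, -, rfl⟩ := hprim.eq_pow_of_pow_eq_one
      (show z ^ (n * N) = 1 by rw [pow_mul, hz, one_pow])
    rw [← AddChar.map_nsmul_eq_pow] at hz ⊢
    refine ⟨i • 1 + x₀, ?_, by rw [add_sub_cancel_right]⟩
    rwa [Finset.mem_filter_univ, mem_fiber, add_sub_cancel_right]
  · intro x _
    rw [← AddChar.map_add_eq_mul, sub_add_cancel, one_pow]

theorem sum_fiber_logNormOneSub (n : ℕ) {N : ℕ} [NeZero n] [NeZero N] {y : ZMod N} (hy : y ≠ 0) :
    ∑ x : ZMod (n * N) with ZMod.castHom (dvd_mul_left N n) (ZMod N) x = y, logNormOneSub x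
      = logNormOneSub y := by
  have hprod := prod_fiber_one_sub_stdAddChar n y
  rw [logNormOneSub, ← hprod, norm_prod, Real.log_prod]
  · rfl
  · exact fun x hx => norm_ne_zero_iff.2
      (Finset.prod_ne_zero_iff.1 (hprod ▸ one_sub_stdAddChar_ne_zero hy) x hx)

theorem LFunction_dft_one_of_even {N : ℕ} [NeZero N] {Φ : ZMod N → ℂ} (hΦ : Function.Even Φ)
    (hΦ₀ : Φ 0 = 0) : ZMod.LFunction (ZMod.dft Φ) 1 = -∑ x, Φ x * logNormOneSub x := by
  have sum_neg : ∑ x, Φ x * HurwitzZeta.expZeta (ZMod.toAddCircle (-x)) 1 =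
      ∑ x, Φ x * HurwitzZeta.expZeta (ZMod.toAddCircle x) 1 := by
    rw [← Equiv.sum_comp (Equiv.neg (ZMod N))]
    simp only [Equiv.neg_apply, neg_neg, hΦ _]
  calc ZMod.LFunction (ZMod.dft Φ) 1
      = ∑ x, Φ x * HurwitzZeta.expZeta (ZMod.toAddCircle (-x)) 1 := ZMod.LFunction_dft Φ (.inl hΦ₀)
    _ = ∑ x, Φ x * HurwitzZeta.cosZeta (ZMod.toAddCircle x) 1 := by
        simp only [HurwitzZeta.cosZeta_eq, ← map_neg, mul_div_assoc', mul_add, ← Finset.sum_div,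
          Finset.sum_add_distrib, sum_neg]
        ring
    _ = -∑ x, Φ x * logNormOneSub x := by
        rw [← Finset.sum_neg_distrib]
        refine Finset.sum_congr rfl fun x _ => ?_
        rcases eq_or_ne x 0 with rfl | hx
        · simp only [hΦ₀, zero_mul, neg_zero]
        · rw [cosZeta_toAddCircle_one hx, mul_neg]

theorem gaussSum_stdAddChar_ne_zero {N : ℕ} [NeZero N] {χ : DirichletCharacter ℂ N}
    (hχ : χ.IsPrimitive) : gaussSum χ ZMod.stdAddChar ≠ 0 := by
  intro h
  have hdft : ZMod.dft (χ : ZMod N → ℂ) = 0 := by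
    ext k
    rw [hχ.fourierTransform_eq_inv_mul_gaussSum, h, mul_zero, Pi.zero_apply]
  have h_one := congrFun ((LinearEquiv.map_eq_zero_iff _).1 hdft) 1
  rw [map_one, Pi.zero_apply] at h_one
  exact one_ne_zero h_one

theorem dirichletCharacter_inv_even {R : Type*} [CommRing R] {N : ℕ}
    {χ : DirichletCharacter R N} (hχ : χ.Even) : χ⁻¹.Even := by
  rw [DirichletCharacter.Even, MulChar.inv_apply_eq_inv, hχ, Ring.inverse_one]

/-- The character sum `∑ χ(x) log |1 - ζ_N ^ x|`, essentially `L(1, χ⁻¹)` for even primitive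
`χ`. -/
noncomputable def charLogSum {N : ℕ} [NeZero N] (χ : DirichletCharacter ℂ N) : ℂ :=
  ∑ x, χ x * logNormOneSub x

theorem gaussSum_mul_LFunction_inv_one {N : ℕ} [NeZero N] {χ : DirichletCharacter ℂ N}
    (hχ : χ.IsPrimitive) (heven : χ.Even) (hN : N ≠ 1) :
    gaussSum χ ZMod.stdAddChar * χ⁻¹.LFunction 1 = -charLogSum χ := by
  have hdft : ZMod.dft (χ : ZMod N → ℂ) = fun k => gaussSum χ ZMod.stdAddChar * χ⁻¹ k := by
    ext k
    rw [hχ.fourierTransform_eq_inv_mul_gaussSum, (dirichletCharacter_inv_even heven).eval_neg,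
      mul_comm]
  rw [charLogSum, ← LFunction_dft_one_of_even heven.to_fun (χ.map_zero' hN), hdft,
    DirichletCharacter.LFunction, ZMod.LFunction, ZMod.LFunction]
  simp only [mul_assoc, ← Finset.mul_sum]
  rw [mul_left_comm]

theorem charLogSum_ne_zero {N : ℕ} [NeZero N] {χ : DirichletCharacter ℂ N}
    (hχ : χ.IsPrimitive) (heven : χ.Even) (hχ₁ : χ ≠ 1) : charLogSum χ ≠ 0 := by
  have hN : N ≠ 1 := by
    rintro rfl
    exact hχ₁ (DirichletCharacter.level_one χ)
  rw [← neg_ne_zero, ← gaussSum_mul_LFunction_inv_one hχ heven hN]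
  exact mul_ne_zero (gaussSum_stdAddChar_ne_zero hχ)
    (DirichletCharacter.LFunction_apply_one_ne_zero (inv_ne_one.2 hχ₁))

/-! ### Imprimitive characters and Euler factors -/

theorem changeLevel_apply_of_isUnit {R : Type*} [CommMonoidWithZero R] {N M : ℕ} (hNM : N ∣ M)
    (χ : DirichletCharacter R N) {x : ZMod M} (hx : IsUnit x) :
    DirichletCharacter.changeLevel hNM χ x = χ (ZMod.castHom hNM (ZMod N) x) := by
  obtain ⟨u, rfl⟩ := hx
  exact DirichletCharacter.changeLevel_eq_cast_of_dvd χ hNM u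

theorem apply_prime_eq_zero_of_dvd {R : Type*} [CommMonoidWithZero R] {N p : ℕ}
    (χ : DirichletCharacter R N) (hp : p.Prime) (hpN : p ∣ N) : χ p = 0 :=
  MulChar.map_nonunit χ fun h => (ZMod.isUnit_prime_iff_not_dvd hp).1 h hpN

theorem changeLevel_mul_apply {R : Type*} [CommMonoidWithZero R] {d m : ℕ}
    (χ : DirichletCharacter R m) (x : ZMod (d * m)) :
    DirichletCharacter.changeLevel (dvd_mul_left m d) χ x =
      (1 : DirichletCharacter R d) (ZMod.castHom (dvd_mul_right d m) (ZMod d) x) *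
        χ (ZMod.castHom (dvd_mul_left m d) (ZMod m) x) := by
  by_cases hx : IsUnit x
  · rw [changeLevel_apply_of_isUnit _ _ hx, MulChar.one_apply (hx.map _), one_mul]
  · rw [MulChar.map_nonunit _ hx]
    obtain ⟨k, rfl⟩ := ZMod.intCast_surjective x
    simp only [map_intCast]
    rw [ZMod.coe_int_isUnit_iff_isCoprime, Nat.cast_mul, IsCoprime.mul_left_iff, not_and_or,
      ← ZMod.coe_int_isUnit_iff_isCoprime, ← ZMod.coe_int_isUnit_iff_isCoprime] at hx
    rcases hx with hx | hx
    · rw [MulChar.map_nonunit _ hx, zero_mul]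
    · rw [MulChar.map_nonunit χ hx, mul_zero]

theorem sum_filter_castHom_eq_zero_eq_sum {M : Type*} [AddCommMonoid M] {n N : ℕ} [NeZero n]
    [NeZero N] (F : ZMod (n * N) → M) :
    ∑ x with ZMod.castHom (dvd_mul_right n N) (ZMod n) x = 0, F x =
      ∑ y : ZMod N, F ((n : ZMod (n * N)) * (y.val : ZMod (n * N))) := by
  have mul_inj (x x' : ZMod (n * N)) : (n : ZMod (n * N)) * x = (n : ZMod (n * N)) * x' ↔
      ZMod.castHom (dvd_mul_left N n) (ZMod N) x = ZMod.castHom (dvd_mul_left N n) (ZMod N) x' := by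
    rw [← ZMod.injective_stdAddChar.eq_iff, stdAddChar_natCast_mul, stdAddChar_natCast_mul,
      ZMod.injective_stdAddChar.eq_iff]
  symm
  refine Finset.sum_bij (fun y _ => (n : ZMod (n * N)) * (y.val : ZMod (n * N))) ?_ ?_ ?_ ?_
  · intro y _
    rw [Finset.mem_filter_univ, map_mul, map_natCast, ZMod.natCast_self, zero_mul]
  · intro y _ y' _ h
    simpa [mul_inj] using h
  · intro x hx
    obtain ⟨k, rfl⟩ := ZMod.natCast_zmod_surjective x
    rw [Finset.mem_filter_univ, map_natCast, ZMod.natCast_eq_zero_iff] at hx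
    obtain ⟨j, rfl⟩ := hx
    refine ⟨j, Finset.mem_univ _, ?_⟩
    rw [Nat.cast_mul, mul_inj]
    simp
  · exact fun _ _ => rfl

theorem charLogSum_changeLevel_prime_mul {N : ℕ} [NeZero N] (hN : N ≠ 1)
    (χ : DirichletCharacter ℂ N) (p : ℕ) [Fact p.Prime] :
    charLogSum (DirichletCharacter.changeLevel (dvd_mul_left N p) χ) =
      (1 - χ p) * charLogSum χ := by
  set π := ZMod.castHom (dvd_mul_left N p) (ZMod N)
  set ρ := ZMod.castHom (dvd_mul_right p N) (ZMod p)
  have full : ∑ x, χ (π x) * logNormOneSub x = charLogSum χ := by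
    rw [← Finset.sum_fiberwise Finset.univ π, charLogSum]
    refine Finset.sum_congr rfl fun y _ => ?_
    rw [Finset.sum_congr rfl fun x hx => by rw [(Finset.mem_filter.1 hx).2], ← Finset.mul_sum,
      ← ofReal_sum]
    rcases eq_or_ne y 0 with rfl | hy
    · rw [χ.map_zero' hN, zero_mul, zero_mul]
    · rw [sum_fiber_logNormOneSub p hy]
  have multiples : ∑ x with ρ x = 0, χ (π x) * logNormOneSub x = χ p * charLogSum χ := by
    rw [sum_filter_castHom_eq_zero_eq_sum, charLogSum, Finset.mul_sum]
    refine Finset.sum_congr rfl fun y _ => ?_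
    rw [logNormOneSub_natCast_mul, map_mul, map_natCast, map_natCast, ZMod.natCast_zmod_val,
      map_mul, mul_assoc]
  rw [one_sub_mul, ← multiples, ← full, Finset.sum_filter, ← Finset.sum_sub_distrib, charLogSum]
  refine Finset.sum_congr rfl fun x _ => ?_
  rw [changeLevel_mul_apply]
  split_ifs with hx
  · rw [show ZMod.castHom (dvd_mul_right p N) (ZMod p) x = 0 from hx, MulChar.map_zero, zero_mul,
      zero_mul, sub_self]
  · rw [MulChar.one_apply (isUnit_iff_ne_zero.2 hx), one_mul, sub_zero]

theorem charLogSum_changeLevel {N M : ℕ} [NeZero N] [NeZero M] (hN : N ≠ 1) (hNM : N ∣ M)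
    (χ : DirichletCharacter ℂ N) :
    charLogSum (DirichletCharacter.changeLevel hNM χ) =
      (∏ p ∈ M.primeFactors, (1 - χ p)) * charLogSum χ := by
  obtain ⟨n, hn⟩ := exists_eq_mul_left_of_dvd hNM
  induction n using induction_on_primes generalizing M with
  | zero => exact absurd (hn.trans (zero_mul N)) (NeZero.ne M)
  | one =>
    obtain rfl : M = N := hn.trans (one_mul N)
    rw [DirichletCharacter.changeLevel_self, Finset.prod_eq_one, one_mul]
    intro p hp
    rw [apply_prime_eq_zero_of_dvd χ (Nat.prime_of_mem_primeFactors hp)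
      (Nat.dvd_of_mem_primeFactors hp), sub_zero]
  | prime_mul p n hp ih =>
    obtain rfl : M = p * (n * N) := by rw [hn, mul_assoc]
    have : Fact p.Prime := ⟨hp⟩
    have hM : n * N ≠ 0 := right_ne_zero_of_mul (NeZero.ne (p * (n * N)))
    have : NeZero (n * N) := ⟨hM⟩
    rw [DirichletCharacter.changeLevel_trans χ (dvd_mul_left N n) (dvd_mul_left (n * N) p),
      charLogSum_changeLevel_prime_mul (fun h => hN (Nat.eq_one_of_mul_eq_one_left h)), ih _ rfl,
      ← mul_assoc, Nat.primeFactors_mul hp.ne_zero hM, hp.primeFactors, ← Finset.insert_eq]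
    congr 1
    by_cases hpM : p ∣ n * N
    · rw [Finset.insert_eq_of_mem (Nat.mem_primeFactors.2 ⟨hp, hpM, hM⟩),
        apply_prime_eq_zero_of_dvd _ hp hpM, sub_zero, one_mul]
    · rw [Finset.prod_insert fun h => hpM (Nat.dvd_of_mem_primeFactors h),
        changeLevel_apply_of_isUnit _ _ ((ZMod.isUnit_prime_iff_not_dvd hp).2 hpM), map_natCast]

theorem sum_changeLevel_mul_comp_castHom {R : Type*} [CommRing R] {d m : ℕ} [NeZero d]
    [NeZero m] (hdm : d.Coprime m) (χ : DirichletCharacter R m) (F : ZMod m → R) :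
    ∑ x, DirichletCharacter.changeLevel (dvd_mul_left m d) χ x *
        F (ZMod.castHom (dvd_mul_left m d) (ZMod m) x) = d.totient * ∑ y, χ y * F y := by
  have crt (x : ZMod (d * m)) : ZMod.chineseRemainder hdm x =
      (ZMod.castHom (dvd_mul_right d m) (ZMod d) x, ZMod.castHom (dvd_mul_left m d) (ZMod m) x) :=
    DFunLike.congr_fun (Subsingleton.elim (ZMod.chineseRemainder hdm : ZMod (d * m) →+* _)
      ((ZMod.castHom (dvd_mul_right d m) (ZMod d)).prod
        (ZMod.castHom (dvd_mul_left m d) (ZMod m)))) x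
  calc _ = ∑ z : ZMod d × ZMod m, (1 : DirichletCharacter R d) z.1 * (χ z.2 * F z.2) := by
        refine Fintype.sum_equiv (ZMod.chineseRemainder hdm).toEquiv _ _ fun x => ?_
        rw [changeLevel_mul_apply, mul_assoc, RingEquiv.toEquiv_eq_coe, RingEquiv.coe_toEquiv, crt]
    _ = _ := by
        simp only [Fintype.sum_prod_type, ← Finset.mul_sum, ← Finset.sum_mul,
          MulChar.sum_one_eq_card_units, ZMod.card_units_eq_totient]

theorem sum_mul_comp_castHom_eq_zero {R : Type*} [CommRing R] [IsDomain R] {N m : ℕ} [NeZero N]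
    (hm : m ∣ N) {χ : DirichletCharacter R N} (hχ : ¬ χ.FactorsThrough m) (F : ZMod m → R) :
    ∑ x, χ x * F (ZMod.castHom hm (ZMod m) x) = 0 := by
  rw [DirichletCharacter.factorsThrough_iff_ker_unitsMap hm, SetLike.not_le_iff_exists] at hχ
  obtain ⟨u, hu, hχu⟩ := hχ
  have cast_u : ZMod.castHom hm (ZMod m) u = 1 := congrArg Units.val hu
  have hχu : χ u ≠ 1 := fun h => hχu (Units.ext h)
  refine eq_zero_of_mul_eq_self_left hχu ?_
  conv_rhs => rw [← Equiv.sum_comp (Units.mulLeft u)]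
  rw [Finset.mul_sum]
  refine Finset.sum_congr rfl fun x _ => ?_
  rw [Units.mulLeft_apply, map_mul, map_mul, cast_u, one_mul, mul_assoc]

/-! ### Unitary divisors -/

/-- The unitary divisors of `q`: those `d ∣ q` that are coprime to the complementary divisor. -/
def unitaryDivisors (q : ℕ) : Finset ℕ :=
  q.divisors.filter fun d => d.Coprime (q / d)

theorem mem_unitaryDivisors {q d : ℕ} :
    d ∈ unitaryDivisors q ↔ (d ∣ q ∧ q ≠ 0) ∧ d.Coprime (q / d) := by
  rw [unitaryDivisors, Finset.mem_filter, Nat.mem_divisors]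

theorem mul_div_of_mem_unitaryDivisors {q d : ℕ} (hd : d ∈ unitaryDivisors q) : d * (q / d) = q :=
  Nat.mul_div_cancel' (mem_unitaryDivisors.1 hd).1.1

theorem ne_zero_of_mem_unitaryDivisors {q d : ℕ} (hd : d ∈ unitaryDivisors q) : d ≠ 0 :=
  left_ne_zero_of_mul ((mul_div_of_mem_unitaryDivisors hd).trans_ne (mem_unitaryDivisors.1 hd).1.2)

theorem factorization_eq_of_mem_unitaryDivisors {q d p : ℕ} (hd : d ∈ unitaryDivisors q)
    (hp : p ∈ d.primeFactors) : q.factorization p = d.factorization p := by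
  conv_lhs => rw [← mul_div_of_mem_unitaryDivisors hd]
  exact Nat.factorization_eq_of_coprime_left (mem_unitaryDivisors.1 hd).2 (by simpa using hp)

theorem eq_prod_primeFactors_of_mem_unitaryDivisors {R : Type*} [CommMonoid R] {f : ℕ → R}
    (hf : ∀ m n, m.Coprime n → f (m * n) = f m * f n) (hf₁ : f 1 = 1) {q d : ℕ}
    (hd : d ∈ unitaryDivisors q) : f d = ∏ p ∈ d.primeFactors, f (p ^ q.factorization p) := by
  rw [Nat.multiplicative_factorization f hf hf₁ (ne_zero_of_mem_unitaryDivisors hd),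
    Finsupp.prod, Nat.support_factorization]
  exact Finset.prod_congr rfl fun p hp => by rw [factorization_eq_of_mem_unitaryDivisors hd hp]

theorem primeFactors_div_of_mem_unitaryDivisors {q d : ℕ} (hd : d ∈ unitaryDivisors q) :
    (q / d).primeFactors = q.primeFactors \ d.primeFactors := by
  have hcop := (mem_unitaryDivisors.1 hd).2
  have hunion := hcop.primeFactors_mul
  rw [mul_div_of_mem_unitaryDivisors hd] at hunion
  rw [hunion, Finset.union_sdiff_cancel_left hcop.disjoint_primeFactors]

theorem primeFactors_prod_pow_factorization {q : ℕ} {I : Finset ℕ} (hI : I ⊆ q.primeFactors) :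
    (∏ p ∈ I, p ^ q.factorization p).primeFactors = I := by
  have prime (p) (hp : p ∈ I) : p.Prime := Nat.prime_of_mem_primeFactors (hI hp)
  ext r
  refine ⟨fun hr => ?_, fun hr => ?_⟩
  · obtain ⟨p, hp, hrp⟩ := (Prime.dvd_finsetProd_iff (Nat.prime_of_mem_primeFactors hr).prime _).1
      (Nat.dvd_of_mem_primeFactors hr)
    have hr := Nat.prime_of_mem_primeFactors hr
    rwa [(Nat.prime_dvd_prime_iff_eq hr (prime p hp)).1 (hr.dvd_of_dvd_pow hrp)]
  · have hr₀ : q.factorization r ≠ 0 := Finsupp.mem_support_iff.1 (hI hr)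
    exact Nat.mem_primeFactors.2 ⟨prime r hr,
      (dvd_pow_self r hr₀).trans (Finset.dvd_prod_of_mem (fun p => p ^ q.factorization p) hr),
      Finset.prod_ne_zero_iff.2 fun p hp => pow_ne_zero _ (prime p hp).ne_zero⟩

theorem prod_pow_factorization_mem_unitaryDivisors {q : ℕ} (hq : q ≠ 0) {I : Finset ℕ}
    (hI : I ⊆ q.primeFactors) : ∏ p ∈ I, p ^ q.factorization p ∈ unitaryDivisors q := by
  have hmul : (∏ p ∈ I, p ^ q.factorization p) *
      (∏ p ∈ q.primeFactors \ I, p ^ q.factorization p) = q := by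
    rw [mul_comm, Finset.prod_sdiff hI]
    exact Nat.prod_factorization_pow_eq_self hq
  have hI₀ := left_ne_zero_of_mul (hmul.trans_ne hq)
  refine mem_unitaryDivisors.2 ⟨⟨Dvd.intro _ hmul, hq⟩, ?_⟩
  rw [Nat.div_eq_of_eq_mul_right (Nat.pos_of_ne_zero hI₀) hmul.symm,
    ← Nat.disjoint_primeFactors hI₀ (right_ne_zero_of_mul (hmul.trans_ne hq)),
    primeFactors_prod_pow_factorization hI,
    primeFactors_prod_pow_factorization Finset.sdiff_subset]
  exact Finset.disjoint_sdiff

theorem sum_unitaryDivisors_prod_mul_prod {R : Type*} [CommSemiring R] {q : ℕ} (hq : q ≠ 0)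
    (A B : ℕ → R) :
    ∑ d ∈ unitaryDivisors q, (∏ p ∈ d.primeFactors, A p) * ∏ p ∈ (q / d).primeFactors, B p =
      ∏ p ∈ q.primeFactors, (A p + B p) := by
  rw [Finset.prod_add]
  refine Finset.sum_bij' (fun d _ => d.primeFactors) (fun I _ => ∏ p ∈ I, p ^ q.factorization p)
    ?_ ?_ ?_ ?_ ?_
  · exact fun d hd => Finset.mem_powerset.2
      (Nat.primeFactors_mono (mem_unitaryDivisors.1 hd).1.1 hq)
  · exact fun I hI => prod_pow_factorization_mem_unitaryDivisors hq (Finset.mem_powerset.1 hI)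
  · exact fun d hd => (eq_prod_primeFactors_of_mem_unitaryDivisors (f := id)
      (fun _ _ _ => rfl) rfl hd).symm
  · exact fun I hI => primeFactors_prod_pow_factorization (Finset.mem_powerset.1 hI)
  · exact fun d hd => by rw [primeFactors_div_of_mem_unitaryDivisors hd]

instance conductor_neZero {R : Type*} [CommMonoidWithZero R] {q : ℕ} [NeZero q]
    (χ : DirichletCharacter R q) : NeZero χ.conductor :=
  ⟨χ.conductor_ne_zero⟩

theorem primitiveCharacter_even {R : Type*} [CommRing R] {q : ℕ}
    {χ : DirichletCharacter R q} (hχ : χ.Even) : χ.primitiveCharacter.Even := by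
  have h := χ.primitiveCharacter_apply_of_isCoprime (a := -1) isCoprime_one_left.neg_left
  rwa [Int.cast_neg, Int.cast_one, Int.cast_neg, Int.cast_one, hχ] at h

theorem sum_mul_logNormOneSub_natCast_mul {q d : ℕ} [NeZero q] (hd : d ∈ unitaryDivisors q)
    {χ : DirichletCharacter ℂ q} (hχ : χ ≠ 1) :
    ∑ x, χ x * logNormOneSub ((d : ZMod q) * x) =
      d.totient * (1 : DirichletCharacter ℂ χ.conductor) d *
        (∏ p ∈ (q / d).primeFactors, (1 - χ.primitiveCharacter p)) *
          charLogSum χ.primitiveCharacter := by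
  obtain ⟨⟨⟨m, rfl⟩, hdm₀⟩, hdm⟩ := mem_unitaryDivisors.1 hd
  have : NeZero d := ⟨left_ne_zero_of_mul hdm₀⟩
  have : NeZero m := ⟨right_ne_zero_of_mul hdm₀⟩
  rw [Nat.mul_div_cancel_left m (Nat.pos_of_neZero d)] at hdm ⊢
  simp_rw [logNormOneSub_natCast_mul]
  by_cases hfd : d.Coprime χ.conductor
  · have hfm : χ.conductor ∣ m := hfd.symm.dvd_of_dvd_mul_left χ.conductor_dvd_level
    have hχm : DirichletCharacter.changeLevel (dvd_mul_left m d)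
        (DirichletCharacter.changeLevel hfm χ.primitiveCharacter) = χ := by
      rw [← DirichletCharacter.changeLevel_trans]
      exact χ.changeLevel_primitiveCharacter
    rw [MulChar.one_apply ((ZMod.isUnit_iff_coprime _ _).2 hfd), mul_one, mul_assoc,
      ← charLogSum_changeLevel (DirichletCharacter.eq_one_iff_conductor_eq_one.not.1 hχ) hfm]
    conv_lhs => rw [← hχm]
    exact sum_changeLevel_mul_comp_castHom hdm _ fun y => (logNormOneSub y : ℂ)
  · have hfm : ¬ χ.FactorsThrough m := fun h =>
      hfd (hdm.coprime_dvd_right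
        ((χ.mem_conductorSet_iff_conductor_dvd (dvd_mul_left m d)).1 h))
    rw [MulChar.map_nonunit _ ((ZMod.isUnit_iff_coprime _ _).not.2 hfd), mul_zero, zero_mul,
      zero_mul]
    exact sum_mul_comp_castHom_eq_zero _ hfm fun y => (logNormOneSub y : ℂ)

/-- The function `x ↦ ∑ log |1 - ζ_q ^ (d x)|` on `ℤ/q`, with `d` running over the unitary divisors
of `q`. The divisor `d = q`, which does not enter the Ramachandra units, contributes
`Real.log 0 = 0`. -/
noncomputable def ramachandraLog {q : ℕ} [NeZero q] (x : ZMod q) : ℝ :=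
  ∑ d ∈ unitaryDivisors q, logNormOneSub ((d : ZMod q) * x)

theorem sum_mul_ramachandraLog {q : ℕ} [NeZero q] {χ : DirichletCharacter ℂ q} (hχ : χ ≠ 1) :
    ∑ x, χ x * ramachandraLog x =
      (∏ p ∈ q.primeFactors,
        ((p ^ q.factorization p).totient *
            (1 : DirichletCharacter ℂ χ.conductor) (p ^ q.factorization p : ℕ) +
          (1 - χ.primitiveCharacter p))) * charLogSum χ.primitiveCharacter := by
  simp_rw [ramachandraLog, ofReal_sum, Finset.mul_sum]
  rw [Finset.sum_comm, ← sum_unitaryDivisors_prod_mul_prod (NeZero.ne q), Finset.sum_mul]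
  refine Finset.sum_congr rfl fun d hd => ?_
  rw [sum_mul_logNormOneSub_natCast_mul hd hχ, eq_prod_primeFactors_of_mem_unitaryDivisors
    (f := fun n => (n.totient * (1 : DirichletCharacter ℂ χ.conductor) n : ℂ)) ?_ ?_ hd]
  · intro m n hmn
    rw [Nat.totient_mul hmn, Nat.cast_mul, Nat.cast_mul, map_mul, mul_mul_mul_comm]
  · rw [Nat.totient_one, Nat.cast_one, Nat.cast_one, map_one, one_mul]

theorem totient_mul_one_apply_add_one_sub_ne_zero {f p : ℕ} (hp : p ≠ 0) (k : ℕ)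
    (χ : DirichletCharacter ℂ f) :
    (p ^ k).totient * (1 : DirichletCharacter ℂ f) (p ^ k : ℕ) + (1 - χ p) ≠ 0 := by
  by_cases hpk : IsUnit ((p ^ k : ℕ) : ZMod f)
  · refine ne_of_apply_ne re (ne_of_gt ?_)
    have htot : (0 : ℝ) < (p ^ k).totient :=
      Nat.cast_pos.2 (Nat.totient_pos.2 (pow_pos (Nat.pos_of_ne_zero hp) k))
    have hre : (χ p).re ≤ 1 := (re_le_norm _).trans (χ.norm_le_one p)
    rw [MulChar.one_apply hpk, mul_one, add_re, natCast_re, sub_re, one_re, zero_re]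
    linarith
  · have hp' : ¬ IsUnit (p : ZMod f) := fun h => hpk (by
      rw [Nat.cast_pow]; exact h.pow k)
    rw [MulChar.map_nonunit _ hpk, MulChar.map_nonunit _ hp', mul_zero, zero_add, sub_zero]
    exact one_ne_zero

theorem sum_mul_ramachandraLog_ne_zero {q : ℕ} [NeZero q] {χ : DirichletCharacter ℂ q}
    (hχ : χ ≠ 1) (heven : χ.Even) : ∑ x, χ x * (ramachandraLog x : ℂ) ≠ 0 := by
  have hχ₁ : χ.primitiveCharacter ≠ 1 := by
    intro h
    rw [← χ.changeLevel_primitiveCharacter, h, DirichletCharacter.changeLevel_one] at hχ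
    exact hχ rfl
  rw [sum_mul_ramachandraLog hχ]
  refine mul_ne_zero (Finset.prod_ne_zero_iff.2 fun p hp => ?_) ?_
  · exact totient_mul_one_apply_add_one_sub_ne_zero (Nat.prime_of_mem_primeFactors hp).ne_zero _ _
  · exact charLogSum_ne_zero χ.primitiveCharacter_isPrimitive (primitiveCharacter_even heven) hχ₁

/-! ### Character orthogonality -/

theorem sum_inv_mul_comp_unit_mul {R S : Type*} [CommRing R] [Fintype R] [CommRing S]
    (χ : MulChar R S) (u : Rˣ) (g : R → S) :
    ∑ x, χ⁻¹ x * g (u * x) = χ u * ∑ x, χ⁻¹ x * g x := by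
  rw [← Equiv.sum_comp (Units.mulLeft u) fun x => χ⁻¹ x * g x, Finset.mul_sum]
  refine Finset.sum_congr rfl fun x _ => ?_
  have hu : χ u * χ⁻¹ u = 1 := by
    rw [← MulChar.mul_apply, mul_inv_cancel, MulChar.one_apply_coe]
  rw [Units.mulLeft_apply, map_mul, ← mul_assoc, ← mul_assoc, hu, one_mul]

theorem sum_mul_char_sub_one_eq_zero {R S ι : Type*} [CommRing R] [Fintype R] [CommRing S]
    [IsDomain S] {A : Finset ι} {x : ι → R} (hx : ∀ i ∈ A, IsUnit (x i)) {α : ι → S} {g : R → S}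
    {c : S} (h : ∀ s, IsUnit s → ∑ i ∈ A, α i * (g (x i * s) - g s) = c) {χ : MulChar R S}
    (hχ : χ ≠ 1) (hg : ∑ s, χ⁻¹ s * g s ≠ 0) : ∑ i ∈ A, α i * (χ (x i) - 1) = 0 := by
  refine (mul_eq_zero.1 ?_).resolve_right hg
  calc (∑ i ∈ A, α i * (χ (x i) - 1)) * ∑ s, χ⁻¹ s * g s
      = ∑ i ∈ A, α i * ∑ s, χ⁻¹ s * (g (x i * s) - g s) := by
        rw [Finset.sum_mul]
        refine Finset.sum_congr rfl fun i hi => ?_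
        obtain ⟨u, hu⟩ := hx i hi
        simp_rw [← hu, mul_sub (χ⁻¹ _), Finset.sum_sub_distrib, sum_inv_mul_comp_unit_mul]
        rw [mul_assoc, sub_mul, one_mul]
    _ = ∑ s, χ⁻¹ s * ∑ i ∈ A, α i * (g (x i * s) - g s) := by
        simp_rw [Finset.mul_sum]
        rw [Finset.sum_comm]
        exact Finset.sum_congr rfl fun s _ => Finset.sum_congr rfl fun i _ => mul_left_comm ..
    _ = ∑ s, χ⁻¹ s * c := by
        refine Finset.sum_congr rfl fun s _ => ?_
        by_cases hs : IsUnit s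
        · rw [h s hs]
        · rw [χ⁻¹.map_nonunit hs, zero_mul, zero_mul]
    _ = 0 := by
        rw [← Finset.sum_mul, MulChar.sum_eq_zero_of_ne_one (inv_ne_one.2 hχ), zero_mul]

theorem sum_char_inv_mul_char_add_char_neg {q : ℕ} [NeZero q] {b : ZMod q} (hb : IsUnit b)
    (a : ZMod q) :
    ∑ χ : DirichletCharacter ℂ q, χ b⁻¹ * (χ a + χ (-a)) =
      q.totient * ((if b = a then 1 else 0) + if b = -a then 1 else 0) := by
  simp_rw [mul_add, Finset.sum_add_distrib, DirichletCharacter.sum_char_inv_mul_char_eq ℂ hb,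
    mul_ite, mul_one, mul_zero]

theorem eq_zero_of_sum_mul_even_char_sub_one_eq_zero {q : ℕ} [NeZero q] {ι : Type*}
    {A : Finset ι} {x : ι → ZMod q} {α : ι → ℂ}
    (h : ∀ χ : DirichletCharacter ℂ q, χ.Even → ∑ i ∈ A, α i * (χ (x i) - 1) = 0) {j : ι}
    (hj : j ∈ A) (hunit : IsUnit (x j)) (hone : x j ≠ 1) (hneg_one : x j ≠ -1)
    (hne : ∀ i ∈ A, i ≠ j → x j ≠ x i ∧ x j ≠ -x i) : α j = 0 := by
  -- Pairing `x` with `-x` kills the odd characters, so orthogonality of all characters applies.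
  have hχ (χ : DirichletCharacter ℂ q) :
      ∑ i ∈ A, α i * ((χ (x i) + χ (-x i)) - (χ 1 + χ (-1))) = 0 := by
    rcases χ.even_or_odd with hχ | hχ
    · simp_rw [hχ.eval_neg, map_one]
      rw [← mul_zero 2, ← h χ hχ, Finset.mul_sum]
      exact Finset.sum_congr rfl fun i _ => by ring
    · simp_rw [hχ.eval_neg, add_neg_cancel, sub_zero, mul_zero, Finset.sum_const_zero]
  have hsum : ∑ i ∈ A, α i * ((if x j = x i then 1 else 0) + if x j = -x i then 1 else 0) = 0 := by
    refine (mul_eq_zero.1 ?_).resolve_left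
      (Nat.cast_ne_zero.2 (Nat.totient_pos.2 (Nat.pos_of_neZero q)).ne' : (q.totient : ℂ) ≠ 0)
    calc _ = ∑ i ∈ A, α i * ∑ χ : DirichletCharacter ℂ q,
            χ (x j)⁻¹ * ((χ (x i) + χ (-x i)) - (χ 1 + χ (-1))) := by
          simp_rw [mul_sub (DFunLike.coe _ _), Finset.sum_sub_distrib,
            sum_char_inv_mul_char_add_char_neg hunit, if_neg hone, if_neg hneg_one, add_zero,
            mul_zero, sub_zero, Finset.mul_sum, mul_left_comm]
      _ = ∑ χ : DirichletCharacter ℂ q, χ (x j)⁻¹ *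
            ∑ i ∈ A, α i * ((χ (x i) + χ (-x i)) - (χ 1 + χ (-1))) := by
          simp_rw [Finset.mul_sum]
          rw [Finset.sum_comm]
          exact Finset.sum_congr rfl fun χ _ => Finset.sum_congr rfl fun i _ => mul_left_comm ..
      _ = 0 := by simp_rw [hχ, mul_zero, Finset.sum_const_zero]
  rw [Finset.sum_eq_single_of_mem j hj fun i hi hij => by
    rw [if_neg (hne i hi hij).1, if_neg (hne i hi hij).2, add_zero, mul_zero], if_pos rfl] at hsum
  refine (mul_eq_zero.1 hsum).resolve_right ?_
  split_ifs <;> norm_num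

theorem eq_zero_of_sum_mul_ramachandraLog_sub_eq {q : ℕ} [NeZero q] {ι : Type*} {A : Finset ι}
    {x : ι → ZMod q} (hx : ∀ i ∈ A, IsUnit (x i)) {α : ι → ℝ} {c : ℝ}
    (h : ∀ s, IsUnit s → ∑ i ∈ A, α i * (ramachandraLog (x i * s) - ramachandraLog s) = c) {j : ι}
    (hj : j ∈ A) (hone : x j ≠ 1) (hneg_one : x j ≠ -1)
    (hne : ∀ i ∈ A, i ≠ j → x j ≠ x i ∧ x j ≠ -x i) : α j = 0 := by
  refine ofReal_eq_zero.1 (eq_zero_of_sum_mul_even_char_sub_one_eq_zero (α := fun i => (α i : ℂ))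
    (fun χ hχ => ?_) hj (hx j hj) hone hneg_one hne)
  by_cases hχ₁ : χ = 1
  · refine Finset.sum_eq_zero fun i hi => ?_
    rw [hχ₁, MulChar.one_apply (hx i hi), sub_self, mul_zero]
  refine sum_mul_char_sub_one_eq_zero hx (g := fun s => (ramachandraLog s : ℂ)) (c := (c : ℂ))
    (fun s hs => ?_) hχ₁
    (sum_mul_ramachandraLog_ne_zero (inv_ne_one.2 hχ₁) (dirichletCharacter_inv_even hχ))
  rw [← h s hs]
  push_cast
  rfl

/-! ### Galois conjugation of the relation -/

open IntermediateField in
theorem exists_algHom_adjoin_apply_gen_eq {K L : Type*} [Field K] [CharZero K] [Field L]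
    [CharZero L] {n : ℕ} [NeZero n] {w : K} {w' : L} (hw : IsPrimitiveRoot w n)
    (hw' : IsPrimitiveRoot w' n) : ∃ σ : ℚ⟮w⟯ →ₐ[ℚ] L, σ (AdjoinSimple.gen ℚ w) = w' := by
  have hn := Nat.pos_of_neZero n
  have hint : IsIntegral ℚ w := (hw.isIntegral hn).tower_top
  have hroot : w' ∈ (minpoly ℚ w).aroots L := by
    rw [← Polynomial.cyclotomic_eq_minpoly_rat hw hn, Polynomial.aroots,
      Polynomial.map_cyclotomic, Polynomial.mem_roots (Polynomial.cyclotomic_ne_zero n L)]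
    exact hw'.isRoot_cyclotomic hn
  exact ⟨(algHomAdjoinIntegralEquiv ℚ hint).symm ⟨w', hroot⟩,
    algHomAdjoinIntegralEquiv_symm_apply_gen ℚ hint ⟨w', hroot⟩⟩

/-- The product `∏ (1 - w ^ (a d)) / (1 - w ^ d)` over the unitary divisors `d ≠ q` of `q`. At
`w = ζ_q` it is the Ramachandra unit `ξ_{a,q}` without its root-of-unity factor. -/
def cyclotomicQuotient {F : Type*} [Field F] (q a : ℕ) (w : F) : F :=
  ∏ d ∈ (unitaryDivisors q).erase q, (1 - w ^ (a * d)) / (1 - w ^ d)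

theorem map_cyclotomicQuotient {F L : Type*} [Field F] [Field L] (φ : F →+* L) (q a : ℕ) (w : F) :
    φ (cyclotomicQuotient q a w) = cyclotomicQuotient q a (φ w) := by
  simp only [cyclotomicQuotient, map_prod, map_div₀, map_sub, map_one, map_pow]

theorem map_prod_cyclotomicQuotient {F L ι : Type*} [Field F] [Field L] (φ : F →+* L)
    (s : Finset ι) (q a k : ι → ℕ) (β : ι → ℤ) (w : F) :
    φ (∏ i ∈ s, cyclotomicQuotient (q i) (a i) (w ^ k i) ^ β i) =
      ∏ i ∈ s, cyclotomicQuotient (q i) (a i) (φ w ^ k i) ^ β i := by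
  simp only [map_prod, map_zpow₀, map_cyclotomicQuotient, map_pow]

open IntermediateField in
theorem prod_cyclotomicQuotient_pow_eq_one_of_isPrimitiveRoot {K L ι : Type*} [Field K]
    [CharZero K] [Field L] [CharZero L] {s : Finset ι} {q a k : ι → ℕ} {β : ι → ℤ} {m n : ℕ}
    [NeZero n] {w : K} {w' : L} (hw : IsPrimitiveRoot w n) (hw' : IsPrimitiveRoot w' n)
    (h : (∏ i ∈ s, cyclotomicQuotient (q i) (a i) (w ^ k i) ^ β i) ^ m = 1) :
    (∏ i ∈ s, cyclotomicQuotient (q i) (a i) (w' ^ k i) ^ β i) ^ m = 1 := by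
  obtain ⟨σ, hσ⟩ := exists_algHom_adjoin_apply_gen_eq hw hw'
  have hgen : (∏ i ∈ s,
      cyclotomicQuotient (q i) (a i) (AdjoinSimple.gen ℚ w ^ k i) ^ β i) ^ m = 1 := by
    refine (algebraMap ℚ⟮w⟯ K).injective ?_
    rw [map_pow, map_prod_cyclotomicQuotient, map_one]
    exact h
  rw [← hσ, ← RingHom.coe_coe, ← map_prod_cyclotomicQuotient, ← map_pow, hgen, map_one]

theorem filter_ne_and_coprime_eq_erase_unitaryDivisors (q : ℕ) :
    (Nat.divisors q).filter (fun d => d ≠ q ∧ Nat.Coprime d (q / d)) =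
      (unitaryDivisors q).erase q := by
  ext d
  simp only [unitaryDivisors, Finset.mem_filter, Finset.mem_erase]
  tauto

theorem ramUnit_pow_eq_cyclotomicQuotient_pow {q n : ℕ} (hq : q ≠ 0) (hn : 2 * q ∣ n) (a : ℕ) :
    ramUnit a q ^ n = cyclotomicQuotient q a (zetaC q) ^ n := by
  obtain ⟨k, rfl⟩ := hn
  have hroot : exp (2 * Real.pi * I * (ramExp a q : ℂ) / q) ^ (2 * q * k) = 1 := by
    rw [← exp_nat_mul, exp_eq_one_iff]
    refine ⟨k * ((1 - a) * ∑ d ∈ (unitaryDivisors q).erase q, (d : ℤ)), ?_⟩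
    have hq' : (q : ℂ) ≠ 0 := Nat.cast_ne_zero.2 hq
    rw [ramExp, filter_ne_and_coprime_eq_erase_unitaryDivisors]
    push_cast
    field_simp
  rw [ramUnit, mul_pow, hroot, one_mul, filter_ne_and_coprime_eq_erase_unitaryDivisors,
    cyclotomicQuotient]

theorem zetaC_pow_div {N M : ℕ} (hM : M ≠ 0) (hNM : N ∣ M) : zetaC M ^ (M / N) = zetaC N := by
  obtain ⟨k, rfl⟩ := hNM
  have hN := left_ne_zero_of_mul hM
  have hN' : (N : ℂ) ≠ 0 := Nat.cast_ne_zero.2 hN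
  have hk' : (k : ℂ) ≠ 0 := Nat.cast_ne_zero.2 (right_ne_zero_of_mul hM)
  rw [Nat.mul_div_cancel_left k (Nat.pos_of_ne_zero hN), zetaC, zetaC, ← exp_nat_mul]
  congr 1
  push_cast
  field_simp

theorem natCast_mul_ne_zero_of_mem_erase {q d : ℕ} (hd : d ∈ (unitaryDivisors q).erase q)
    {x : ZMod q} (hx : IsUnit x) : (d : ZMod q) * x ≠ 0 := by
  obtain ⟨hdq, hd⟩ := Finset.mem_erase.1 hd
  rw [Ne, hx.mul_left_eq_zero, ZMod.natCast_eq_zero_iff]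
  exact fun hqd => hdq (Nat.dvd_antisymm (mem_unitaryDivisors.1 hd).1.1 hqd)

theorem ramachandraLog_eq_sum_erase {q : ℕ} [NeZero q] (x : ZMod q) :
    ramachandraLog x = ∑ d ∈ (unitaryDivisors q).erase q, logNormOneSub ((d : ZMod q) * x) := by
  refine (Finset.sum_erase _ ?_).symm
  rw [ZMod.natCast_self, zero_mul, logNormOneSub, AddChar.map_zero_eq_one, sub_self, norm_zero,
    Real.log_zero]

theorem cyclotomicQuotient_stdAddChar {q : ℕ} [NeZero q] (a : ℕ) (x : ZMod q) :
    cyclotomicQuotient q a (ZMod.stdAddChar x) = ∏ d ∈ (unitaryDivisors q).erase q,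
      (1 - ZMod.stdAddChar (d * (a * x) : ZMod q)) / (1 - ZMod.stdAddChar (d * x : ZMod q)) := by
  refine Finset.prod_congr rfl fun d _ => ?_
  rw [← AddChar.map_nsmul_eq_pow, ← AddChar.map_nsmul_eq_pow, nsmul_eq_mul, nsmul_eq_mul,
    Nat.cast_mul, mul_comm (a : ZMod q), mul_assoc]

theorem cyclotomicQuotient_stdAddChar_ne_zero {q : ℕ} [NeZero q] {a : ℕ} {x : ZMod q}
    (ha : IsUnit (a : ZMod q)) (hx : IsUnit x) :
    cyclotomicQuotient q a (ZMod.stdAddChar x) ≠ 0 := by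
  rw [cyclotomicQuotient_stdAddChar]
  exact Finset.prod_ne_zero_iff.2 fun d hd => div_ne_zero
    (one_sub_stdAddChar_ne_zero (natCast_mul_ne_zero_of_mem_erase hd (ha.mul hx)))
    (one_sub_stdAddChar_ne_zero (natCast_mul_ne_zero_of_mem_erase hd hx))

theorem log_norm_cyclotomicQuotient_stdAddChar {q : ℕ} [NeZero q] {a : ℕ} {x : ZMod q}
    (ha : IsUnit (a : ZMod q)) (hx : IsUnit x) :
    Real.log ‖cyclotomicQuotient q a (ZMod.stdAddChar x)‖ =
      ramachandraLog (a * x : ZMod q) - ramachandraLog x := by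
  have hne {y : ZMod q} (hy : IsUnit y) {d : ℕ} (hd : d ∈ (unitaryDivisors q).erase q) :=
    norm_ne_zero_iff.2 (one_sub_stdAddChar_ne_zero (natCast_mul_ne_zero_of_mem_erase hd hy))
  rw [cyclotomicQuotient_stdAddChar, Finset.prod_div_distrib, norm_div, norm_prod, norm_prod,
    Real.log_div (Finset.prod_ne_zero_iff.2 fun d hd => hne (ha.mul hx) hd)
      (Finset.prod_ne_zero_iff.2 fun d hd => hne hx hd),
    Real.log_prod fun d hd => hne (ha.mul hx) hd, Real.log_prod fun d hd => hne hx hd,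
    ramachandraLog_eq_sum_erase, ramachandraLog_eq_sum_erase]
  rfl

theorem zpow_pow_comm {G : Type*} [DivisionMonoid G] (x : G) (n : ℤ) (m : ℕ) :
    (x ^ n) ^ m = (x ^ m) ^ n := by
  rw [← zpow_natCast, ← zpow_natCast, zpow_comm]

theorem norm_prod_cyclotomicQuotient_stdAddChar_eq_one {ι : Type*} [Fintype ι] {q : ι → ℕ}
    [∀ i, NeZero (q i)] {A : ι → Finset ℕ} {α : ι → ℕ → ℤ}
    (h : ∏ i, ∏ a ∈ A i, ramUnit a (q i) ^ α i a = 1) {t : ℕ}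
    (ht : ∀ i, IsUnit (t : ZMod (q i))) :
    ‖∏ i, ∏ a ∈ A i,
      cyclotomicQuotient (q i) a (ZMod.stdAddChar (t : ZMod (q i))) ^ α i a‖ = 1 := by
  set Q := ∏ i, q i
  have hQ₀ : Q ≠ 0 := Finset.prod_ne_zero_iff.2 fun i _ => NeZero.ne (q i)
  have : NeZero Q := ⟨hQ₀⟩
  have hdvd (i) : q i ∣ Q := Finset.dvd_prod_of_mem q (Finset.mem_univ i)
  have hζ : IsPrimitiveRoot (zetaC Q) Q := isPrimitiveRoot_zetaC Q
  have ht : t.Coprime Q := Nat.Coprime.prod_right fun i _ => (ZMod.isUnit_iff_coprime _ _).1 (ht i)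
  have hζt (i) : (zetaC Q ^ t) ^ (Q / q i) = ZMod.stdAddChar (t : ZMod (q i)) := by
    rw [pow_right_comm, zetaC_pow_div hQ₀ (hdvd i), zetaC_pow]
  -- The factors `ζ_q ^ d_a`, whose exponents need not be integral, die in the `2Q`-th power.
  have hone : (∏ x ∈ Finset.univ.sigma A,
      cyclotomicQuotient (q x.1) x.2 (zetaC Q ^ (Q / q x.1)) ^ α x.1 x.2) ^ (2 * Q) = 1 := by
    rw [← one_pow (2 * Q), ← h, Finset.prod_sigma', ← Finset.prod_pow, ← Finset.prod_pow]
    refine Finset.prod_congr rfl fun x _ => ?_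
    rw [zetaC_pow_div hQ₀ (hdvd _), zpow_pow_comm, zpow_pow_comm,
      ramUnit_pow_eq_cyclotomicQuotient_pow (NeZero.ne _) (mul_dvd_mul_left 2 (hdvd _))]
  have hconj := prod_cyclotomicQuotient_pow_eq_one_of_isPrimitiveRoot hζ
    (hζ.pow_of_coprime t ht) hone
  simp_rw [hζt] at hconj
  rw [Finset.prod_sigma']
  exact Complex.norm_eq_one_of_pow_eq_one hconj (mul_ne_zero two_ne_zero hQ₀)

theorem sum_mul_ramachandraLog_sub_eq_zero {ι : Type*} [Fintype ι] {q : ι → ℕ}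
    [∀ i, NeZero (q i)] {A : ι → Finset ℕ} (hA : ∀ i, ∀ a ∈ A i, IsUnit (a : ZMod (q i)))
    {α : ι → ℕ → ℤ} (h : ∏ i, ∏ a ∈ A i, ramUnit a (q i) ^ α i a = 1) {t : ℕ}
    (ht : ∀ i, IsUnit (t : ZMod (q i))) :
    ∑ i, ∑ a ∈ A i, (α i a : ℝ) *
      (ramachandraLog (a * t : ZMod (q i)) - ramachandraLog (t : ZMod (q i))) = 0 := by
  rw [← Real.log_one, ← norm_prod_cyclotomicQuotient_stdAddChar_eq_one h ht, Finset.prod_sigma',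
    norm_prod, Real.log_prod, Finset.sum_sigma']
  · refine Finset.sum_congr rfl fun x hx => ?_
    rw [norm_zpow, Real.log_zpow, log_norm_cyclotomicQuotient_stdAddChar
      (hA _ _ (Finset.mem_sigma.1 hx).2) (ht _)]
  · exact fun x hx => norm_ne_zero_iff.2 (zpow_ne_zero _
      (cyclotomicQuotient_stdAddChar_ne_zero (hA _ _ (Finset.mem_sigma.1 hx).2) (ht _)))

/-! ### Separating the moduli -/

theorem exists_forall_natCast_eq {ι : Type*} [Finite ι] {q : ι → ℕ} [∀ i, NeZero (q i)]
    (hq : Pairwise fun i j => (q i).Coprime (q j)) (y : ∀ i, ZMod (q i)) :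
    ∃ t : ℕ, ∀ i, (t : ZMod (q i)) = y i := by
  cases nonempty_fintype ι
  have : NeZero (∏ i, q i) := ⟨Finset.prod_ne_zero_iff.2 fun i _ => NeZero.ne (q i)⟩
  obtain ⟨x, hx⟩ := (ZMod.prodEquivPi q hq).surjective y
  refine ⟨x.val, fun i => ?_⟩
  rw [← hx, ← Pi.natCast_apply (π := fun i => ZMod (q i)), ← map_natCast (ZMod.prodEquivPi q hq),
    ZMod.natCast_zmod_val]

theorem eq_apply_one_of_sum_eq_zero {ι M : Type*} [Fintype ι] [AddCommGroup M] {q : ι → ℕ}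
    [∀ i, NeZero (q i)] (hq : Pairwise fun i j => (q i).Coprime (q j))
    {f : ∀ i, ZMod (q i) → M}
    (hf : ∀ t : ℕ, (∀ i, IsUnit (t : ZMod (q i))) → ∑ i, f i t = 0) (j : ι) {s : ZMod (q j)}
    (hs : IsUnit s) : f j s = f j 1 := by
  classical
  have hunits {y : ∀ i, ZMod (q i)} (hy : ∀ i, IsUnit (y i)) : ∑ i, f i (y i) = 0 := by
    obtain ⟨t, ht⟩ := exists_forall_natCast_eq hq y
    simp_rw [← ht]
    exact hf t fun i => ht i ▸ hy i
  set y : ∀ i, ZMod (q i) := Function.update (fun _ => 1) j s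
  have hyj : y j = s := Function.update_self ..
  have hy {i} (hij : i ≠ j) : y i = 1 := Function.update_of_ne hij ..
  have hy_unit (i) : IsUnit (y i) := by
    rcases eq_or_ne i j with rfl | hij
    · rwa [hyj]
    · exact hy hij ▸ isUnit_one
  have hsub : ∑ i, (f i (y i) - f i 1) = 0 := by
    rw [Finset.sum_sub_distrib, hunits hy_unit, hunits fun _ => isUnit_one, sub_zero]
  rw [Finset.sum_eq_single_of_mem j (Finset.mem_univ j) fun i _ hij => by
    rw [hy hij, sub_self], hyj] at hsub
  exact sub_eq_zero.1 hsub

theorem natCast_ne_natCast {q a b : ℕ} (ha : a < q) (hb : b < q) (hab : a ≠ b) :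
    (a : ZMod q) ≠ b := fun h =>
  hab (Nat.ModEq.eq_of_lt_of_lt ((ZMod.natCast_eq_natCast_iff a b q).1 h) ha hb)

theorem natCast_ne_neg_natCast {q a b : ℕ} (hpos : 0 < a + b) (hlt : a + b < q) :
    (a : ZMod q) ≠ -b := by
  rw [Ne, eq_neg_iff_add_eq_zero, ← Nat.cast_add, ZMod.natCast_eq_zero_iff]
  exact Nat.not_dvd_of_pos_of_lt hpos hlt

/-- For pairwise coprime moduli `q₁, …, q_ℓ > 4`, the Ramachandra units
`ξ_{a,q_j}` for `1 < a < q_j/2`, `gcd(a,q_j) = 1`, are multiplicatively independent. -/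
theorem ramachandra_units_multiplicatively_independent {ℓ : ℕ} (q : Fin ℓ → ℕ)
    (hq : ∀ j, 4 < q j) (hcop : Pairwise fun i j => Nat.Coprime (q i) (q j))
    (α : Fin ℓ → ℕ → ℤ)
    (h : (∏ j, ∏ a ∈ (Finset.range (q j)).filter
          (fun a => 1 < a ∧ 2 * a < q j ∧ Nat.Coprime a (q j)),
        ramUnit a (q j) ^ α j a) = 1) :
    ∀ j a, 1 < a → 2 * a < q j → Nat.Coprime a (q j) → α j a = 0 := by
  intro j a ha₁ ha₂ hcop_a
  have neZero_q (i) : NeZero (q i) := ⟨(pos_of_gt (hq i)).ne'⟩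
  set A : Fin ℓ → Finset ℕ := fun i =>
    (Finset.range (q i)).filter fun a => 1 < a ∧ 2 * a < q i ∧ Nat.Coprime a (q i)
  have mem_A {i b} : b ∈ A i ↔ b < q i ∧ 1 < b ∧ 2 * b < q i ∧ b.Coprime (q i) := by
    rw [Finset.mem_filter, Finset.mem_range]
  have hunit (i b) (hb : b ∈ A i) : IsUnit (b : ZMod (q i)) :=
    (ZMod.isUnit_iff_coprime _ _).2 (mem_A.1 hb).2.2.2
  have hconst {s : ZMod (q j)} := eq_apply_one_of_sum_eq_zero hcop (s := s)
    (f := fun i t => ∑ b ∈ A i,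
      (α i b : ℝ) * (ramachandraLog (b * t : ZMod (q i)) - ramachandraLog t))
    (fun t ht => sum_mul_ramachandraLog_sub_eq_zero hunit h ht) j
  have haq : a < q j := by lia
  refine Int.cast_eq_zero.1 (eq_zero_of_sum_mul_ramachandraLog_sub_eq (hunit j) (fun _ => hconst)
    (mem_A.2 ⟨haq, ha₁, ha₂, hcop_a⟩) ?_ ?_ fun b hb hba => ?_)
  · exact_mod_cast natCast_ne_natCast haq (ha₁.trans haq) ha₁.ne'
  · exact_mod_cast natCast_ne_neg_natCast (b := 1) (by lia) (by lia)
  · obtain ⟨hbq, _, hb₂, _⟩ := mem_A.1 hb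
    exact ⟨natCast_ne_natCast haq hbq hba.symm, natCast_ne_neg_natCast (by lia) (by lia)⟩
end

section
/- Let α₁, ..., α_n be positive real algebraic numbers and c₀, c₁, ..., c_n algebraic numbers with c₀ ≠ 0. Then c₀π + Σ_{j=1}^n c_j log α_j is transcendental. -/
/-!
Baker's method. Suppose that `β₀ + ∑ k, β k * log (a k) = 0` with algebraic `a k`, `β k` and
`β k ≠ 0` for some `k`. The one-parameter group `z ↦ (z, z log a)` then lies in a hyperplane defined
over a number field, so its derivative is a combination of as many algebraic derivations as there
are logarithms, one fewer than there are variables. Because of this gain, Siegel's lemma provides a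
nonzero function `∑ μ, p μ (z₀) exp (∑ k, μ k zₖ)` of which many derivatives along the hyperplane
vanish at the first few integer points of the group. Vanishing at more points follows by playing the
Schwarz lemma against Liouville's inequality, losing a few derivatives at every step. In the end the
function has more zeros than an exponential polynomial with its frequencies can have, unless the
logarithms are linearly dependent over `ℚ`.

The theorem follows because `π = -i log (-1)`, and `π i` is not a rational combination of real
logarithms.
-/

namespace Baker

open Polynomial NumberField

section Schwarz

lemma exists_eq_pow_mul_of_le_analyticOrderAt {f : ℂ → ℂ} (hf : Differentiable ℂ f) {a : ℂ} {T : ℕ}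
    (hT : T ≤ analyticOrderAt f a) :
    ∃ g : ℂ → ℂ, Differentiable ℂ g ∧ ∀ z, f z = (z - a) ^ T * g z := by
  induction T generalizing f with
  | zero => exact ⟨f, hf, fun z => by simp⟩
  | succ T ih =>
    have hfa : f a = 0 := by
      refine apply_eq_zero_of_analyticOrderAt_ne_zero fun h => ?_
      simp [h] at hT
    have hdslope : Differentiable ℂ (dslope f a) := by
      rw [← differentiableOn_univ] at hf ⊢
      exact (Complex.differentiableOn_dslope Filter.univ_mem).2 hf
    have hfactor : f = (fun z => z - a) * dslope f a := by
      funext z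
      simpa [hfa] using (sub_smul_dslope f a z).symm
    have horder : T ≤ analyticOrderAt (dslope f a) a := by
      have hlin : analyticOrderAt (fun z : ℂ => z - a) a = 1 := analyticOrderAt_id_sub_const_self
      rw [hfactor, analyticOrderAt_mul (by fun_prop) (hdslope.analyticAt a), hlin, Nat.cast_succ,
        add_comm] at hT
      exact (ENat.add_le_add_iff_left ENat.one_ne_top).1 hT
    obtain ⟨g, hg, hgz⟩ := ih hdslope horder
    refine ⟨g, hg, fun z => ?_⟩
    rw [congrFun hfactor z, Pi.mul_apply, hgz, pow_succ']
    ring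

lemma exists_eq_prod_mul_of_le_analyticOrderAt {f : ℂ → ℂ} (hf : Differentiable ℂ f)
    {s : Finset ℂ} {T : ℕ} (hT : ∀ a ∈ s, T ≤ analyticOrderAt f a) :
    ∃ g : ℂ → ℂ, Differentiable ℂ g ∧ ∀ z, f z = (∏ a ∈ s, (z - a) ^ T) * g z := by
  induction s using Finset.induction_on generalizing f with
  | empty => exact ⟨f, hf, fun z => by simp⟩
  | insert a s ha ih =>
    obtain ⟨g, hg, hgz⟩ := exists_eq_pow_mul_of_le_analyticOrderAt hf (hT a (by simp))
    have hfactor : f = (fun z => (z - a) ^ T) * g := funext hgz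
    have horder : ∀ b ∈ s, T ≤ analyticOrderAt g b := by
      intro b hb
      have hpow : analyticOrderAt (fun z : ℂ => (z - a) ^ T) b = 0 := by
        rw [AnalyticAt.analyticOrderAt_eq_zero (by fun_prop)]
        exact pow_ne_zero _ (sub_ne_zero.2 fun h => ha (h ▸ hb))
      have hb' := hT b (by simp [hb])
      rwa [hfactor, analyticOrderAt_mul (by fun_prop) (hg.analyticAt b), hpow, zero_add] at hb'
    obtain ⟨g₂, hg₂, hg₂z⟩ := ih hg horder
    refine ⟨g₂, hg₂, fun z => ?_⟩
    rw [hgz, hg₂z, Finset.prod_insert ha, mul_assoc]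

lemma norm_le_div_two_pow_of_le_analyticOrderAt {f : ℂ → ℂ} (hf : Differentiable ℂ f)
    {s : Finset ℂ} {T : ℕ} {r B : ℝ} (hr : 0 < r) (hs : ∀ a ∈ s, ‖a‖ ≤ r)
    (hT : ∀ a ∈ s, T ≤ analyticOrderAt f a) (hB : ∀ z, ‖z‖ ≤ 5 * r → ‖f z‖ ≤ B)
    {x : ℂ} (hx : ‖x‖ ≤ r) : ‖f x‖ ≤ B / 2 ^ (T * s.card) := by
  obtain ⟨g, hg, hgz⟩ := exists_eq_prod_mul_of_le_analyticOrderAt hf hT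
  have hnorm : ∀ z, ‖f z‖ = (∏ a ∈ s, ‖z - a‖ ^ T) * ‖g z‖ := fun z => by
    rw [hgz, norm_mul, norm_prod]
    simp only [norm_pow]
  have hconst : ∀ c : ℝ, ∏ _a ∈ s, c ^ T = c ^ (T * s.card) := fun c => by
    rw [Finset.prod_const, pow_mul]
  have hgB : ‖g x‖ ≤ B / (4 * r) ^ (T * s.card) := by
    refine Complex.norm_le_of_forall_mem_frontier_norm_le
      (Metric.isBounded_ball (x := 0) (r := 5 * r)) hg.diffContOnCl (fun w hw => ?_)
      (subset_closure (by simpa using by linarith))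
    rw [frontier_ball _ (by positivity), mem_sphere_zero_iff_norm] at hw
    rw [le_div_iff₀ (by positivity), ← hconst, mul_comm]
    refine le_trans ?_ ((hnorm w).symm.trans_le (hB w hw.le))
    gcongr with a ha
    linarith [norm_sub_norm_le w a, hs a ha]
  calc ‖f x‖ = (∏ a ∈ s, ‖x - a‖ ^ T) * ‖g x‖ := hnorm x
    _ ≤ (2 * r) ^ (T * s.card) * (B / (4 * r) ^ (T * s.card)) := by
      rw [← hconst]
      gcongr with a ha
      linarith [norm_sub_le x a, hs a ha]
    _ = B / 2 ^ (T * s.card) := by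
      rw [show 4 * r = 2 * (2 * r) by ring, mul_pow 2 (2 * r)]
      field_simp

end Schwarz

section ZeroEstimate

variable {F : Type*} [Field F]

/-- The shift operator `u ↦ (l ↦ u (l + 1))` on sequences, whose generalized eigenvectors for `y`
are the sequences `P(l) y ^ l`. -/
def shift (F : Type*) [Field F] : Module.End F (ℕ → F) := LinearMap.funLeft F F (· + 1)

/-- The sequence `l ↦ P(l) y ^ l`. -/
def expSeq (y : F) (P : F[X]) : ℕ → F := fun l => P.eval (l : F) * y ^ l

lemma shift_pow_apply (k : ℕ) (u : ℕ → F) (l : ℕ) : (shift F ^ k) u l = u (l + k) := by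
  induction k generalizing l with
  | zero => rfl
  | succ k ih =>
    rw [pow_succ', Module.End.mul_apply, shift, LinearMap.funLeft_apply, ← shift, ih]
    congr 1
    omega

lemma degree_taylor_one_sub_lt {P : F[X]} {k : ℕ} (hP : P.degree < (k + 1 : ℕ)) :
    (taylor 1 P - P).degree < k := by
  rcases eq_or_ne P 0 with rfl | h0
  · simp
  · have hlt : (taylor 1 P - P).degree < P.degree := by
      rw [← degree_taylor P 1]
      exact degree_sub_lt_left (degree_taylor P 1) (by rwa [Ne, taylor_eq_zero])
        (leadingCoeff_taylor _ _)
    rw [degree_eq_natDegree h0] at hlt hP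
    exact hlt.trans_le (by exact_mod_cast Nat.lt_succ_iff.1 (by exact_mod_cast hP))

lemma shift_sub_pow_expSeq (y : F) {k : ℕ} {P : F[X]} (hP : P.degree < k) :
    ((shift F - algebraMap F _ y) ^ k) (expSeq y P) = 0 := by
  induction k generalizing P with
  | zero =>
    have hP0 : P = 0 := by simpa using hP
    funext l
    simp [hP0, expSeq]
  | succ k ih =>
    have hstep : (shift F - algebraMap F _ y) (expSeq y P) = y • expSeq y (taylor 1 P - P) := by
      funext l
      simp only [shift, expSeq, LinearMap.sub_apply, Module.algebraMap_end_apply, Pi.sub_apply,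
        LinearMap.funLeft_apply, Pi.smul_apply, smul_eq_mul, eval_sub, taylor_eval, Nat.cast_succ]
      ring
    rw [pow_succ, Module.End.mul_apply, hstep, map_smul, ih (degree_taylor_one_sub_lt hP),
      smul_zero]

lemma eq_zero_of_aeval_shift_eq_zero {χ : F[X]} (hχ : χ.Monic) {u : ℕ → F}
    (hu : aeval (shift F) χ u = 0) (h : ∀ l < χ.natDegree, u l = 0) : u = 0 := by
  have hrec : ∀ l, ∑ k ∈ Finset.range (χ.natDegree + 1), χ.coeff k * u (l + k) = 0 := fun l => by
    simpa [aeval_eq_sum_range, shift_pow_apply] using congrFun hu l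
  funext l
  induction l using Nat.strong_induction_on with
  | _ l ih =>
    rcases lt_or_ge l χ.natDegree with hl | hl
    · exact h l hl
    · have hsum := hrec (l - χ.natDegree)
      rwa [Finset.sum_range_succ, Finset.sum_eq_zero, zero_add, hχ.coeff_natDegree, one_mul,
        Nat.sub_add_cancel hl] at hsum
      intro k hk
      rw [ih _ (by have := Finset.mem_range.1 hk; omega), Pi.zero_apply, mul_zero]

lemma eq_zero_of_expSeq_eq_zero [CharZero F] {y : F} (hy : y ≠ 0) {P : F[X]}
    (h : expSeq y P = 0) : P = 0 := by
  refine P.eq_zero_of_infinite_isRoot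
    ((Set.infinite_range_of_injective Nat.cast_injective).mono ?_)
  rintro _ ⟨l, rfl⟩
  exact (mul_eq_zero.1 (congrFun h l)).resolve_right (pow_ne_zero _ hy)

lemma eq_zero_of_sum_eval_mul_pow_eq_zero [CharZero F] {s : Finset F} (hs : ∀ y ∈ s, y ≠ 0)
    {D : ℕ} {P : F → F[X]} (hP : ∀ y ∈ s, (P y).degree < D)
    (h : ∀ l < s.card * D, ∑ y ∈ s, (P y).eval (l : F) * y ^ l = 0) : ∀ y ∈ s, P y = 0 := by
  classical
  have hmonic : ∀ y ∈ s, ((X - C y) ^ D).Monic := fun y _ => (monic_X_sub_C y).pow D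
  have hdegree : (∏ y ∈ s, (X - C y) ^ D).natDegree = s.card * D := by
    simp [natDegree_prod_of_monic _ _ hmonic]
  have hannihilate : aeval (shift F) (∏ y ∈ s, (X - C y) ^ D) (∑ y ∈ s, expSeq y (P y)) = 0 := by
    rw [map_sum]
    refine Finset.sum_eq_zero fun y hy => ?_
    rw [← Finset.prod_erase_mul _ _ hy, map_mul, Module.End.mul_apply, map_pow, map_sub, aeval_X,
      aeval_C, shift_sub_pow_expSeq y (hP y hy), map_zero]
  have hsum : ∑ y ∈ s, expSeq y (P y) = 0 := by
    refine eq_zero_of_aeval_shift_eq_zero (monic_prod_of_monic _ _ hmonic) hannihilate ?_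
    rw [hdegree]
    exact fun l hl => by simpa [expSeq] using h l hl
  have hindep := (iSupIndep_iff_finsetSum_eq_zero_imp_eq_zero _).1
    (Module.End.independent_genEigenspace (shift F) (D : ℕ∞)) s (fun y => expSeq y (P y))
    (fun y hy => Module.End.mem_genEigenspace_nat.2 (by
      simpa [Algebra.algebraMap_eq_smul_one] using shift_sub_pow_expSeq y (hP y hy))) hsum
  exact fun y hy => eq_zero_of_expSeq_eq_zero (hs y hy) (hindep y hy)

lemma eq_zero_of_sum_add_algebraMap_pow_eq_zero {M ι : Type*} [AddCommGroup M] [Module F M]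
    (T : Module.End F M) {s : Finset ι} {ω : ι → F} (hω : Set.InjOn ω s) {x : ι → M}
    (h : ∀ k < s.card, ∑ i ∈ s, ((T + algebraMap F _ (ω i)) ^ k) (x i) = 0) :
    ∀ i ∈ s, x i = 0 := by
  classical
  induction s using Finset.induction_on generalizing x with
  | empty => simp
  | insert a s ha ih =>
    rw [Finset.card_insert_of_notMem ha] at h
    rw [Finset.coe_insert, Set.injOn_insert (by simpa using ha)] at hω
    have hrest : ∀ i ∈ s, (ω i - ω a) • x i = 0 := by
      refine ih hω.1 fun k hk => ?_
      have hnext := h (k + 1) (by omega)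
      have hshift := congrArg (T + algebraMap F (Module.End F M) (ω a)) (h k (by omega))
      rw [map_zero, map_sum] at hshift
      have hsub := congrArg₂ (· - ·) hnext hshift
      rw [sub_zero, ← Finset.sum_sub_distrib, Finset.sum_insert ha, pow_succ', Module.End.mul_apply,
        sub_self, zero_add] at hsub
      rw [← hsub]
      refine Finset.sum_congr rfl fun i _ => ?_
      rw [pow_succ', Module.End.mul_apply, map_smul, ← LinearMap.sub_apply,
        add_sub_add_left_eq_sub, ← map_sub, Module.algebraMap_end_apply]
    have hzero : ∀ i ∈ s, x i = 0 := fun i hi =>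
      (smul_eq_zero.1 (hrest i hi)).resolve_left fun h0 =>
        hω.2 ⟨i, hi, sub_eq_zero.1 h0⟩
    have h0 := h 0 (by omega)
    simp only [pow_zero, Module.End.one_apply, Finset.sum_insert ha] at h0
    rw [Finset.sum_eq_zero hzero, add_zero] at h0
    simpa [h0] using hzero

lemma degree_aeval_derivative_lt {R : Type*} [CommRing R] (f : R[X]) {P : R[X]} {D : ℕ}
    (hP : P.degree < D) : (aeval (derivative : Module.End R R[X]) f P).degree < D := by
  have hpow : ∀ k, ((derivative : Module.End R R[X]) ^ k) P ∈ degreeLT R D := by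
    intro k
    induction k with
    | zero => exact mem_degreeLT.2 hP
    | succ k ih =>
      rw [pow_succ', Module.End.mul_apply, mem_degreeLT]
      exact degree_derivative_le.trans_lt (mem_degreeLT.1 ih)
  rw [← mem_degreeLT, aeval_endomorphism]
  exact Submodule.sum_mem _ fun k _ => Submodule.smul_mem _ _ (hpow k)

lemma eq_zero_of_sum_derivative_add_pow_eval_mul_pow_eq_zero [CharZero F] [DecidableEq F]
    {Ω : Type*} [Fintype Ω] {ω y : Ω → F} (hy : ∀ i, y i ≠ 0)
    (hωy : ∀ i j, ω i = ω j → y i = y j → i = j) {R D : ℕ}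
    (hR : ∀ i, Finset.card {j | y j = y i} ≤ R) {P : Ω → F[X]} (hP : ∀ i, (P i).degree < D)
    (h : ∀ k < R, ∀ l < Fintype.card Ω * D,
      ∑ i, (aeval (derivative : Module.End F F[X]) ((X + C (ω i)) ^ k) (P i)).eval (l : F) * y i ^ l
        = 0) (i : Ω) : P i = 0 := by
  set s : Finset F := Finset.univ.image y with hs
  have hys : ∀ i ∈ Finset.univ, y i ∈ s := fun i hi => Finset.mem_image_of_mem y hi
  set Q : ℕ → F → F[X] := fun k z =>
    ∑ i with y i = z, aeval (derivative : Module.End F F[X]) ((X + C (ω i)) ^ k) (P i) with hQ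
  have hfiber : ∀ k < R, ∀ z ∈ s, Q k z = 0 := by
    intro k hk
    refine eq_zero_of_sum_eval_mul_pow_eq_zero (D := D) (by simp [hs, hy]) (fun z _ => ?_)
      fun l hl => ?_
    · exact mem_degreeLT.1 (Submodule.sum_mem _ fun i _ =>
        mem_degreeLT.2 (degree_aeval_derivative_lt _ (hP i)))
    · rw [← h k hk l (hl.trans_le (Nat.mul_le_mul_right _ Finset.card_image_le)),
        ← Finset.sum_fiberwise_of_maps_to hys]
      refine Finset.sum_congr rfl fun z _ => ?_
      rw [hQ, eval_finsetSum, Finset.sum_mul]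
      refine Finset.sum_congr rfl fun i hi => ?_
      rw [(Finset.mem_filter.1 hi).2]
  refine eq_zero_of_sum_add_algebraMap_pow_eq_zero derivative (s := {j | y j = y i}) (ω := ω)
    (fun a ha b hb hab => hωy a b hab ?_) (fun k hk => ?_) i (by simp)
  · exact (Finset.mem_filter.1 ha).2.trans (Finset.mem_filter.1 hb).2.symm
  · simpa [hQ] using hfiber k (hk.trans_le (hR i)) (y i) (hys i (Finset.mem_univ i))

end ZeroEstimate

section NumberField

variable {K : Type*} [Field K] [NumberField K]

lemma house_le_of_forall_norm_le {x : K} {A : ℝ} (h : ∀ σ : K →+* ℂ, ‖σ x‖ ≤ A) : house x ≤ A := by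
  have hA : 0 ≤ A := (norm_nonneg _).trans (h (Classical.arbitrary (K →+* ℂ)))
  exact (pi_norm_le_iff_of_nonneg hA).2 h

lemma house_one : house (1 : K) = 1 := by
  simpa using house_intCast (K := K) 1

lemma house_prod_le_prod {ι : Type*} (s : Finset ι) (x : ι → K) :
    house (∏ i ∈ s, x i) ≤ ∏ i ∈ s, house (x i) := by
  simpa only [house, map_prod] using Finset.norm_prod_le s _

lemma one_le_norm_mul_house_pow (φ : K →+* ℂ) {y : 𝓞 K} (hy : y ≠ 0) :
    1 ≤ ‖φ y‖ * house (y : K) ^ (Module.finrank ℚ K - 1) := by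
  refine le_trans ?_ (norm_norm_le_norm_mul_house_pow (y : K) φ)
  rw [← Algebra.coe_norm_int, Int.norm_cast_rat, Int.norm_eq_abs]
  exact_mod_cast Int.one_le_abs (Algebra.norm_ne_zero_iff.2 hy)

lemma mul_mul_rpow_le {c q A e : ℝ} (hq : 1 ≤ q) (hA : 1 ≤ A) (he₀ : 0 ≤ e) (he₁ : e ≤ 1) :
    c * (c * q * A) ^ e ≤ max 1 |c| ^ 2 * q * A := by
  have hc : |c| ≤ max 1 |c| := le_max_right _ _
  have hbase : 1 ≤ max 1 |c| * q * A :=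
    one_le_mul_of_one_le_of_one_le (one_le_mul_of_one_le_of_one_le (le_max_left _ _) hq) hA
  have habs : |c * q * A| ≤ max 1 |c| * q * A := by
    rw [abs_mul, abs_mul, abs_of_nonneg (zero_le_one.trans hq),
      abs_of_nonneg (zero_le_one.trans hA)]
    gcongr
  calc c * (c * q * A) ^ e ≤ |c| * |(c * q * A) ^ e| := by rw [← abs_mul]; exact le_abs_self _
    _ ≤ |c| * |c * q * A| ^ e := by gcongr; exact Real.abs_rpow_le_abs_rpow _ _
    _ ≤ max 1 |c| * (max 1 |c| * q * A) ^ (1 : ℝ) := by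
      gcongr
      exact (Real.rpow_le_rpow (abs_nonneg _) habs he₀).trans
        (Real.rpow_le_rpow_of_exponent_le hbase he₁)
    _ = max 1 |c| ^ 2 * q * A := by rw [Real.rpow_one]; ring

/- With twice as many unknowns as equations, the exponent in Siegel's lemma is at most `1`. -/
lemma exists_ne_zero_mulVec_eq_zero_house_le (K : Type*) [Field K] [NumberField K] :
    ∃ C : ℝ, 1 ≤ C ∧ ∀ (α β : Type*) [Fintype α] [Fintype β] (a : Matrix α β (𝓞 K)) (A : ℝ),
      1 ≤ A → (∀ k l, house (a k l : K) ≤ A) → 0 < Fintype.card α →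
      2 * Fintype.card α ≤ Fintype.card β →
      ∃ ξ : β → 𝓞 K, ξ ≠ 0 ∧ a.mulVec ξ = 0 ∧ ∀ l, house (ξ l : K) ≤ C * Fintype.card β * A := by
  classical
  obtain ⟨c, hc⟩ : ∃ c : ℝ, ∀ (α β : Type _) [Fintype α] [Fintype β] (a : Matrix α β (𝓞 K))
      (_ : a ≠ 0) (A : ℝ) (_ : ∀ k l, house (a k l : K) ≤ A) (_ : 0 < Fintype.card α)
      (_ : Fintype.card α < Fintype.card β), ∃ ξ : β → 𝓞 K, ξ ≠ 0 ∧ a.mulVec ξ = 0 ∧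
        ∀ l, house (ξ l : K) ≤ c * ((c * Fintype.card β * A) ^
          ((Fintype.card α : ℝ) / (Fintype.card β - Fintype.card α))) :=
    ⟨_, fun α β _ _ a ha A hA hα hαβ =>
      house.exists_ne_zero_int_vec_house_le K a ha hα hαβ rfl hA rfl⟩
  have hC : 1 ≤ max 1 |c| ^ 2 := one_le_pow₀ (le_max_left _ _)
  refine ⟨max 1 |c| ^ 2, hC, fun α β _ _ a A hA ha hα hαβ => ?_⟩
  have hβ : (1 : ℝ) ≤ Fintype.card β := by exact_mod_cast (by omega : 1 ≤ Fintype.card β)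
  rcases eq_or_ne a 0 with rfl | ha0
  · have : Nonempty β := Fintype.card_pos_iff.1 (by omega)
    refine ⟨1, one_ne_zero, Matrix.zero_mulVec _, fun l => ?_⟩
    rw [Pi.one_apply, RingOfIntegers.coe_eq_algebraMap, map_one, house_one]
    exact one_le_mul_of_one_le_of_one_le (one_le_mul_of_one_le_of_one_le hC hβ) hA
  · obtain ⟨ξ, hξ0, hξ, hbound⟩ := hc α β a ha0 A ha hα (by omega)
    have hα' : (0 : ℝ) < Fintype.card α := by exact_mod_cast hα
    have hαβ' : 2 * (Fintype.card α : ℝ) ≤ Fintype.card β := by exact_mod_cast hαβ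
    refine ⟨ξ, hξ0, hξ, fun l => (hbound l).trans (mul_mul_rpow_le hβ hA ?_ ?_)⟩
    · exact div_nonneg hα'.le (by linarith)
    · rw [div_le_one (by linarith)]
      linarith

lemma exists_common_denominator {I : Type*} [Finite I] {x : I → ℂ}
    (hx : ∀ i, IsAlgebraic ℚ (x i)) :
    ∃ (L : IntermediateField ℚ ℂ) (_ : NumberField L) (den : 𝓞 L) (num : I → 𝓞 L),
      den ≠ 0 ∧ ∀ i, algebraMap L ℂ (num i) = algebraMap L ℂ den * x i := by
  classical
  have := Fintype.ofFinite I
  let L := IntermediateField.adjoin ℚ (Set.range x)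
  have hfin : FiniteDimensional ℚ L := by
    refine IntermediateField.finiteDimensional_adjoin ?_
    rintro _ ⟨i, rfl⟩
    exact (hx i).isIntegral
  have : NumberField L := { to_finiteDimensional := hfin }
  have hmem : ∀ i, x i ∈ L := fun i => IntermediateField.subset_adjoin ℚ _ ⟨i, rfl⟩
  obtain ⟨b, hb⟩ := IsLocalization.exist_integer_multiples_of_finite (nonZeroDivisors (𝓞 L))
    (fun i => (⟨x i, hmem i⟩ : L))
  choose num hnum using hb
  refine ⟨L, this, b, num, nonZeroDivisors.ne_zero b.2, fun i => ?_⟩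
  rw [RingOfIntegers.coe_eq_algebraMap, hnum i, Algebra.smul_def, map_mul]
  rfl

/-- `A` bounds the effect of the differential operator with symbol `f` on the largest house of a
coefficient, over the polynomials of degree less than `L`. -/
def IsOperatorBound (L : ℕ) (f : (𝓞 K)[X]) (A : ℝ) : Prop :=
  ∀ p : (𝓞 K)[X], p.degree < L → ∀ H : ℝ, (∀ i, house (p.coeff i : K) ≤ H) →
    ∀ i, house ((aeval (derivative : Module.End (𝓞 K) (𝓞 K)[X]) f p).coeff i : K) ≤ A * H

namespace IsOperatorBound

variable {L : ℕ} {f g : (𝓞 K)[X]} {A B : ℝ}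

lemma one : IsOperatorBound L (1 : (𝓞 K)[X]) 1 := fun p _ H hH i => by simpa using hH i

lemma mul (hf : IsOperatorBound L f A) (hg : IsOperatorBound L g B) :
    IsOperatorBound L (f * g) (A * B) := fun p hp H hH i => by
  rw [map_mul, Module.End.mul_apply, mul_assoc]
  exact hf _ (degree_aeval_derivative_lt g hp) _ (hg p hp H hH) i

lemma pow (hf : IsOperatorBound L f A) (k : ℕ) : IsOperatorBound L (f ^ k) (A ^ k) := by
  induction k with
  | zero => simpa using one
  | succ k ih => simpa only [pow_succ] using ih.mul hf

lemma prod {ι : Type*} (s : Finset ι) {f : ι → (𝓞 K)[X]} {A : ι → ℝ}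
    (h : ∀ i ∈ s, IsOperatorBound L (f i) (A i)) :
    IsOperatorBound L (∏ i ∈ s, f i) (∏ i ∈ s, A i) := by
  classical
  induction s using Finset.induction_on with
  | empty => simpa using one
  | insert a s ha ih =>
    rw [Finset.prod_insert ha, Finset.prod_insert ha]
    exact (h a (by simp)).mul (ih fun i hi => h i (by simp [hi]))

lemma linear (a b : 𝓞 K) (hA : L * house (a : K) + house (b : K) ≤ A) :
    IsOperatorBound L (C a * X + C b) A := fun p hp H hH i => by
  have hH0 : 0 ≤ H := (house_nonneg _).trans (hH i)
  have hderiv : house ((p.derivative.coeff i : 𝓞 K) : K) ≤ L * H := by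
    rcases le_or_gt L (i + 1) with hi | hi
    · rw [coeff_derivative, coeff_eq_zero_of_degree_lt (hp.trans_le (by exact_mod_cast hi))]
      simpa [house] using by positivity
    · rw [coeff_derivative, RingOfIntegers.coe_eq_algebraMap, map_mul, mul_comm]
      have hcast : algebraMap (𝓞 K) K (i + 1) = ((i + 1 : ℕ) : K) := by push_cast; simp
      rw [hcast, house_nat_mul]
      gcongr
      · exact house_nonneg _
      · exact hH _
  have hcoeff : ((aeval (derivative : Module.End (𝓞 K) (𝓞 K)[X]) (C a * X + C b) p).coeff i : K)
      = a * (p.derivative.coeff i : 𝓞 K) + b * (p.coeff i : 𝓞 K) := by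
    simp [Module.algebraMap_end_apply, RingOfIntegers.coe_eq_algebraMap]
  calc _ ≤ house (a : K) * house ((p.derivative.coeff i : 𝓞 K) : K)
        + house (b : K) * house ((p.coeff i : 𝓞 K) : K) := by
        rw [hcoeff]
        exact (house_add_le _ _).trans (add_le_add (house_mul_le _ _) (house_mul_le _ _))
    _ ≤ house (a : K) * (L * H) + house (b : K) * H := by
        gcongr
        · exact house_nonneg _
        · exact house_nonneg _
        · exact hH i
    _ = (L * house (a : K) + house (b : K)) * H := by ring
    _ ≤ A * H := by gcongr

end IsOperatorBound

lemma norm_eval₂_le {R : Type*} [CommRing R] {σ : R →+* ℂ} {q : R[X]} {L : ℕ} (hq : q.degree < L)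
    {H r : ℝ} (hH : ∀ i, ‖σ (q.coeff i)‖ ≤ H) (hr : 1 ≤ r) {z : ℂ} (hz : ‖z‖ ≤ r) :
    ‖q.eval₂ σ z‖ ≤ L * r ^ L * H := by
  rcases eq_or_ne q 0 with rfl | h0
  · have hH0 : 0 ≤ H := (norm_nonneg _).trans (hH 0)
    simpa using by positivity
  rw [eval₂_eq_sum_range' σ ((natDegree_lt_iff_degree_lt h0).2 hq)]
  calc _ ≤ ∑ _i ∈ Finset.range L, H * r ^ L := norm_sum_le_of_le _ fun i hi => by
        rw [norm_mul, norm_pow]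
        gcongr
        · exact (norm_nonneg _).trans (hH i)
        · exact hH i
        · exact (pow_le_pow_left₀ (norm_nonneg _) hz i).trans
            (pow_le_pow_right₀ hr (Finset.mem_range.1 hi).le)
    _ = L * r ^ L * H := by
        rw [Finset.sum_const, Finset.card_range, nsmul_eq_mul]
        ring

lemma house_eval_natCast_le {q : (𝓞 K)[X]} {L : ℕ} (hq : q.degree < L) {H : ℝ}
    (hH : ∀ i, house (q.coeff i : K) ≤ H) {l R : ℕ} (hR : 1 ≤ R) (hl : l ≤ R) :
    house ((q.eval (l : 𝓞 K) : 𝓞 K) : K) ≤ L * R ^ L * H := by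
  refine house_le_of_forall_norm_le fun σ => ?_
  have hσ : σ (q.eval (l : 𝓞 K) : 𝓞 K) = q.eval₂ (σ.comp (algebraMap (𝓞 K) K)) (l : ℂ) := by
    rw [RingOfIntegers.coe_eq_algebraMap, ← RingHom.comp_apply, ← eval₂_at_apply, map_natCast]
  rw [hσ]
  exact norm_eval₂_le hq (fun i => (norm_embedding_le_house _ σ).trans (hH i))
    (by exact_mod_cast hR) (by rw [Complex.norm_natCast]; exact_mod_cast hl)

end NumberField

section ExponentialPolynomial

lemma hasDerivAt_eval_mul_exp (P : ℂ[X]) (ω z : ℂ) :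
    HasDerivAt (fun z => P.eval z * Complex.exp (ω * z))
      ((aeval (derivative : Module.End ℂ ℂ[X]) (X + C ω) P).eval z * Complex.exp (ω * z)) z := by
  have hexp : HasDerivAt (fun z => Complex.exp (ω * z)) (Complex.exp (ω * z) * ω) z := by
    simpa using ((hasDerivAt_id z).const_mul ω).cexp
  refine ((P.hasDerivAt z).mul hexp).congr_deriv ?_
  simp only [map_add, aeval_X, aeval_C, LinearMap.add_apply, Module.algebraMap_end_apply, eval_add,
    eval_smul, smul_eq_mul]
  ring

lemma iteratedDeriv_eval_mul_exp (P : ℂ[X]) (ω : ℂ) (k : ℕ) :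
    iteratedDeriv k (fun z => P.eval z * Complex.exp (ω * z)) = fun z =>
      (aeval (derivative : Module.End ℂ ℂ[X]) ((X + C ω) ^ k) P).eval z * Complex.exp (ω * z) := by
  induction k with
  | zero => simp
  | succ k ih =>
    rw [iteratedDeriv_succ, ih]
    funext z
    rw [(hasDerivAt_eval_mul_exp _ ω z).deriv, pow_succ', map_mul, Module.End.mul_apply]

lemma le_analyticOrderAt_of_hasDerivAt {κ : Type*} [Fintype κ] [DecidableEq κ]
    {F : (κ → ℕ) → ℂ → ℂ} {c : κ → ℂ}
    (hF : ∀ m z, HasDerivAt (F m) (∑ j, c j * F (m + Pi.single j 1) z) z) {M : ℕ} {a : ℂ}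
    (h : ∀ m, ∑ j, m j < M → F m a = 0) {k : ℕ} {m : κ → ℕ} (hm : ∑ j, m j + k ≤ M) :
    k ≤ analyticOrderAt (F m) a := by
  have hdiff : ∀ m, Differentiable ℂ (F m) := fun m z => (hF m z).differentiableAt
  have hsmooth : ∀ m (n : ℕ), ContDiffAt ℂ n (F m) a := fun m n => (hdiff m).contDiff.contDiffAt
  rw [natCast_le_analyticOrderAt_iff_iteratedDeriv_eq_zero ((hdiff m).analyticAt a)]
  intro i hi
  replace hm : ∑ j, m j + i < M := by omega
  clear hi
  induction i generalizing m with
  | zero => simpa using h m hm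
  | succ i ih =>
    rw [iteratedDeriv_succ', funext fun z => (hF m z).deriv,
      iteratedDeriv_fun_sum fun j _ => contDiffAt_const.mul (hsmooth _ _)]
    refine Finset.sum_eq_zero fun j _ => ?_
    rw [iteratedDeriv_const_mul _ (hsmooth _ _), ih, mul_zero]
    have hsum : ∑ j', (m + Pi.single j 1 : κ → ℕ) j' = ∑ j', m j' + 1 := by
      simp [Finset.sum_add_distrib]
    omega

end ExponentialPolynomial

section LinearForm

variable {κ : Type*} [Fintype κ]

/-- The value at `μ` of the linear form with coefficients `w`. -/
def linForm {R : Type*} [Semiring R] {L : ℕ} (w : κ → R) (μ : κ → Fin L) : R :=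
  ∑ k, (μ k : R) * w k

lemma map_linForm {R S : Type*} [Semiring R] [Semiring S] (f : R →+* S) {L : ℕ} (w : κ → R)
    (μ : κ → Fin L) : f (linForm w μ) = linForm (fun k => f (w k)) μ := by
  simp [linForm]

lemma mul_sub_eq_of_mul_linForm_sub_eq {F : Type*} [Field F] [CharZero F] {w : κ → F}
    (hw : LinearIndependent ℚ w) {L : ℕ} {μ₁ μ₂ ν₁ ν₂ : κ → Fin L} {a b : ℤ}
    (h : a * (linForm w μ₁ - linForm w μ₂) = b * (linForm w ν₁ - linForm w ν₂)) (k : κ) :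
    a * ((μ₁ k : ℤ) - μ₂ k) = b * ((ν₁ k : ℤ) - ν₂ k) := by
  have hcoeff := Fintype.linearIndependent_iff.1 hw
    (fun k => a * ((μ₁ k : ℚ) - μ₂ k) - b * ((ν₁ k : ℚ) - ν₂ k)) (by
      rw [← sub_eq_zero] at h
      rw [← h]
      simp only [linForm, ← Finset.sum_sub_distrib, Finset.mul_sum, Rat.smul_def]
      refine Finset.sum_congr rfl fun k _ => ?_
      push_cast
      ring) k
  exact_mod_cast sub_eq_zero.1 hcoeff

lemma linForm_injective {F : Type*} [Field F] [CharZero F] {w : κ → F}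
    (hw : LinearIndependent ℚ w) {L : ℕ} :
    Function.Injective (linForm w : (κ → Fin L) → F) := fun μ ν h => by
  funext k
  have hk := mul_sub_eq_of_mul_linForm_sub_eq hw (a := 1) (b := 0) (μ₁ := μ) (μ₂ := ν) (ν₁ := μ)
    (ν₂ := μ) (by simp [h]) k
  omega

/- Differences inside a fibre are integral multiples of `2πi`, hence rationally proportional, so a
coordinate that takes two values on the fibre determines its points. -/
lemma card_exp_linForm_eq_le [DecidableEq κ] {w : κ → ℂ} (hw : LinearIndependent ℚ w) {L : ℕ}
    (hL : 0 < L) (μ : κ → Fin L) :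
    Finset.card {ν : κ → Fin L | Complex.exp (linForm w ν) = Complex.exp (linForm w μ)} ≤ L := by
  set fiber : Finset (κ → Fin L) := {ν | Complex.exp (linForm w ν) = Complex.exp (linForm w μ)}
  have hperiod : ∀ ν ∈ fiber, ∀ ν' ∈ fiber, ∃ a : ℤ,
      linForm w ν - linForm w ν' = a * (2 * Real.pi * Complex.I) := fun ν hν ν' hν' => by
    obtain ⟨a, ha⟩ := Complex.exp_eq_exp_iff_exists_int.1
      ((Finset.mem_filter.1 hν).2.trans (Finset.mem_filter.1 hν').2.symm)
    exact ⟨a, by rw [ha]; ring⟩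
  rcases (fiber : Set (κ → Fin L)).subsingleton_or_nontrivial with hsub | ⟨ν₁, hν₁, ν₂, hν₂, hne⟩
  · exact (Finset.card_le_one.2 hsub).trans hL
  obtain ⟨i, hi⟩ := Function.ne_iff.1 hne
  obtain ⟨a, ha⟩ := hperiod ν₁ hν₁ ν₂ hν₂
  have hinj : Set.InjOn (fun ν : κ → Fin L => ν i) fiber := fun ν hν ν' hν' hνi => by
    obtain ⟨b, hb⟩ := hperiod ν hν ν' hν'
    have hprop := mul_sub_eq_of_mul_linForm_sub_eq hw (a := b) (b := a)
      (μ₁ := ν₁) (μ₂ := ν₂) (ν₁ := ν) (ν₂ := ν') (by rw [ha, hb]; ring)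
    have hval : (ν i : ℤ) - ν' i = 0 := by rw [show ν i = ν' i from hνi, sub_self]
    have hb₀ : b = 0 := by
      refine (mul_eq_zero.1 ((hprop i).trans (by rw [hval, mul_zero]))).resolve_right fun h => hi ?_
      omega
    rw [hb₀] at hb
    exact linForm_injective hw (sub_eq_zero.1 (by simpa using hb))
  calc fiber.card ≤ (Finset.univ : Finset (Fin L)).card :=
        Finset.card_le_card_of_injOn _ (fun _ _ => Finset.mem_coe.2 (Finset.mem_univ _)) hinj
    _ = L := by simp

end LinearForm

/-- The algebraic data of Baker's method: logarithms `log k` of the numbers `num k / den`, and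
vectors `(dir₀ j, dir j)` indexed by `κ` itself, hence one fewer than the dimension of the space
of the vectors `(z₀, (zₖ)ₖ)`, whose complex span contains `(1, log)`, with coordinates `coord`. The
auxiliary function is differentiated only along the vectors `(dir₀ j, dir j)`. -/
structure Datum (K κ : Type*) [Field K] [NumberField K] [Fintype κ] where
  φ : K →+* ℂ
  log : κ → ℂ
  num : κ → 𝓞 K
  den : 𝓞 K
  den_ne_zero : den ≠ 0
  den_mul_exp_log : ∀ k, φ den * Complex.exp (log k) = φ (num k)
  coord : κ → ℂ
  dir₀ : κ → 𝓞 K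
  dir : κ → κ → 𝓞 K
  sum_coord_mul_dir₀ : ∑ j, coord j * φ (dir₀ j) = 1
  sum_coord_mul_dir : ∀ k, ∑ j, coord j * φ (dir j k) = log k

namespace Datum

variable {K κ : Type*} [Field K] [NumberField K] [Fintype κ] (D : Datum K κ) {L : ℕ}

/-- The embedding of the integers of `K`. -/
noncomputable abbrev emb : 𝓞 K →+* ℂ := D.φ.comp (algebraMap (𝓞 K) K)

/-- The symbol of the differential operator `∏ j, (dir₀ j ∂₀ + ∑ k, dir j k ∂ₖ) ^ m j` acting on
`p(z₀) exp (∑ k, μ k zₖ)`. -/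
noncomputable def diffSymbol (m : κ → ℕ) (μ : κ → Fin L) : (𝓞 K)[X] :=
  ∏ j, (C (D.dir₀ j) * X + C (linForm (D.dir j) μ)) ^ m j

/-- The polynomial factor of the term `μ` after applying the differential operator `m`. -/
noncomputable def diffCoeff (p : (κ → Fin L) → (𝓞 K)[X]) (m : κ → ℕ) (μ : κ → Fin L) : (𝓞 K)[X] :=
  aeval (derivative : Module.End (𝓞 K) (𝓞 K)[X]) (D.diffSymbol m μ) (p μ)

/-- The multiple of `exp (∑ k, μ k log k)` by `den ^ (#κ * L)`, an algebraic integer. -/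
def base (μ : κ → Fin L) : 𝓞 K := ∏ k, D.num k ^ (μ k : ℕ) * D.den ^ (L - μ k)

lemma exp_linForm_log (μ : κ → Fin L) :
    Complex.exp (linForm D.log μ) = ∏ k, Complex.exp (D.log k) ^ (μ k : ℕ) := by
  simp only [linForm, Complex.exp_sum, Complex.exp_nat_mul]

lemma emb_base (μ : κ → Fin L) :
    D.emb (D.base μ) = D.emb D.den ^ (Fintype.card κ * L) * Complex.exp (linForm D.log μ) := by
  have hterm : ∀ k, D.emb (D.num k ^ (μ k : ℕ) * D.den ^ (L - μ k))
      = D.emb D.den ^ L * Complex.exp (D.log k) ^ (μ k : ℕ) := fun k => by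
    have hnum : D.emb (D.num k) = D.emb D.den * Complex.exp (D.log k) := (D.den_mul_exp_log k).symm
    rw [map_mul, map_pow, map_pow, hnum, mul_pow, mul_right_comm, ← pow_add,
      Nat.add_sub_of_le (μ k).2.le]
  rw [base, map_prod, Finset.prod_congr rfl fun k _ => hterm k, Finset.prod_mul_distrib,
    Finset.prod_const, Finset.card_univ, exp_linForm_log, ← pow_mul, mul_comm L]

lemma emb_injective : Function.Injective D.emb :=
  D.φ.injective.comp RingOfIntegers.coe_injective

lemma emb_den_ne_zero : D.emb D.den ≠ 0 :=
  (map_ne_zero_iff D.emb D.emb_injective).2 D.den_ne_zero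

lemma linForm_log (μ : κ → Fin L) :
    linForm D.log μ = ∑ j, D.coord j * D.emb (linForm (D.dir j) μ) := by
  simp only [map_linForm]
  simp only [linForm, Finset.mul_sum]
  rw [Finset.sum_comm]
  refine Finset.sum_congr rfl fun k _ => ?_
  rw [← D.sum_coord_mul_dir k, Finset.mul_sum]
  exact Finset.sum_congr rfl fun j _ => mul_left_comm _ _ _

lemma diffCoeff_zero (p : (κ → Fin L) → (𝓞 K)[X]) (μ : κ → Fin L) : D.diffCoeff p 0 μ = p μ := by
  simp [diffCoeff, diffSymbol]

section Derivative

variable [DecidableEq κ]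

/-- The restriction to the line `z (1, log)` of the derivative, along the directions of `D` with
multiplicities `m`, of `∑ μ, p μ (z₀) exp (∑ k, μ k zₖ)`. -/
noncomputable def auxFun (p : (κ → Fin L) → (𝓞 K)[X]) (m : κ → ℕ) (z : ℂ) : ℂ :=
  ∑ μ, (D.diffCoeff p m μ).eval₂ D.emb z * Complex.exp (linForm D.log μ * z)

/-- The multiple of `auxFun p m l` by `den ^ (#κ * L * l)`, an algebraic integer, to which
Liouville's inequality applies. -/
noncomputable def value (p : (κ → Fin L) → (𝓞 K)[X]) (m : κ → ℕ) (l : ℕ) : 𝓞 K :=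
  ∑ μ, (D.diffCoeff p m μ).eval (l : 𝓞 K) * D.base μ ^ l

lemma emb_value (p : (κ → Fin L) → (𝓞 K)[X]) (m : κ → ℕ) (l : ℕ) :
    D.emb (D.value p m l) = D.emb D.den ^ (Fintype.card κ * L * l) * D.auxFun p m l := by
  rw [value, map_sum, auxFun, Finset.mul_sum]
  refine Finset.sum_congr rfl fun μ _ => ?_
  rw [map_mul, map_pow, emb_base, mul_pow, ← pow_mul, mul_comm (linForm D.log μ),
    Complex.exp_nat_mul, ← eval₂_at_apply, map_natCast]
  ring

lemma value_eq_zero_iff {p : (κ → Fin L) → (𝓞 K)[X]} {m : κ → ℕ} {l : ℕ} :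
    D.value p m l = 0 ↔ D.auxFun p m l = 0 := by
  rw [← map_eq_zero_iff D.emb D.emb_injective, emb_value,
    mul_eq_zero_iff_left (pow_ne_zero _ D.emb_den_ne_zero)]

lemma diffCoeff_add_single (p : (κ → Fin L) → (𝓞 K)[X]) (m : κ → ℕ) (j : κ)
    (μ : κ → Fin L) :
    D.diffCoeff p (m + Pi.single j 1) μ = C (D.dir₀ j) * derivative (D.diffCoeff p m μ)
      + C (linForm (D.dir j) μ) * D.diffCoeff p m μ := by
  have hsymbol : D.diffSymbol (m + Pi.single j 1) μ
      = (C (D.dir₀ j) * X + C (linForm (D.dir j) μ)) * D.diffSymbol m μ := by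
    simp only [diffSymbol, Pi.add_apply, pow_add, Finset.prod_mul_distrib,
      mul_comm _ (∏ j, _ ^ m j)]
    congr 1
    rw [Finset.prod_eq_single j (fun i _ hi => by simp [Pi.single_eq_of_ne hi]) (by simp)]
    simp
  rw [diffCoeff, hsymbol, map_mul, Module.End.mul_apply, ← diffCoeff]
  simp [Module.algebraMap_end_apply, smul_eq_C_mul]

lemma hasDerivAt_auxFun (p : (κ → Fin L) → (𝓞 K)[X]) (m : κ → ℕ) (z : ℂ) :
    HasDerivAt (D.auxFun p m) (∑ j, D.coord j * D.auxFun p (m + Pi.single j 1) z) z := by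
  unfold auxFun
  simp only [Finset.mul_sum, eval₂_eq_eval_map]
  rw [Finset.sum_comm]
  refine HasDerivAt.fun_sum fun μ _ =>
    (hasDerivAt_eval_mul_exp ((D.diffCoeff p m μ).map D.emb) (linForm D.log μ) z).congr_deriv ?_
  have hdir₀ : ∑ j, D.coord j * D.emb (D.dir₀ j) = 1 := D.sum_coord_mul_dir₀
  simp only [diffCoeff_add_single, Polynomial.map_add, Polynomial.map_mul, map_C, eval_add,
    eval_mul, eval_C, ← derivative_map, map_add, aeval_X, aeval_C, LinearMap.add_apply,
    Module.algebraMap_end_apply, eval_smul, smul_eq_mul]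
  simp only [← mul_assoc, ← Finset.sum_mul]
  simp only [mul_add, Finset.sum_add_distrib, ← mul_assoc, ← Finset.sum_mul, hdir₀, one_mul,
    ← linForm_log]

lemma le_analyticOrderAt_auxFun {p : (κ → Fin L) → (𝓞 K)[X]} {M l : ℕ}
    (h : ∀ m, ∑ j, m j < M → D.value p m l = 0) {k : ℕ} {m : κ → ℕ} (hm : ∑ j, m j + k ≤ M) :
    k ≤ analyticOrderAt (D.auxFun p m) l :=
  le_analyticOrderAt_of_hasDerivAt (D.hasDerivAt_auxFun p)
    (fun m hm => D.value_eq_zero_iff.1 (h m hm)) hm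

end Derivative

/-- A common bound for the houses of the algebraic numbers of `D` and the exponential of the size of
its logarithms. -/
noncomputable def height : ℝ :=
  1 + ∑ k, house (D.num k : K) + house (D.den : K)
    + ∑ j, (house (D.dir₀ j : K) + ∑ k, house (D.dir j k : K)) + Real.exp (∑ k, ‖D.log k‖)

/-- The size of a term `diffCoeff p m μ (l) * base μ ^ l` of `value p m l` relative to that of the
coefficients of `p`, where `B` is the height, `n = #κ`, `∑ j, m j ≤ M` and `l ≤ S`. The factors `5`
make it also bound the terms of `auxFun` on the disc of radius `5 * S` of the Schwarz lemma. -/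
noncomputable def sizeBound (n L M : ℕ) (B : ℝ) (S : ℕ) : ℝ :=
  L * (5 * S : ℝ) ^ L * (L * B) ^ M * B ^ ((n + 5) * (L * S))

lemma height_bounds : 1 ≤ D.height ∧ (∀ k, house (D.num k : K) ≤ D.height) ∧
    house (D.den : K) ≤ D.height ∧
    (∀ j, house (D.dir₀ j : K) + ∑ k, house (D.dir j k : K) ≤ D.height) ∧
    Real.exp (∑ k, ‖D.log k‖) ≤ D.height := by
  have hnum : ∀ k ∈ Finset.univ, 0 ≤ house (D.num k : K) := fun k _ => house_nonneg _
  have hden := house_nonneg (D.den : K)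
  have hdir : ∀ j ∈ Finset.univ, 0 ≤ house (D.dir₀ j : K) + ∑ k, house (D.dir j k : K) := fun j _ =>
    add_nonneg (house_nonneg _) (Finset.sum_nonneg fun k _ => house_nonneg _)
  have hexp := Real.exp_pos (∑ k, ‖D.log k‖)
  have hnumsum := Finset.sum_nonneg hnum
  have hdirsum := Finset.sum_nonneg hdir
  unfold height
  refine ⟨by linarith, fun k => ?_, by linarith, fun j => ?_, by linarith⟩
  · linarith [Finset.single_le_sum hnum (Finset.mem_univ k)]
  · linarith [Finset.single_le_sum hdir (Finset.mem_univ j)]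

lemma one_le_height : 1 ≤ D.height := D.height_bounds.1

lemma house_num_le_height (k : κ) : house (D.num k : K) ≤ D.height := D.height_bounds.2.1 k

lemma house_den_le_height : house (D.den : K) ≤ D.height := D.height_bounds.2.2.1

lemma house_dir_le_height (j : κ) :
    house (D.dir₀ j : K) + ∑ k, house (D.dir j k : K) ≤ D.height := D.height_bounds.2.2.2.1 j

lemma exp_sum_norm_log_le_height : Real.exp (∑ k, ‖D.log k‖) ≤ D.height := D.height_bounds.2.2.2.2

lemma house_base_le (μ : κ → Fin L) :
    house (D.base μ : K) ≤ D.height ^ (Fintype.card κ * L) := by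
  have hfactor : ∀ k, house ((D.num k : K) ^ (μ k : ℕ) * (D.den : K) ^ (L - μ k)) ≤ D.height ^ L :=
    fun k => by
      calc _ ≤ house (D.num k : K) ^ (μ k : ℕ) * house (D.den : K) ^ (L - μ k) :=
            (house_mul_le _ _).trans (mul_le_mul (house_pow_le _ _) (house_pow_le _ _)
              (house_nonneg _) (pow_nonneg (house_nonneg _) _))
        _ ≤ D.height ^ (μ k : ℕ) * D.height ^ (L - μ k) := by
            have hB := zero_le_one.trans D.one_le_height
            exact mul_le_mul (pow_le_pow_left₀ (house_nonneg _) (D.house_num_le_height k) _)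
              (pow_le_pow_left₀ (house_nonneg _) D.house_den_le_height _)
              (pow_nonneg (house_nonneg _) _) (pow_nonneg hB _)
        _ = D.height ^ L := by rw [← pow_add, Nat.add_sub_of_le (μ k).2.le]
  calc house (D.base μ : K)
      = house (∏ k, (D.num k : K) ^ (μ k : ℕ) * (D.den : K) ^ (L - μ k)) := by
        simp [base, RingOfIntegers.coe_eq_algebraMap]
    _ ≤ ∏ _k : κ, D.height ^ L := (house_prod_le_prod _ _).trans
        (Finset.prod_le_prod (fun k _ => house_nonneg _) fun k _ => hfactor k)
    _ = D.height ^ (Fintype.card κ * L) := by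
        rw [Finset.prod_const, Finset.card_univ, ← pow_mul, mul_comm]

lemma house_linForm_le (w : κ → 𝓞 K) (μ : κ → Fin L) :
    house ((linForm w μ : 𝓞 K) : K) ≤ L * ∑ k, house (w k : K) := by
  have hcoe : ((linForm w μ : 𝓞 K) : K) = ∑ k, ((μ k : ℕ) : K) * (w k : K) := by
    simp [linForm, RingOfIntegers.coe_eq_algebraMap]
  rw [hcoe, Finset.mul_sum]
  refine (house_sum_le_sum_house _ _).trans (Finset.sum_le_sum fun k _ => ?_)
  rw [house_nat_mul]
  have := house_nonneg (w k : K)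
  gcongr
  exact (μ k).2.le

lemma isOperatorBound_diffSymbol (m : κ → ℕ) (μ : κ → Fin L) :
    IsOperatorBound L (D.diffSymbol m μ) ((L * D.height) ^ ∑ j, m j) := by
  rw [← Finset.prod_pow_eq_pow_sum]
  refine IsOperatorBound.prod (A := fun j => (L * D.height) ^ m j) _ fun j _ =>
    (IsOperatorBound.linear (A := L * D.height) _ _ ?_).pow (m j)
  calc L * house (D.dir₀ j : K) + house ((linForm (D.dir j) μ : 𝓞 K) : K)
      ≤ L * (house (D.dir₀ j : K) + ∑ k, house (D.dir j k : K)) := by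
        rw [mul_add]
        gcongr
        exact house_linForm_le _ _
    _ ≤ L * D.height := by
        gcongr
        exact D.house_dir_le_height j

lemma degree_diffCoeff_lt {p : (κ → Fin L) → (𝓞 K)[X]} (hp : ∀ μ, (p μ).degree < L) (m : κ → ℕ)
    (μ : κ → Fin L) : (D.diffCoeff p m μ).degree < L :=
  degree_aeval_derivative_lt _ (hp μ)

lemma house_coeff_diffCoeff_le (hL : 1 ≤ L) {p : (κ → Fin L) → (𝓞 K)[X]}
    (hp : ∀ μ, (p μ).degree < L) {H : ℝ} (hH : ∀ μ i, house ((p μ).coeff i : K) ≤ H) {M : ℕ}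
    {m : κ → ℕ} (hm : ∑ j, m j ≤ M) (μ : κ → Fin L) (i : ℕ) :
    house ((D.diffCoeff p m μ).coeff i : K) ≤ (L * D.height) ^ M * H := by
  refine (D.isOperatorBound_diffSymbol m μ _ (hp μ) H (hH μ) i).trans ?_
  have hH0 : 0 ≤ H := (house_nonneg _).trans (hH μ 0)
  gcongr
  exact one_le_mul_of_one_le_of_one_le (by exact_mod_cast hL) D.one_le_height

lemma house_diffCoeff_eval_mul_base_pow_le (hL : 1 ≤ L) {p : (κ → Fin L) → (𝓞 K)[X]}
    (hp : ∀ μ, (p μ).degree < L) {H : ℝ} (hH : ∀ μ i, house ((p μ).coeff i : K) ≤ H) {M S l : ℕ}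
    {m : κ → ℕ} (hm : ∑ j, m j ≤ M) (hS : 1 ≤ S) (hl : l ≤ S) (μ : κ → Fin L) :
    house (((D.diffCoeff p m μ).eval (l : 𝓞 K) * D.base μ ^ l : 𝓞 K) : K)
      ≤ H * sizeBound (Fintype.card κ) L M D.height S := by
  have heval := house_eval_natCast_le (D.degree_diffCoeff_lt hp m μ)
    (D.house_coeff_diffCoeff_le hL hp hH hm μ) (l := l) (R := 5 * S) (by omega) (by omega)
  have hbase : house ((D.base μ : K) ^ l) ≤ D.height ^ ((Fintype.card κ + 5) * (L * S)) := by
    refine (house_pow_le _ _).trans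
      ((pow_le_pow_left₀ (house_nonneg _) (D.house_base_le μ) l).trans ?_)
    rw [← pow_mul, mul_assoc]
    refine pow_le_pow_right₀ D.one_le_height ?_
    gcongr
    omega
  rw [RingOfIntegers.coe_eq_algebraMap, map_mul, map_pow]
  refine (house_mul_le _ _).trans ((mul_le_mul heval hbase (house_nonneg _)
    ((house_nonneg _).trans heval)).trans_eq ?_)
  rw [sizeBound]
  push_cast
  ring

lemma house_value_le [DecidableEq κ] (hL : 1 ≤ L) {p : (κ → Fin L) → (𝓞 K)[X]}
    (hp : ∀ μ, (p μ).degree < L) {H : ℝ} (hH : ∀ μ i, house ((p μ).coeff i : K) ≤ H) {M S l : ℕ}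
    {m : κ → ℕ} (hm : ∑ j, m j ≤ M) (hS : 1 ≤ S) (hl : l ≤ S) :
    house (D.value p m l : K)
      ≤ L ^ Fintype.card κ * (H * sizeBound (Fintype.card κ) L M D.height S) := by
  rw [value, RingOfIntegers.coe_eq_algebraMap, map_sum]
  calc _ ≤ ∑ _μ : κ → Fin L, H * sizeBound (Fintype.card κ) L M D.height S :=
        (house_sum_le_sum_house _ _).trans (Finset.sum_le_sum fun μ _ =>
          D.house_diffCoeff_eval_mul_base_pow_le hL hp hH hm hS hl μ)
    _ = L ^ Fintype.card κ * (H * sizeBound (Fintype.card κ) L M D.height S) := by simp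

lemma norm_linForm_log_le (μ : κ → Fin L) : ‖linForm D.log μ‖ ≤ L * ∑ k, ‖D.log k‖ := by
  rw [linForm, Finset.mul_sum]
  refine norm_sum_le_of_le _ fun k _ => ?_
  rw [norm_mul, Complex.norm_natCast]
  gcongr
  exact (μ k).2.le

lemma norm_exp_linForm_log_mul_le (μ : κ → Fin L) {S : ℕ} {z : ℂ} (hz : ‖z‖ ≤ 5 * S) :
    ‖Complex.exp (linForm D.log μ * z)‖ ≤ D.height ^ (5 * (L * S)) := by
  calc ‖Complex.exp (linForm D.log μ * z)‖ ≤ Real.exp (‖linForm D.log μ‖ * ‖z‖) := by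
        rw [← norm_mul]
        exact Complex.norm_exp_le_exp_norm _
    _ ≤ Real.exp (L * (∑ k, ‖D.log k‖) * (5 * S)) := by
        gcongr
        exact D.norm_linForm_log_le μ
    _ = Real.exp (∑ k, ‖D.log k‖) ^ (5 * (L * S)) := by
        rw [← Real.exp_nat_mul]
        push_cast
        ring_nf
    _ ≤ D.height ^ (5 * (L * S)) := by
        gcongr
        exact D.exp_sum_norm_log_le_height

lemma norm_den_pow_mul_auxFun_le [DecidableEq κ] (hL : 1 ≤ L) {p : (κ → Fin L) → (𝓞 K)[X]}
    (hp : ∀ μ, (p μ).degree < L) {H : ℝ} (hH : ∀ μ i, house ((p μ).coeff i : K) ≤ H) {M S : ℕ}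
    {m : κ → ℕ} (hm : ∑ j, m j ≤ M) (hS : 1 ≤ S) {z : ℂ} (hz : ‖z‖ ≤ 5 * S) :
    D.height ^ (Fintype.card κ * (L * S)) * ‖D.auxFun p m z‖
      ≤ L ^ Fintype.card κ * (H * sizeBound (Fintype.card κ) L M D.height S) := by
  have hB : 0 ≤ D.height := zero_le_one.trans D.one_le_height
  have hS' : (1 : ℝ) ≤ 5 * S := by exact_mod_cast (by omega : 1 ≤ 5 * S)
  have hterm : ∀ μ, ‖(D.diffCoeff p m μ).eval₂ D.emb z * Complex.exp (linForm D.log μ * z)‖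
      ≤ L * (5 * S : ℝ) ^ L * ((L * D.height) ^ M * H) * D.height ^ (5 * (L * S)) := fun μ => by
    have heval := norm_eval₂_le (σ := D.emb) (D.degree_diffCoeff_lt hp m μ) (fun i =>
      (norm_embedding_le_house _ D.φ).trans (D.house_coeff_diffCoeff_le hL hp hH hm μ i)) hS' hz
    rw [norm_mul]
    exact mul_le_mul heval (D.norm_exp_linForm_log_mul_le μ hz) (norm_nonneg _)
      ((norm_nonneg _).trans heval)
  calc _ ≤ D.height ^ (Fintype.card κ * (L * S)) * ∑ _μ : κ → Fin L,
        L * (5 * S : ℝ) ^ L * ((L * D.height) ^ M * H) * D.height ^ (5 * (L * S)) := by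
        gcongr
        exact norm_sum_le_of_le _ fun μ _ => hterm μ
    _ = L ^ Fintype.card κ * (H * sizeBound (Fintype.card κ) L M D.height S) := by
        rw [Finset.sum_const, Finset.card_univ, Fintype.card_fun, Fintype.card_fin, nsmul_eq_mul,
          sizeBound, add_mul _ 5, pow_add]
        push_cast
        ring

lemma house_diffCoeff_X_pow_eval_mul_base_pow_le (hL : 1 ≤ L) (d : Fin L) {N S l : ℕ} {m : κ → ℕ}
    (hm : ∀ j, m j < N) (hl : l < S) (μ : κ → Fin L) :
    house (((D.diffCoeff (fun _ => X ^ (d : ℕ)) m μ).eval (l : 𝓞 K) * D.base μ ^ l : 𝓞 K) : K)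
      ≤ sizeBound (Fintype.card κ) L (Fintype.card κ * N) D.height S := by
  refine (D.house_diffCoeff_eval_mul_base_pow_le hL (p := fun _ => X ^ (d : ℕ)) (H := 1)
    (fun _ => ?_) (fun _ i => ?_) ?_ (by omega) hl.le μ).trans_eq (one_mul _)
  · rw [degree_X_pow]
    exact_mod_cast d.2
  · rw [coeff_X_pow]
    split_ifs <;> simp [house]
  · simpa using Finset.sum_le_card_nsmul Finset.univ m N fun j _ => (hm j).le

section Vanishing

variable [DecidableEq κ]

lemma norm_den_pow_mul_auxFun_le_div_two_pow (hL : 1 ≤ L) {p : (κ → Fin L) → (𝓞 K)[X]}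
    (hp : ∀ μ, (p μ).degree < L) {H : ℝ} (hH : ∀ μ i, house ((p μ).coeff i : K) ≤ H)
    {M M' T S S' : ℕ} (hSS' : S ≤ S')
    (hzero : ∀ m, ∑ j, m j < M' → ∀ l < S, D.value p m l = 0)
    {m : κ → ℕ} (hmM : ∑ j, m j ≤ M) (hm : ∑ j, m j + T ≤ M') {l : ℕ} (hl : l < S') :
    D.height ^ (Fintype.card κ * (L * S')) * ‖D.auxFun p m l‖
      ≤ L ^ Fintype.card κ * (H * sizeBound (Fintype.card κ) L M D.height S') / 2 ^ (T * S) := by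
  have hc : 0 < D.height ^ (Fintype.card κ * (L * S')) :=
    pow_pos (zero_lt_one.trans_le D.one_le_height) _
  have hschwarz := norm_le_div_two_pow_of_le_analyticOrderAt (f := D.auxFun p m)
    (s := (Finset.range S).map Nat.castEmbedding) (T := T) (r := S')
    (B := L ^ Fintype.card κ * (H * sizeBound (Fintype.card κ) L M D.height S')
      / D.height ^ (Fintype.card κ * (L * S'))) (x := l)
    (fun z => (D.hasDerivAt_auxFun p m z).differentiableAt) (by exact_mod_cast (by omega))
    (fun a ha => ?_) (fun a ha => ?_) (fun z hz => ?_) (by simpa using hl.le)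
  · rwa [Finset.card_map, Finset.card_range, div_right_comm, le_div_iff₀ hc, mul_comm] at hschwarz
  · obtain ⟨i, hi, rfl⟩ := Finset.mem_map.1 ha
    simpa using (Finset.mem_range.1 hi).le.trans hSS'
  · obtain ⟨i, hi, rfl⟩ := Finset.mem_map.1 ha
    exact D.le_analyticOrderAt_auxFun
      (fun m hm => hzero m hm i (Finset.mem_range.1 hi)) hm
  · rw [le_div_iff₀ hc, mul_comm]
    exact D.norm_den_pow_mul_auxFun_le hL hp hH hmM (by omega) hz

lemma value_eq_zero_of_pow_lt_two_pow (hL : 1 ≤ L) {p : (κ → Fin L) → (𝓞 K)[X]}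
    (hp : ∀ μ, (p μ).degree < L) {H : ℝ} (hH : ∀ μ i, house ((p μ).coeff i : K) ≤ H)
    {M M' T S S' : ℕ} (hSS' : S ≤ S')
    (hzero : ∀ m, ∑ j, m j < M' → ∀ l < S, D.value p m l = 0) (hM : M' ≤ M)
    (hsmall : (L ^ Fintype.card κ * (H * sizeBound (Fintype.card κ) L M D.height S'))
      ^ Module.finrank ℚ K < 2 ^ (T * S))
    {m : κ → ℕ} (hm : ∑ j, m j + T ≤ M') {l : ℕ} (hl : l < S') : D.value p m l = 0 := by
  set Q : ℝ := L ^ Fintype.card κ * (H * sizeBound (Fintype.card κ) L M D.height S')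
  have hmM : ∑ j, m j ≤ M := by omega
  by_contra hne
  have hhouse : house (D.value p m l : K) ≤ Q := D.house_value_le hL hp hH hmM (by omega) hl.le
  have hnorm : ‖D.φ (D.value p m l)‖ ≤ Q / 2 ^ (T * S) := by
    have hden : ‖D.emb D.den‖ ^ (Fintype.card κ * L * l)
        ≤ D.height ^ (Fintype.card κ * (L * S')) :=
      (pow_le_pow_left₀ (norm_nonneg _)
        ((norm_embedding_le_house _ D.φ).trans D.house_den_le_height) _).trans
        (pow_le_pow_right₀ D.one_le_height (by rw [mul_assoc]; gcongr))
    calc ‖D.emb (D.value p m l)‖ ≤ D.height ^ (Fintype.card κ * (L * S')) * ‖D.auxFun p m l‖ := by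
          rw [emb_value, norm_mul, norm_pow]
          gcongr
      _ ≤ Q / 2 ^ (T * S) :=
          D.norm_den_pow_mul_auxFun_le_div_two_pow hL hp hH hSS' hzero hmM hm hl
  have hliouville : 1 ≤ Q / 2 ^ (T * S) * Q ^ (Module.finrank ℚ K - 1) :=
    (one_le_norm_mul_house_pow D.φ hne).trans (mul_le_mul hnorm
      (pow_le_pow_left₀ (house_nonneg _) hhouse _) (pow_nonneg (house_nonneg _) _)
      ((norm_nonneg _).trans hnorm))
  rw [div_mul_eq_mul_div, mul_pow_sub_one Module.finrank_pos.ne', one_le_div (by positivity)]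
    at hliouville
  exact hliouville.not_gt hsmall

lemma one_le_sizeBound {n L M S : ℕ} {B : ℝ} (hL : 1 ≤ L) (hB : 1 ≤ B) (hS : 1 ≤ S) :
    1 ≤ sizeBound n L M B S := by
  have hL' : (1 : ℝ) ≤ L := by exact_mod_cast hL
  have hS' : (1 : ℝ) ≤ 5 * S := by exact_mod_cast (by omega : 1 ≤ 5 * S)
  exact one_le_mul_of_one_le_of_one_le (one_le_mul_of_one_le_of_one_le
    (one_le_mul_of_one_le_of_one_le hL' (one_le_pow₀ hS'))
    (one_le_pow₀ (one_le_mul_of_one_le_of_one_le hL' hB))) (one_le_pow₀ hB)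

lemma value_sum_C_mul_X_pow (ξ : Fin L × (κ → Fin L) → 𝓞 K) (m : κ → ℕ) (l : ℕ) :
    D.value (fun μ => ∑ d, C (ξ (d, μ)) * X ^ (d : ℕ)) m l
      = ∑ dμ : Fin L × (κ → Fin L),
        (D.diffCoeff (fun _ => X ^ (dμ.1 : ℕ)) m dμ.2).eval (l : 𝓞 K) * D.base dμ.2 ^ l * ξ dμ := by
  rw [Fintype.sum_prod_type_right]
  refine Finset.sum_congr rfl fun μ _ => ?_
  simp only [diffCoeff, ← smul_eq_C_mul, map_sum, map_smul, eval_finsetSum, eval_smul, smul_eq_mul,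
    Finset.sum_mul]
  exact Finset.sum_congr rfl fun d _ => by ring

lemma exists_ne_zero_value_eq_zero : ∃ C : ℝ, 1 ≤ C ∧ ∀ L N S : ℕ, 0 < N ^ Fintype.card κ * S →
    2 * (N ^ Fintype.card κ * S) ≤ L ^ (Fintype.card κ + 1) →
    ∃ p : (κ → Fin L) → (𝓞 K)[X], p ≠ 0 ∧ (∀ μ, (p μ).degree < L) ∧
      (∀ μ i, house ((p μ).coeff i : K) ≤ C * L ^ (Fintype.card κ + 1)
        * sizeBound (Fintype.card κ) L (Fintype.card κ * N) D.height S) ∧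
      ∀ m, (∀ j, m j < N) → ∀ l < S, D.value p m l = 0 := by
  obtain ⟨c, hc, hsiegel⟩ := exists_ne_zero_mulVec_eq_zero_house_le K
  refine ⟨c, hc, fun L N S hpos hcard => ?_⟩
  have hL : 1 ≤ L := Nat.pos_of_ne_zero fun h => by
    rw [h, zero_pow (Nat.succ_ne_zero _)] at hcard
    omega
  have hS : 1 ≤ S := Nat.pos_of_mul_pos_left hpos
  have hbound : 1 ≤ sizeBound (Fintype.card κ) L (Fintype.card κ * N) D.height S :=
    one_le_sizeBound hL D.one_le_height hS
  let a : Matrix ((κ → Fin N) × Fin S) (Fin L × (κ → Fin L)) (𝓞 K) := fun ml dμ =>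
    (D.diffCoeff (fun _ => X ^ (dμ.1 : ℕ)) (fun j => ml.1 j) dμ.2).eval ((ml.2 : ℕ) : 𝓞 K)
      * D.base dμ.2 ^ (ml.2 : ℕ)
  have ha : ∀ ml dμ, house (a ml dμ : K)
      ≤ sizeBound (Fintype.card κ) L (Fintype.card κ * N) D.height S := fun ml dμ =>
    D.house_diffCoeff_X_pow_eval_mul_base_pow_le hL dμ.1 (fun j => (ml.1 j).2) ml.2.2 dμ.2
  obtain ⟨ξ, hξ, haξ, hξbound⟩ := hsiegel _ _ a _ hbound ha (by simpa using hpos)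
    (by simpa [pow_succ'] using hcard)
  have hcoeff : ∀ μ (d : Fin L), (∑ d, C (ξ (d, μ)) * X ^ (d : ℕ)).coeff (d : ℕ) = ξ (d, μ) :=
    fun μ d => by simp [Polynomial.finsetSum_coeff, coeff_X_pow, Fin.val_inj]
  refine ⟨fun μ => ∑ d : Fin L, C (ξ (d, μ)) * X ^ (d : ℕ), fun h => hξ ?_,
    fun μ => degree_sum_fin_lt _, fun μ i => ?_, fun m hm l hl => ?_⟩
  · funext ⟨d, μ⟩
    rw [← hcoeff μ d, congrFun h μ]
    simp
  · rcases lt_or_ge i L with hi | hi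
    · rw [hcoeff μ ⟨i, hi⟩]
      simpa [pow_succ'] using hξbound (⟨i, hi⟩, μ)
    · rw [coeff_eq_zero_of_degree_lt ((degree_sum_fin_lt _).trans_le (by exact_mod_cast hi))]
      simpa [house] using by positivity
  · rw [value_sum_C_mul_X_pow]
    exact congrFun haξ (fun j => ⟨m j, hm j⟩, ⟨l, hl⟩)

end Vanishing

section Parameters

lemma sizeBound_nonneg {n L M S : ℕ} {B : ℝ} (hB : 0 ≤ B) : 0 ≤ sizeBound n L M B S := by
  unfold sizeBound
  positivity

lemma sizeBound_le_pow {n M S N a w q X : ℕ} {B : ℝ} (hN : 1 ≤ N) (hB : 0 ≤ B) (hBN : B ≤ N)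
    (hS : 5 * S ≤ N ^ w) (hM : M ≤ q * X) (hL : N ^ a ≤ X) (hLS : N ^ a * S ≤ X) :
    sizeBound n (N ^ a) M B S ≤ N ^ ((a + w + (a + 1) * q + (n + 5)) * X) := by
  have hN' : (1 : ℝ) ≤ N := by exact_mod_cast hN
  have hX : 1 ≤ X := (Nat.one_le_pow _ _ hN).trans hL
  have hlead : (N ^ a : ℝ) ≤ N ^ (a * X) := pow_le_pow_right₀ hN' (Nat.le_mul_of_pos_right _ hX)
  have heval : (5 * S : ℝ) ^ N ^ a ≤ N ^ (w * X) := by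
    rw [pow_mul]
    calc (5 * S : ℝ) ^ N ^ a ≤ (N ^ w) ^ N ^ a := by gcongr; exact_mod_cast hS
      _ ≤ (N ^ w) ^ X := pow_le_pow_right₀ (one_le_pow₀ hN') hL
  have hderiv : (N ^ a * B) ^ M ≤ N ^ ((a + 1) * q * X) := by
    rw [mul_assoc, pow_mul, pow_succ]
    calc (N ^ a * B) ^ M ≤ (N ^ a * N : ℝ) ^ M := by gcongr
      _ ≤ (N ^ a * N : ℝ) ^ (q * X) :=
        pow_le_pow_right₀ (one_le_mul_of_one_le_of_one_le (one_le_pow₀ hN') hN') hM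
  have hexp : B ^ ((n + 5) * (N ^ a * S)) ≤ N ^ ((n + 5) * X) := by
    calc B ^ ((n + 5) * (N ^ a * S)) ≤ (N : ℝ) ^ ((n + 5) * (N ^ a * S)) := by gcongr
      _ ≤ N ^ ((n + 5) * X) := pow_le_pow_right₀ hN' (by gcongr)
  calc sizeBound n (N ^ a) M B S
      ≤ N ^ (a * X) * N ^ (w * X) * N ^ ((a + 1) * q * X) * N ^ ((n + 5) * X) := by
        rw [sizeBound]
        push_cast
        gcongr
    _ = N ^ ((a + w + (a + 1) * q + (n + 5)) * X) := by ring

lemma exists_forall_le_and_pow_lt_two_pow (b : ℝ) (e : ℕ) : ∃ N : ℕ, b ≤ N ∧ N ^ e < 2 ^ N := by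
  have hlittle := isLittleO_pow_const_const_pow_of_one_lt (R := ℝ) e one_lt_two
  obtain ⟨N, hle, hbN⟩ := ((hlittle.bound (by norm_num : (0 : ℝ) < 1 / 2)).and
    (tendsto_natCast_atTop_atTop.eventually_ge_atTop b)).exists
  refine ⟨N, hbN, ?_⟩
  have hpow : (N : ℝ) ^ e < 2 ^ N := by
    rw [Real.norm_of_nonneg (by positivity), Real.norm_of_nonneg (by positivity)] at hle
    linarith [pow_pos (zero_lt_two (α := ℝ)) N]
  exact_mod_cast hpow

lemma pow_lt_two_pow_of_le {N e δ X : ℕ} (hN : N ^ (e * δ) < 2 ^ N) (hX : 0 < X) {Q : ℝ}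
    (hQ₀ : 0 ≤ Q) (hQ : Q ≤ N ^ (e * X)) : Q ^ δ < 2 ^ (N * X) := by
  calc Q ^ δ ≤ ((N : ℝ) ^ (e * X)) ^ δ := by gcongr
    _ = ((N : ℝ) ^ (e * δ)) ^ X := by rw [← pow_mul, ← pow_mul]; ring_nf
    _ < (2 ^ N) ^ X := by
      gcongr
      exact_mod_cast hN
    _ = 2 ^ (N * X) := by rw [← pow_mul]

lemma exists_mul_sizeBound_mul_sizeBound_le (n a k : ℕ) : ∃ E : ℕ, ∀ (N J : ℕ) (B C : ℝ),
    5 ≤ N → 0 ≤ B → 0 ≤ C → B ≤ N → C ≤ N → J < k →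
    (N ^ a) ^ n * (C * (N ^ a) ^ (n + 1)
      * sizeBound n (N ^ a) (n * ((k + 1) * N ^ (a + 2))) B (N ^ 1)
      * sizeBound n (N ^ a) (n * ((k + 1) * N ^ (a + 2))) B (N ^ (J + 2)))
      ≤ N ^ (E * N ^ (a + 2 + J)) := by
  set e := a + (k + 2) + (a + 1) * (n * (k + 1)) + (n + 5)
  refine ⟨a * n + (1 + a * (n + 1) + e + e), fun N J B C hN hB hC hBN hCN hJ => ?_⟩
  set X := N ^ (a + 2 + J)
  have hN1 : 1 ≤ N := by omega
  have hsize : ∀ i ≤ J + 2, sizeBound n (N ^ a) (n * ((k + 1) * N ^ (a + 2))) B (N ^ i)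
      ≤ N ^ (e * X) := fun i hi => by
    refine sizeBound_le_pow hN1 hB hBN ?_ ?_ (Nat.pow_le_pow_right hN1 (by omega)) ?_
    · calc 5 * N ^ i ≤ N * N ^ i := by gcongr
        _ = N ^ (i + 1) := by ring
        _ ≤ N ^ (k + 2) := Nat.pow_le_pow_right hN1 (by omega)
    · rw [← mul_assoc n]
      gcongr
      exact Nat.pow_le_pow_right hN1 (by omega)
    · rw [← pow_add]
      exact Nat.pow_le_pow_right hN1 (by omega)
  have hself : ∀ j, (N : ℝ) ^ j ≤ N ^ (j * X) := fun j =>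
    pow_le_pow_right₀ (by exact_mod_cast hN1)
      (Nat.le_mul_of_pos_right _ (Nat.one_le_pow _ _ hN1))
  have hpow : ∀ i, ((N : ℝ) ^ a) ^ i ≤ N ^ (a * i * X) := fun i => by
    rw [← pow_mul]
    exact hself _
  have hC' : C ≤ N ^ (1 * X) := hCN.trans (by simpa only [pow_one] using hself 1)
  calc _ ≤ (N : ℝ) ^ (a * n * X) * (N ^ (1 * X) * N ^ (a * (n + 1) * X) * N ^ (e * X)
        * N ^ (e * X)) := by
        have hnonneg₁ := sizeBound_nonneg (n := n) (L := N ^ a) (M := n * ((k + 1) * N ^ (a + 2)))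
          (S := N ^ 1) hB
        have hnonneg₂ := sizeBound_nonneg (n := n) (L := N ^ a) (M := n * ((k + 1) * N ^ (a + 2)))
          (S := N ^ (J + 2)) hB
        have hsize₁ := hsize 1 (by omega)
        have hsize₂ := hsize (J + 2) le_rfl
        have hpow₁ := hpow n
        have hpow₂ := hpow (n + 1)
        gcongr
    _ = N ^ ((a * n + (1 + a * (n + 1) + e + e)) * X) := by ring

/- With `L = N ^ (2n + 2)`, `T = N ^ (2n + 4)` and `S J = N ^ (J + 1)`, Siegel's lemma meets
`N ^ (2n² + 4n + 1)` equations, up to a constant, in `N ^ (2n² + 4n + 2)` unknowns, while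
`T * S J` exceeds `T`, `L` and `L * S (J + 1)` by a factor at least `N`. -/
lemma exists_parameters (n δ : ℕ) {B C : ℝ} (hB : 0 ≤ B) (hC : 0 ≤ C) :
    ∃ (k L T : ℕ) (S : ℕ → ℕ), L ≤ T ∧ 0 < ((k + 1) * T) ^ n * S 0 ∧
      2 * (((k + 1) * T) ^ n * S 0) ≤ L ^ (n + 1) ∧ Monotone S ∧ L ^ (n + 1) ≤ S k ∧
      ∀ J < k, (L ^ n * (C * L ^ (n + 1) * sizeBound n L (n * ((k + 1) * T)) B (S 0)
        * sizeBound n L (n * ((k + 1) * T)) B (S (J + 1)))) ^ δ < 2 ^ (T * S J) := by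
  set a := 2 * n + 2 with ha
  set k := a * (n + 1)
  obtain ⟨E, hE⟩ := exists_mul_sizeBound_mul_sizeBound_le n a k
  obtain ⟨N, hbN, hN⟩ := exists_forall_le_and_pow_lt_two_pow (5 + B + C + 2 * (k + 1) ^ n) (E * δ)
  have hk₀ : (0 : ℝ) ≤ (k + 1) ^ n := by positivity
  have hN5 : 5 ≤ N := by exact_mod_cast (by linarith : (5 : ℝ) ≤ N)
  have hN1 : 1 ≤ N := by omega
  have hNk : 2 * (k + 1) ^ n ≤ N := by exact_mod_cast (by linarith : 2 * ((k : ℝ) + 1) ^ n ≤ N)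
  have hmono : Monotone fun J => N ^ (J + 1) := fun i j hij =>
    Nat.pow_le_pow_right hN1 (by omega)
  refine ⟨k, N ^ a, N ^ (a + 2), fun J => N ^ (J + 1), Nat.pow_le_pow_right hN1 (by omega),
    by positivity, ?_, hmono, ?_, fun J hJ => ?_⟩
  · calc 2 * (((k + 1) * N ^ (a + 2)) ^ n * N ^ (0 + 1))
        = 2 * (k + 1) ^ n * N ^ ((a + 2) * n + 1) := by rw [mul_pow, ← pow_mul]; ring
      _ ≤ N * N ^ ((a + 2) * n + 1) := by gcongr
      _ = (N ^ a) ^ (n + 1) := by rw [ha]; ring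
  · rw [← pow_mul]
    exact Nat.pow_le_pow_right hN1 (by omega)
  · have hexp : N ^ (a + 2) * N ^ (J + 1) = N * N ^ (a + 2 + J) := by ring
    have hsize := hE N J B C hN5 hB hC (by linarith) (by linarith) hJ
    rw [hexp]
    refine pow_lt_two_pow_of_le hN (by positivity) ?_ (by exact_mod_cast hsize)
    exact mul_nonneg (by positivity)
      (mul_nonneg (mul_nonneg (by positivity) (sizeBound_nonneg hB)) (sizeBound_nonneg hB))

end Parameters

section Extrapolation

lemma nonempty_index (D : Datum K κ) : Nonempty κ := by
  by_contra hκ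
  rw [not_nonempty_iff] at hκ
  simpa using D.sum_coord_mul_dir₀

variable [DecidableEq κ]

lemma exists_ne_zero_forall_value_eq_zero : ∃ (L : ℕ) (p : (κ → Fin L) → (𝓞 K)[X]), p ≠ 0 ∧
    (∀ μ, (p μ).degree < L) ∧
    ∀ m, ∑ j, m j < L → ∀ l < L ^ (Fintype.card κ + 1), D.value p m l = 0 := by
  obtain ⟨C, hC, hsiegel⟩ := D.exists_ne_zero_value_eq_zero
  obtain ⟨k, L, T, S, hLT, hpos, hcard, hS, hSk, hsmall⟩ := exists_parameters (Fintype.card κ)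
    (Module.finrank ℚ K) (zero_le_one.trans D.one_le_height) (zero_le_one.trans hC)
  obtain ⟨p, hp₀, hp, hH, hzero⟩ := hsiegel L ((k + 1) * T) (S 0) hpos hcard
  have hL : 1 ≤ L := Nat.pos_of_ne_zero fun h => by
    rw [h, zero_pow (Nat.succ_ne_zero _)] at hcard
    omega
  have hextrapolate : ∀ J ≤ k, ∀ m, ∑ j, m j < (k - J + 1) * T → ∀ l < S J, D.value p m l = 0 := by
    intro J
    induction J with
    | zero => exact fun _ m hm => hzero m fun j =>
        (Finset.single_le_sum (fun _ _ => zero_le) (Finset.mem_univ j)).trans_lt hm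
    | succ J ih =>
      intro hJ m hm l hl
      have hM : (k - J + 1) * T ≤ Fintype.card κ * ((k + 1) * T) :=
        (Nat.mul_le_mul_right T (by omega)).trans
          (Nat.le_mul_of_pos_left _ (Fintype.card_pos_iff.2 D.nonempty_index))
      refine D.value_eq_zero_of_pow_lt_two_pow hL hp hH (hS (Nat.le_succ J)) (ih (by omega)) hM
        (hsmall J (by omega)) ?_ hl
      rw [add_one_mul, show k - J = k - (J + 1) + 1 by omega]
      omega
  refine ⟨L, p, hp₀, hp, fun m hm l hl => hextrapolate k le_rfl m ?_ l (hl.trans_le hSk)⟩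
  simpa using hm.trans_le hLT

lemma iteratedDeriv_auxFun_zero (p : (κ → Fin L) → (𝓞 K)[X]) (k : ℕ) (z : ℂ) :
    iteratedDeriv k (D.auxFun p 0) z = ∑ μ, (aeval (derivative : Module.End ℂ ℂ[X])
      ((X + C (linForm D.log μ)) ^ k) ((p μ).map D.emb)).eval z
        * Complex.exp (linForm D.log μ * z) := by
  have haux : D.auxFun p 0 = fun z => ∑ μ, ((p μ).map D.emb).eval z
      * Complex.exp (linForm D.log μ * z) := by
    funext z
    simp only [auxFun, diffCoeff_zero, eval₂_eq_eval_map]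
  rw [haux, iteratedDeriv_fun_sum fun μ _ => Differentiable.contDiff
    (fun z => (hasDerivAt_eval_mul_exp _ _ z).differentiableAt) |>.contDiffAt]
  exact Finset.sum_congr rfl fun μ _ => congrFun (iteratedDeriv_eval_mul_exp _ _ k) z

end Extrapolation

theorem not_linearIndependent_log : ¬ LinearIndependent ℚ D.log := by
  classical
  intro hlog
  obtain ⟨L, p, hp₀, hp, hzero⟩ := D.exists_ne_zero_forall_value_eq_zero
  refine hp₀ (funext fun μ => map_injective D.emb D.emb_injective ?_)
  rw [Pi.zero_apply, Polynomial.map_zero]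
  have hL : 0 < L := Fin.pos (μ (Classical.choice D.nonempty_index))
  refine eq_zero_of_sum_derivative_add_pow_eval_mul_pow_eq_zero (R := L) (D := L)
    (y := fun μ : κ → Fin L => Complex.exp (linForm D.log μ)) (ω := linForm D.log)
    (P := fun μ => (p μ).map D.emb) (fun μ => Complex.exp_ne_zero _)
    (fun μ ν h _ => linForm_injective hlog h) (fun μ => card_exp_linForm_eq_le hlog hL μ)
    (fun μ => degree_map_le.trans_lt (hp μ)) (fun k hk l hl => ?_) μ
  have horder : (k + 1 : ℕ) ≤ analyticOrderAt (D.auxFun p 0) l :=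
    D.le_analyticOrderAt_auxFun (M := L)
      (fun m hm => hzero m hm l (by simpa [pow_succ] using hl)) (by simpa using hk)
  have hentire : Differentiable ℂ (D.auxFun p 0) := fun z =>
    (D.hasDerivAt_auxFun p 0 z).differentiableAt
  have hderiv := (natCast_le_analyticOrderAt_iff_iteratedDeriv_eq_zero (hentire.analyticAt _)).1
    horder k k.lt_succ_self
  rw [iteratedDeriv_auxFun_zero] at hderiv
  simpa only [← Complex.exp_nat_mul, mul_comm] using hderiv

section Relation

variable [DecidableEq κ]

/-- The datum of a linear relation `b₀ + ∑ k, b k * log k = 0` with `b p ≠ 0`: it spans the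
hyperplane `b₀ z₀ + ∑ k, b k zₖ = 0` by integral multiples of the vectors that project to the
coordinate vectors other than the `p`-th one. -/
noncomputable def ofRelation (φ : K →+* ℂ) {log : κ → ℂ} {num : κ → 𝓞 K} {den : 𝓞 K}
    (den_ne_zero : den ≠ 0) (den_mul_exp_log : ∀ k, φ den * Complex.exp (log k) = φ (num k))
    {b₀ : 𝓞 K} {b : κ → 𝓞 K} (relation : φ b₀ + ∑ k, φ (b k) * log k = 0) {p : κ}
    (hp : b p ≠ 0) : Datum K κ where
  φ := φ
  log := log
  num := num
  den := den
  den_ne_zero := den_ne_zero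
  den_mul_exp_log := den_mul_exp_log
  coord j := Function.update log p 1 j / φ (b p)
  dir₀ := Pi.single p (b p)
  dir := Function.update (fun j => Pi.single j (b p) - Pi.single p (b j)) p (Pi.single p (-b₀))
  sum_coord_mul_dir₀ := by
    have hp' : φ (b p) ≠ 0 := by simpa using hp
    rw [Finset.sum_eq_single p (fun j _ hj => by simp [hj]) (by simp)]
    simp [hp']
  sum_coord_mul_dir k := by
    have hp' : φ (b p) ≠ 0 := by simpa using hp
    rw [← Finset.add_sum_erase _ _ (Finset.mem_univ p)]
    have hrest : ∀ j ∈ Finset.univ.erase p, Function.update log p 1 j / φ (b p)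
        * φ (Function.update (fun j => (Pi.single j (b p) - Pi.single p (b j) : κ → 𝓞 K)) p
          (Pi.single p (-b₀)) j k) = (if k = j then log j else 0)
            - if k = p then φ (b j) * log j / φ (b p) else 0 := fun j hj => by
      have hjp := Finset.ne_of_mem_erase hj
      simp only [Function.update_of_ne hjp, Pi.sub_apply, Pi.single_apply]
      split_ifs <;> simp [field]
    rw [Finset.sum_congr rfl hrest, Finset.sum_sub_distrib]
    rcases eq_or_ne k p with rfl | hk
    · simp only [Function.update_self, one_div, Pi.single_eq_same, map_neg, mul_neg,
        Finset.sum_ite_eq, Finset.mem_erase, ne_eq, not_true_eq_false, Finset.mem_univ, and_true,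
        ↓reduceIte, ← Finset.sum_div, Finset.sum_erase_eq_sub, zero_sub]
      field_simp
      linear_combination -relation
    · simp [hk]

end Relation

end Datum

section Logarithm

variable {κ : Type*} [Fintype κ] {ℓ : κ → ℂ}

/-- Baker's theorem on linear forms in logarithms, in its qualitative inhomogeneous form. -/
theorem eq_zero_of_add_sum_mul_log_eq_zero (hℓ : LinearIndependent ℚ ℓ)
    (hexp : ∀ k, IsAlgebraic ℚ (Complex.exp (ℓ k))) {β₀ : ℂ} {β : κ → ℂ}
    (hβ₀ : IsAlgebraic ℚ β₀) (hβ : ∀ k, IsAlgebraic ℚ (β k)) (h : β₀ + ∑ k, β k * ℓ k = 0)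
    (k : κ) : β k = 0 := by
  classical
  by_contra hk
  obtain ⟨K, _, den, num, hden, hnum⟩ := exists_common_denominator
    (x := fun i : κ ⊕ Option κ => i.elim (fun k => Complex.exp (ℓ k)) (fun o => o.elim β₀ β))
    (by rintro (k | _ | k) <;> simp [*])
  have hrelation : algebraMap K ℂ (num (.inr none))
      + ∑ k, algebraMap K ℂ (num (.inr (some k))) * ℓ k = 0 := by
    simp only [hnum, Sum.elim_inr, Option.elim, mul_assoc, ← Finset.mul_sum, ← mul_add, h, mul_zero]
  have hpivot : num (.inr (some k)) ≠ 0 := fun h₀ => by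
    simpa [h₀, hden, hk] using hnum (.inr (some k))
  exact (Datum.ofRelation (algebraMap K ℂ) hden (fun k => (hnum (.inl k)).symm) hrelation
    hpivot).not_linearIndependent_log hℓ

theorem transcendental_mul_log_add_sum_mul_log {ℓ₀ : ℂ} (hℓ₀ : ℓ₀ ∉ Submodule.span ℚ (Set.range ℓ))
    (hexp₀ : IsAlgebraic ℚ (Complex.exp ℓ₀)) (hexp : ∀ k, IsAlgebraic ℚ (Complex.exp (ℓ k)))
    {c₀ : ℂ} {c : κ → ℂ} (hc₀alg : IsAlgebraic ℚ c₀) (hc : ∀ k, IsAlgebraic ℚ (c k))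
    (hc₀ : c₀ ≠ 0) : Transcendental ℚ (c₀ * ℓ₀ + ∑ k, c k * ℓ k) := by
  intro halg
  obtain ⟨ι, f, hf, hspan, hli⟩ := exists_linearIndependent' ℚ ℓ
  have : Fintype ι := @Fintype.ofFinite _ (Finite.of_injective f hf)
  have hcomb : ∀ k, ∃ q : ι → ℚ, ∑ i, q i • (ℓ ∘ f) i = ℓ k := fun k =>
    (Submodule.mem_span_range_iff_exists_fun ℚ).1
      (hspan ▸ Submodule.subset_span (Set.mem_range_self k))
  choose q hq using hcomb
  refine hc₀ (eq_zero_of_add_sum_mul_log_eq_zero (hli.option (hspan.symm ▸ hℓ₀))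
    (β₀ := -(c₀ * ℓ₀ + ∑ k, c k * ℓ k)) (β := fun o => o.elim c₀ fun i => ∑ k, c k * q k i)
    ?_ halg.neg ?_ ?_ none)
  · rintro (_ | i)
    exacts [hexp₀, hexp (f i)]
  · rintro (_ | i)
    · exact hc₀alg
    · exact (IsIntegral.sum _ fun k _ =>
        ((hc k).mul (isAlgebraic_algebraMap (q k i))).isIntegral).isAlgebraic
  · have hsum : ∑ k, c k * ℓ k = ∑ i, (∑ k, c k * q k i) * ℓ (f i) := by
      simp only [Finset.sum_mul]
      rw [Finset.sum_comm]
      refine Finset.sum_congr rfl fun k _ => ?_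
      rw [← hq k, Finset.mul_sum]
      simp only [Rat.smul_def, Function.comp_apply, mul_assoc]
    simp [Fintype.sum_option, hsum]

end Logarithm

lemma im_eq_zero_of_mem_span_range_ofReal {ι : Type*} {x : ι → ℝ} {z : ℂ}
    (hz : z ∈ Submodule.span ℚ (Set.range fun i => (x i : ℂ))) : z.im = 0 := by
  have hle : Submodule.span ℚ (Set.range fun i => (x i : ℂ))
      ≤ LinearMap.ker (Complex.imLm.restrictScalars ℚ) :=
    Submodule.span_le.2 (by rintro _ ⟨i, rfl⟩; simp)
  simpa using hle hz

end Baker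

/-- Consequence of Baker's theorem: for positive real algebraic numbers `α₁, …, α_n` and
algebraic numbers `c₀, c₁, …, c_n` with `c₀ ≠ 0`, the number `c₀π + Σ c_j log α_j` is
transcendental. -/
theorem transcendental_pi_add_log_combination {n : ℕ} (α : Fin n → ℝ)
    (hαpos : ∀ j, 0 < α j) (hαalg : ∀ j, IsAlgebraic ℚ (α j))
    (c₀ : ℂ) (c : Fin n → ℂ) (hc₀alg : IsAlgebraic ℚ c₀)
    (hcalg : ∀ j, IsAlgebraic ℚ (c j)) (hc₀ : c₀ ≠ 0) :
    Transcendental ℚ (c₀ * (Real.pi : ℂ) + ∑ j, c j * (Real.log (α j) : ℂ)) := by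
  have hπI : Real.pi * Complex.I ∉ Submodule.span ℚ (Set.range fun j => (Real.log (α j) : ℂ)) :=
    fun h => Real.pi_ne_zero (by simpa using Baker.im_eq_zero_of_mem_span_range_ofReal h)
  have hexpπI : IsAlgebraic ℚ (Complex.exp (Real.pi * Complex.I)) := by
    rw [Complex.exp_pi_mul_I]
    exact isAlgebraic_one.neg
  have hexplog : ∀ j, IsAlgebraic ℚ (Complex.exp (Real.log (α j))) := fun j => by
    rw [← Complex.ofReal_exp, Real.exp_log (hαpos j)]
    exact (hαalg j).algebraMap
  have hI : IsAlgebraic ℚ Complex.I := .of_pow two_pos (by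
    rw [Complex.I_sq]
    exact isAlgebraic_one.neg)
  have hc₀π : c₀ * Real.pi = -(c₀ * Complex.I) * (Real.pi * Complex.I) := by
    linear_combination c₀ * Real.pi * Complex.I_mul_I
  rw [hc₀π]
  exact Baker.transcendental_mul_log_add_sum_mul_log hπI hexpπI hexplog (hc₀alg.mul hI).neg hcalg
    (neg_ne_zero.2 (mul_ne_zero hc₀ Complex.I_ne_zero))
end
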